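/- Fix d > 0 and for every integer k ≥ 1 let Ω_k = {(x₁, x') ∈ ℝ × ℝ^{N−1} : k·|x'| < d/2 − |x₁|} be the double circular cone of height d and equatorial radius d/(2k). Then each Ω_k is an open bounded convex set with diam(Ω_k) = d, the sets Ω_k converge in Hausdorff distance to the segment {(x₁,0) : |x₁| ≤ d/2} of length d, and lim_{k→∞} μ_p(Ω_k) = λ_p(B), where B is any open ball of radius d/2 in ℝ^N. In particular the inequality μ_p(Ω) < λ_p(B)(diam(B)/diam(Ω))^p for convex sets is sharp and equality is never attained. -/

import Mathlib

open MeasureTheory Metric Set Real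

noncomputable section

/-- The Rayleigh quotient `(∫_Ω |∇v|^p) / (∫_Ω |v|^q)^(p/q)`, where the gradient is
understood as the (a.e. defined) Fréchet derivative. -/
def rayleighQuot {N : ℕ} (p q : ℝ) (Ω : Set (EuclideanSpace ℝ (Fin N)))
    (v : EuclideanSpace ℝ (Fin N) → ℝ) : ℝ :=
  (∫ x in Ω, ‖fderiv ℝ v x‖ ^ p) / (∫ x in Ω, |v x| ^ q) ^ (p / q)

/-- The first (generalized) Dirichlet eigenvalue `λ_{p,q}(Ω)`: infimum of the Rayleigh
quotient over nontrivial smooth functions compactly supported in `Ω`. -/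
def lambdaPQ {N : ℕ} (p q : ℝ) (Ω : Set (EuclideanSpace ℝ (Fin N))) : ℝ :=
  sInf { R : ℝ | ∃ v : EuclideanSpace ℝ (Fin N) → ℝ,
    ContDiff ℝ (⊤ : ℕ∞) v ∧ HasCompactSupport v ∧ tsupport v ⊆ Ω ∧
    (∃ x ∈ Ω, v x ≠ 0) ∧ R = rayleighQuot p q Ω v }

/-- The first nontrivial (generalized) Neumann eigenvalue `μ_{p,q}(Ω)`: infimum of the
Rayleigh quotient over nontrivial Lipschitz functions on the closure of `Ω` satisfying
the constraint `∫_Ω |v|^(q-2) v = 0`. -/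
def muPQ {N : ℕ} (p q : ℝ) (Ω : Set (EuclideanSpace ℝ (Fin N))) : ℝ :=
  sInf { R : ℝ | ∃ v : EuclideanSpace ℝ (Fin N) → ℝ, ∃ K : NNReal,
    LipschitzOnWith K v (closure Ω) ∧ (∃ x ∈ Ω, v x ≠ 0) ∧
    (∫ x in Ω, |v x| ^ (q - 2) * v x) = 0 ∧ R = rayleighQuot p q Ω v }

/-- `q` is below the critical Sobolev exponent `p* = Np/(N-p)` (with `p* = ∞` if `p ≥ N`). -/
def ltCritical (N : ℕ) (p q : ℝ) : Prop := p < N → q < N * p / (N - p)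

end

section
open Filter Topology ENNReal NNReal
namespace DC

/-- polar coordinates for lintegrals -/
lemma lintegral_polar {E : Type*} [NormedAddCommGroup E] [InnerProductSpace ℝ E] [FiniteDimensional ℝ E]
    [MeasurableSpace E] [BorelSpace E] [Nontrivial E] (F : E → ℝ≥0∞) (hF : Measurable F) :
    ∫⁻ x, F x = ∫⁻ θ, (∫⁻ r in Ioi (0:ℝ), ENNReal.ofReal (r ^ (Module.finrank ℝ E - 1)) * F (r • (θ : E)))
      ∂((volume : Measure (E)).toSphere) := by
  have hmp := (volume : Measure E).measurePreserving_homeomorphUnitSphereProd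
  have h1 : ∫⁻ x, F x = ∫⁻ x : ({0}ᶜ : Set E), F x ∂(volume.comap Subtype.val) := by
    rw [lintegral_subtype_comap (measurableSet_singleton _).compl, restrict_compl_singleton]
  have h2 : ∫⁻ x : ({0}ᶜ : Set E), F x ∂(volume.comap Subtype.val) =
      ∫⁻ q, F ((q.2 : ℝ) • (q.1 : E)) ∂((volume : Measure E).toSphere.prod (Measure.volumeIoiPow (Module.finrank ℝ E - 1))) := by
    rw [← hmp.lintegral_comp_emb (Homeomorph.measurableEmbedding _)]
    congr 1
    ext x
    have : (x:E) ≠ 0 := x.2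
    congr 1
    simp [homeomorphUnitSphereProd, smul_smul, this]
  rw [h1, h2, lintegral_prod]
  · congr 1
    ext θ
    simp only [Measure.volumeIoiPow]
    rw [lintegral_withDensity_eq_lintegral_mul]
    · simp only [Pi.mul_apply]
      rw [lintegral_subtype_comap measurableSet_Ioi (fun r : ℝ => ENNReal.ofReal (r ^ (Module.finrank ℝ E - 1)) * F (r • (θ : E)))]
    · fun_prop
    · exact hF.comp (by fun_prop)
  · exact (hF.comp (by fun_prop)).aemeasurable

lemma fderiv_comp_le {E : Type*} [NormedAddCommGroup E] [NormedSpace ℝ E] (U : ℝ → ℝ) (η : E → ℝ) (x : E) (L : ℝ)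
    (hL : 0 ≤ L) (hU : DifferentiableAt ℝ U (η x)) (hη : ∀ᶠ y in 𝓝 x, |η y - η x| ≤ L * ‖y - x‖) :
    ‖fderiv ℝ (fun y => U (η y)) x‖ ≤ |deriv U (η x)| * L := by
  have hcont : Tendsto η (𝓝 x) (𝓝 (η x)) := by
    rw [tendsto_iff_norm_sub_tendsto_zero]
    refine squeeze_zero' (Eventually.of_forall fun _ => norm_nonneg _) hη ?_
    have : Tendsto (fun y => L * ‖y - x‖) (𝓝 x) (𝓝 (L * ‖x - x‖)) := by
      apply Continuous.tendsto; fun_prop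
    simpa using this
  have key : ∀ ε > 0, ‖fderiv ℝ (fun y => U (η y)) x‖ ≤ (|deriv U (η x)| + ε) * L := by
    intro ε hε
    apply norm_fderiv_le_of_lip' ℝ (by positivity)
    have h1 := hU.hasDerivAt.hasFDerivAt.isLittleO
    have h2 := h1.def hε
    filter_upwards [hcont.eventually h2, hη] with y hy1 hy2
    have : |U (η y) - U (η x)| ≤ (|deriv U (η x)| + ε) * |η y - η x| := by
      have e1 : U (η y) - U (η x) = (U (η y) - U (η x) - (η y - η x) * deriv U (η x)) + (η y - η x) * deriv U (η x) := by ring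
      rw [e1]
      refine (abs_add_le _ _).trans ?_
      simp at hy1
      rw [abs_mul]
      nlinarith [hy1]
    calc ‖U (η y) - U (η x)‖ = |U (η y) - U (η x)| := rfl
      _ ≤ _ := this
      _ ≤ (|deriv U (η x)| + ε) * (L * ‖y - x‖) := by gcongr
      _ = _ := by ring
  have : Tendsto (fun ε : ℝ => (|deriv U (η x)| + ε) * L) (𝓝[>] 0) (𝓝 ((|deriv U (η x)| + 0) * L)) := by
    apply Tendsto.mono_left _ nhdsWithin_le_nhds
    apply Continuous.tendsto; fun_prop
  rw [add_zero] at this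
  exact ge_of_tendsto this (by filter_upwards [self_mem_nhdsWithin] with ε hε using key ε hε)

open scoped Convolution in
lemma mollify {E : Type*} [NormedAddCommGroup E] [InnerProductSpace ℝ E] [FiniteDimensional ℝ E]
    [MeasurableSpace E] [BorelSpace E] (v : E → ℝ) (K : ℝ≥0) (hv : LipschitzWith K v) :
    ∃ φ : ℕ → E → ℝ, (∀ n, ContDiff ℝ (⊤ : ℕ∞) (φ n)) ∧
      (∀ n x, ‖fderiv ℝ (φ n) x‖ ≤ K) ∧ (∀ n x, |φ n x - v x| ≤ K * (1 / ((n:ℝ) + 1))) ∧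
      (∀ (n : ℕ) x, (∀ y ∈ ball x (1 / ((n:ℝ) + 1)), v y = 0) → φ n x = 0) ∧
      ∀ᵐ x, Tendsto (fun n => fderiv ℝ (φ n) x) atTop (𝓝 (fderiv ℝ v x)) := by
  have hpos : ∀ n : ℕ, 0 < 1 / ((n:ℝ) + 1) := fun n => by positivity
  let b : ℕ → ContDiffBump (0 : E) := fun n =>
    ⟨1 / ((n:ℝ) + 1) / 2, 1 / ((n:ℝ) + 1), by have := hpos n; linarith, by have := hpos n; linarith⟩
  have hbo : ∀ n, (b n).rOut = 1 / ((n:ℝ) + 1) := fun n => rfl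
  have hK : ∀ x, ‖fderiv ℝ v x‖ ≤ K := fun x => norm_fderiv_le_of_lipschitz ℝ hv
  have hvli : LocallyIntegrable v (volume : Measure E) := hv.continuous.locallyIntegrable
  have hmeas : Measurable (fderiv ℝ v) := measurable_fderiv ℝ v
  have hdli : LocallyIntegrable (fderiv ℝ v) (volume : Measure E) := by
    refine (locallyIntegrable_const (K:ℝ)).mono hmeas.aestronglyMeasurable ?_
    exact Eventually.of_forall fun x => by simpa using hK x
  let φ : ℕ → E → ℝ := fun n => ((b n).normed volume ⋆[ContinuousLinearMap.lsmul ℝ ℝ, volume] v)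
  have hcd : ∀ n, ContDiff ℝ (⊤ : ℕ∞) (φ n) := fun n =>
    (b n).hasCompactSupport_normed.contDiff_convolution_left _ (b n).contDiff_normed hvli
  have hbint : ∀ n, Integrable ((b n).normed (volume : Measure E)) := fun n => (b n).integrable_normed
  have hder : ∀ n x, HasFDerivAt (φ n)
      (((b n).normed volume ⋆[ContinuousLinearMap.lsmul ℝ ℝ, volume] (fderiv ℝ v)) x) x := by
    intro n x
    have := hasFDerivAt_integral_of_dominated_loc_of_lip (𝕜 := ℝ) (μ := (volume : Measure E)) (x₀ := x) (s := univ)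
      (F := fun x t => ((b n).normed volume t) * v (x - t))
      (F' := fun t => ((b n).normed volume t) • fderiv ℝ v (x - t))
      (bound := fun t => ((b n).normed volume t) * K) univ_mem ?_ ?_ ?_ ?_ ?_ ?_
    · exact this.2
    · exact Eventually.of_forall fun y => by
        apply Continuous.aestronglyMeasurable
        exact (b n).continuous_normed.mul (hv.continuous.comp (by fun_prop))
    · apply Continuous.integrable_of_hasCompactSupport
      · exact (b n).continuous_normed.mul (hv.continuous.comp (by fun_prop))
      · exact (b n).hasCompactSupport_normed.mul_right
    · apply AEStronglyMeasurable.smul (b n).continuous_normed.aestronglyMeasurable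
      exact (hmeas.comp (by fun_prop)).aestronglyMeasurable
    · refine Eventually.of_forall fun t => ?_
      apply LipschitzOnWith.of_dist_le_mul
      intro y _ z _
      have h0 := (b n).nonneg_normed (μ := (volume : Measure E)) t
      have h1 := hv.dist_le_mul (y - t) (z - t)
      simp only [Real.dist_eq] at h1 ⊢
      rw [← mul_sub, abs_mul, abs_of_nonneg h0, Real.coe_nnabs, abs_of_nonneg (mul_nonneg h0 K.coe_nonneg)]
      rw [dist_sub_right] at h1
      calc _ ≤ (b n).normed volume t * (K * dist y z) := by gcongr
        _ = _ := by ring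
    · exact (hbint n).mul_const _
    · have h1 : ∀ᵐ y, DifferentiableAt ℝ v y := hv.ae_differentiableAt
      have h2 : ∀ᵐ t : E, DifferentiableAt ℝ v (x - t) :=
        (Measure.measurePreserving_sub_left volume x).quasiMeasurePreserving.ae h1
      filter_upwards [h2] with t ht
      have : HasFDerivAt (fun y => v (y - t)) (fderiv ℝ v (x - t)) x := by
        have := ht.hasFDerivAt.comp x ((hasFDerivAt_id x).sub_const t)
        simpa [Function.comp_def] using this
      exact this.const_mul _
  refine ⟨φ, hcd, ?_, ?_, ?_, ?_⟩
  · intro n x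
    apply norm_fderiv_le_of_lipschitz
    apply LipschitzWith.of_dist_le_mul
    intro y z
    have hi : ∀ y, Integrable (fun t => ((b n).normed volume t) * v (y - t)) := fun y => by
      apply Continuous.integrable_of_hasCompactSupport
      · exact (b n).continuous_normed.mul (hv.continuous.comp (by fun_prop))
      · exact (b n).hasCompactSupport_normed.mul_right
    have e : φ n y - φ n z = ∫ t, ((b n).normed volume t) * v (y - t) - ((b n).normed volume t) * v (z - t) := by
      rw [integral_sub (hi y) (hi z)]; rfl
    rw [Real.dist_eq, e]
    refine (abs_integral_le_integral_abs).trans ?_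
    calc _ ≤ ∫ t, ((b n).normed volume t) * (K * dist y z) := by
          apply integral_mono ((hi y).sub (hi z)).abs ((hbint n).mul_const _)
          intro t
          have h0 := (b n).nonneg_normed (μ := (volume : Measure E)) t
          have h1 := hv.dist_le_mul (y - t) (z - t)
          rw [dist_sub_right, Real.dist_eq] at h1
          change |(b n).normed volume t * v (y - t) - (b n).normed volume t * v (z - t)| ≤ _
          rw [← mul_sub, abs_mul, abs_of_nonneg h0]
          exact mul_le_mul_of_nonneg_left h1 h0
      _ = _ := by rw [integral_mul_const, (b n).integral_normed, one_mul]
  · intro n x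
    have := (b n).dist_normed_convolution_le (μ := (volume : Measure E)) (g := v) (x₀ := x) (ε := K * (1 / ((n:ℝ) + 1)))
      hv.continuous.aestronglyMeasurable ?_
    · simpa [Real.dist_eq] using this
    · intro y hy
      refine (hv.dist_le_mul y x).trans ?_
      rw [hbo, mem_ball] at hy
      gcongr
  · intro n x hx
    have h0 := hx x (mem_ball_self (hpos n))
    have := (b n).normed_convolution_eq_right (μ := (volume : Measure E)) (g := v) (x₀ := x) ?_
    · exact this.trans h0
    · intro y hy
      rw [h0, hx y hy]
  · have := ContDiffBump.ae_convolution_tendsto_right_of_locallyIntegrable (φ := b) (l := atTop) (K := 2) (μ := (volume : Measure E))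
      (g := fderiv ℝ v) ?_ ?_ hdli
    · filter_upwards [this] with x hx
      simpa only [(hder _ x).fderiv] using hx
    · simpa only [hbo] using tendsto_one_div_add_atTop_nhds_zero_nat
    · exact Eventually.of_forall fun n => by
        change 1 / ((n:ℝ) + 1) ≤ 2 * (1 / ((n:ℝ) + 1) / 2); linarith

end DC
end

section
open Filter Topology ENNReal NNReal
namespace DC

lemma enorm_rpow_eq {F : Type*} [NormedAddCommGroup F] (a : F) (p : ℝ) (hp : 0 ≤ p) :
    ‖a‖ₑ ^ p = ENNReal.ofReal (‖a‖ ^ p) := by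
  rw [← ofReal_norm, ENNReal.ofReal_rpow_of_nonneg (norm_nonneg _) hp]

lemma int_eq {α F : Type*} [MeasurableSpace α] {μ : Measure α} [NormedAddCommGroup F] (g : α → F) (p : ℝ) (hp : 0 ≤ p)
    (hg : AEStronglyMeasurable g μ) : ∫ x, ‖g x‖ ^ p ∂μ = (∫⁻ x, ‖g x‖ₑ ^ p ∂μ).toReal := by
  rw [integral_eq_lintegral_of_nonneg_ae]
  · simp_rw [enorm_rpow_eq _ p hp]
  · exact Eventually.of_forall fun x => by positivity
  · exact (hg.norm.aemeasurable.pow_const p).aestronglyMeasurable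

lemma fin_bdd {α F : Type*} [MeasurableSpace α] {μ : Measure α} [NormedAddCommGroup F] (g : α → F) (p : ℝ) (hp : 0 ≤ p)
    (S : Set α) (hS : μ S ≠ ⊤) (hSm : MeasurableSet S) (C : ℝ) (hC : ∀ x ∈ S, ‖g x‖ ≤ C) :
    ∫⁻ x in S, ‖g x‖ₑ ^ p ∂μ ≠ ⊤ := by
  have : ∫⁻ x in S, ‖g x‖ₑ ^ p ∂μ ≤ ∫⁻ x in S, ENNReal.ofReal C ^ p ∂μ := by
    apply setLIntegral_mono' hSm
    intro x hx
    gcongr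
    rw [← ofReal_norm]
    exact ENNReal.ofReal_le_ofReal (hC x hx)
  refine ne_top_of_le_ne_top ?_ this
  rw [setLIntegral_const]
  exact ENNReal.mul_ne_top (ENNReal.rpow_ne_top_of_nonneg hp ENNReal.ofReal_ne_top) hS

lemma dct {α F : Type*} [MeasurableSpace α] {μ : Measure α} [NormedAddCommGroup F] (gn : ℕ → α → F) (g : α → F)
    (p : ℝ) (hp : 0 ≤ p)
    (S : Set α) (hS : μ S ≠ ⊤) (hSm : MeasurableSet S) (C : ℝ) (hC : ∀ n, ∀ x ∈ S, ‖gn n x‖ ≤ C)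
    (hm : ∀ n, AEStronglyMeasurable (gn n) μ)
    (hl : ∀ᵐ x ∂μ, Tendsto (fun n => gn n x) atTop (𝓝 (g x))) :
    Tendsto (fun n => ∫⁻ x in S, ‖gn n x‖ₑ ^ p ∂μ) atTop (𝓝 (∫⁻ x in S, ‖g x‖ₑ ^ p ∂μ)) := by
  apply tendsto_lintegral_of_dominated_convergence' (bound := fun _ => ENNReal.ofReal C ^ p)
  · intro n
    exact ((hm n).enorm.pow_const p).restrict
  · intro n
    filter_upwards [ae_restrict_mem hSm] with x hx
    gcongr
    rw [← ofReal_norm]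
    exact ENNReal.ofReal_le_ofReal (hC n x hx)
  · rw [setLIntegral_const]
    exact ENNReal.mul_ne_top (ENNReal.rpow_ne_top_of_nonneg hp ENNReal.ofReal_ne_top) hS
  · filter_upwards [ae_restrict_of_ae hl] with x hx
    exact (ENNReal.continuous_rpow_const.tendsto _).comp hx.enorm

variable {N : ℕ}

lemma ray_eq (p : ℝ) (hp : 1 < p) (Ω : Set (EuclideanSpace ℝ (Fin N))) (v : EuclideanSpace ℝ (Fin N) → ℝ)
    (hv : AEStronglyMeasurable v (volume.restrict Ω)) :
    rayleighQuot p p Ω v = (∫⁻ x in Ω, ‖fderiv ℝ v x‖ₑ ^ p).toReal / (∫⁻ x in Ω, ‖v x‖ₑ ^ p).toReal := by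
  unfold rayleighQuot
  rw [div_self (by linarith), Real.rpow_one, int_eq _ p (by linarith), ← int_eq v p (by linarith) hv]
  · rfl
  · exact (measurable_fderiv ℝ v).aestronglyMeasurable

lemma lam_nonneg (p : ℝ) (Ω : Set (EuclideanSpace ℝ (Fin N))) : 0 ≤ lambdaPQ p p Ω := by
  apply Real.sInf_nonneg
  rintro R ⟨v, -, -, -, -, rfl⟩
  unfold rayleighQuot
  apply div_nonneg
  · exact integral_nonneg fun x => by positivity
  · exact Real.rpow_nonneg (integral_nonneg fun x => by positivity) _

lemma dirichlet_smooth (p : ℝ) (hp : 1 < p) (c : EuclideanSpace ℝ (Fin N)) (R : ℝ)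
    (v : EuclideanSpace ℝ (Fin N) → ℝ) (hv : ContDiff ℝ (⊤ : ℕ∞) v) (hcs : HasCompactSupport v)
    (hs : tsupport v ⊆ ball c R) :
    ENNReal.ofReal (lambdaPQ p p (ball c R)) * ∫⁻ x in ball c R, ‖v x‖ₑ ^ p ≤ ∫⁻ x in ball c R, ‖fderiv ℝ v x‖ₑ ^ p := by
  have hp0 : 0 ≤ p := by linarith
  have hvol : volume (ball c R) ≠ ⊤ := measure_ball_lt_top.ne
  obtain ⟨C, hC⟩ := hcs.exists_bound_of_continuous hv.continuous
  obtain ⟨C', hC'⟩ := (hcs.fderiv (𝕜 := ℝ)).exists_bound_of_continuous (hv.continuous_fderiv (by simp))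
  have hY := fin_bdd v p hp0 (ball c R) hvol measurableSet_ball C (fun x _ => hC x)
  have hX := fin_bdd (fderiv ℝ v) p hp0 (ball c R) hvol measurableSet_ball C' (fun x _ => hC' x)
  set Y := ∫⁻ x in ball c R, ‖v x‖ₑ ^ p
  set X := ∫⁻ x in ball c R, ‖fderiv ℝ v x‖ₑ ^ p
  by_cases hY0 : Y = 0
  · simp [hY0]
  have hne : ∃ x ∈ ball c R, v x ≠ 0 := by
    by_contra! h
    apply hY0
    apply setLIntegral_eq_zero measurableSet_ball
    intro x hx
    simp [h x hx, (by linarith : 0 < p)]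
  have hle : lambdaPQ p p (ball c R) ≤ X.toReal / Y.toReal := by
    rw [← ray_eq p hp _ v hv.continuous.aestronglyMeasurable]
    apply csInf_le
    · refine ⟨0, ?_⟩
      rintro R ⟨v, -, -, -, -, rfl⟩
      unfold rayleighQuot
      apply div_nonneg
      · exact integral_nonneg fun x => by positivity
      · exact Real.rpow_nonneg (integral_nonneg fun x => by positivity) _
    · exact ⟨v, hv, hcs, hs, hne, rfl⟩
  have hYp : 0 < Y.toReal := ENNReal.toReal_pos hY0 hY
  rw [le_div_iff₀ hYp] at hle
  rw [← ENNReal.ofReal_toReal hY, ← ENNReal.ofReal_toReal hX, ← ENNReal.ofReal_mul (lam_nonneg _ _)]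
  exact ENNReal.ofReal_le_ofReal hle

lemma dirichlet_lip1 (p : ℝ) (hp : 1 < p) (c : EuclideanSpace ℝ (Fin N)) (R R' : ℝ) (hR : R' < R)
    (v : EuclideanSpace ℝ (Fin N) → ℝ) (K : ℝ≥0) (hv : LipschitzWith K v) (h0 : ∀ x, R' ≤ dist x c → v x = 0) :
    ENNReal.ofReal (lambdaPQ p p (ball c R)) * ∫⁻ x in ball c R, ‖v x‖ₑ ^ p ≤ ∫⁻ x in ball c R, ‖fderiv ℝ v x‖ₑ ^ p := by
  have hp0 : 0 ≤ p := by linarith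
  have hvol : volume (ball c R) ≠ ⊤ := measure_ball_lt_top.ne
  obtain ⟨φ, h1, h2, h3, h4, h5⟩ := mollify v K hv
  obtain ⟨C, hC⟩ : ∃ C, ∀ x ∈ closedBall c R, ‖v x‖ ≤ C :=
    (isCompact_closedBall c R).exists_bound_of_continuousOn hv.continuous.continuousOn
  have hn0 : Tendsto (fun n : ℕ => 1 / ((n:ℝ) + 1)) atTop (𝓝 0) := tendsto_one_div_add_atTop_nhds_zero_nat
  have tX := dct (μ := volume) (fun n => fderiv ℝ (φ n)) (fderiv ℝ v) p hp0 (ball c R) hvol measurableSet_ball K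
    (fun n x _ => h2 n x) (fun n => (measurable_fderiv ℝ (φ n)).aestronglyMeasurable) h5
  have tY := dct (μ := volume) φ v p hp0 (ball c R) hvol measurableSet_ball (C + K) ?_
    (fun n => (h1 n).continuous.aestronglyMeasurable) ?_
  · refine le_of_tendsto_of_tendsto (ENNReal.Tendsto.const_mul tY (Or.inr ENNReal.ofReal_ne_top)) tX ?_
    have : ∀ᶠ n : ℕ in atTop, 1 / ((n:ℝ) + 1) < (R - R') / 2 := hn0.eventually_lt_const (by linarith)
    filter_upwards [this] with n hn
    have hz : ∀ x, (R + R') / 2 ≤ dist x c → φ n x = 0 := by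
      intro x hx
      apply h4
      intro y hy
      apply h0
      rw [mem_ball] at hy
      have := dist_triangle x y c
      rw [dist_comm x y] at this
      linarith
    have hts : tsupport (φ n) ⊆ closedBall c ((R + R') / 2) := by
      apply closure_minimal _ isClosed_closedBall
      intro x hx
      rw [mem_closedBall]
      by_contra! h
      exact hx (hz x h.le)
    have hcs : HasCompactSupport (φ n) :=
      (isCompact_closedBall c ((R + R') / 2)).of_isClosed_subset (isClosed_tsupport _) hts
    exact dirichlet_smooth p hp c R (φ n) (h1 n) hcs (hts.trans (closedBall_subset_ball (by linarith)))
  · intro n x hx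
    have a1 := hC x (ball_subset_closedBall hx)
    have a2 := h3 n x
    have a3 : (K:ℝ) * (1 / ((n:ℝ) + 1)) ≤ K := by
      apply mul_le_of_le_one_right K.coe_nonneg
      rw [div_le_one (by positivity)]
      linarith [(Nat.cast_nonneg n : (0:ℝ) ≤ n)]
    rw [Real.norm_eq_abs] at *
    have := abs_add_le (φ n x - v x) (v x)
    rw [sub_add_cancel] at this
    linarith
  · refine Eventually.of_forall fun x => ?_
    rw [tendsto_iff_norm_sub_tendsto_zero]
    refine squeeze_zero (fun _ => norm_nonneg _) (fun n => h3 n x) ?_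
    simpa using hn0.const_mul (K:ℝ)

/-- soft threshold -/
noncomputable def T (δ t : ℝ) : ℝ := t - max (-δ) (min t δ)

lemma T_lip (δ s t : ℝ) (hδ : 0 ≤ δ) : |T δ t - T δ s| ≤ |t - s| := by
  unfold T
  rcases max_cases (-δ) (min t δ) with h | h <;> rcases max_cases (-δ) (min s δ) with h' | h' <;>
  rcases min_cases t δ with g | g <;> rcases min_cases s δ with g' | g' <;>
  rcases abs_cases (t - s) with k | k <;> rw [abs_le] <;> constructor <;> linarith

lemma T_zero (δ t : ℝ) (hδ : |t| ≤ δ) : T δ t = 0 := by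
  unfold T
  rw [abs_le] at hδ
  rw [min_eq_left hδ.2, max_eq_right hδ.1, sub_self]

lemma T_near (δ t : ℝ) (hδ : 0 ≤ δ) : |T δ t - t| ≤ δ := by
  unfold T
  rw [abs_le]
  rcases max_cases (-δ) (min t δ) with h | h <;> rcases min_cases t δ with g | g <;> constructor <;> linarith

lemma dirichlet_lip (p : ℝ) (hp : 1 < p) (c : EuclideanSpace ℝ (Fin N)) (R : ℝ)
    (v : EuclideanSpace ℝ (Fin N) → ℝ) (K : ℝ≥0) (hv : LipschitzWith K v) (h0 : ∀ x, R ≤ dist x c → v x = 0) :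
    ENNReal.ofReal (lambdaPQ p p (ball c R)) * ∫⁻ x in ball c R, ‖v x‖ₑ ^ p ≤ ∫⁻ x in ball c R, ‖fderiv ℝ v x‖ₑ ^ p := by
  have hp0 : 0 ≤ p := by linarith
  have hvol : volume (ball c R) ≠ ⊤ := measure_ball_lt_top.ne
  rcases le_or_gt R 0 with hR | hR
  · simp [ball_eq_empty.2 hR]
  obtain ⟨C, hC⟩ : ∃ C, ∀ x ∈ closedBall c R, ‖v x‖ ≤ C :=
    (isCompact_closedBall c R).exists_bound_of_continuousOn hv.continuous.continuousOn
  have hn0 : Tendsto (fun n : ℕ => 1 / ((n:ℝ) + 1)) atTop (𝓝 0) := tendsto_one_div_add_atTop_nhds_zero_nat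
  let w : ℕ → EuclideanSpace ℝ (Fin N) → ℝ := fun n x => T (1 / ((n:ℝ) + 1)) (v x)
  have hwl : ∀ n, LipschitzWith K (w n) := by
    intro n
    apply LipschitzWith.of_dist_le_mul
    intro x y
    refine le_trans ?_ (hv.dist_le_mul x y)
    exact T_lip _ _ _ (by positivity)
  have tY := dct (μ := volume) w v p hp0 (ball c R) hvol measurableSet_ball (C + 1) ?_
    (fun n => (hwl n).continuous.aestronglyMeasurable) ?_
  · refine le_of_tendsto (ENNReal.Tendsto.const_mul tY (Or.inr ENNReal.ofReal_ne_top)) (Eventually.of_forall fun n => ?_)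
    have hd : (0:ℝ) < 1 / ((n:ℝ) + 1) := by positivity
    obtain ⟨R', hR', hT⟩ : ∃ R' < R, ∀ x, R' ≤ dist x c → w n x = 0 := by
      let S := {x | 1 / ((n:ℝ) + 1) ≤ |v x|}
      have hSb : S ⊆ closedBall c R := by
        intro x hx
        rw [mem_closedBall]
        by_contra! h
        have : 1 / ((n:ℝ) + 1) ≤ |v x| := hx
        rw [h0 x h.le, abs_zero] at this
        linarith
      have hSc : IsCompact S := (isCompact_closedBall c R).of_isClosed_subset
        (isClosed_le continuous_const hv.continuous.abs) hSb
      rcases S.eq_empty_or_nonempty with hS | hS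
      · refine ⟨0, hR, fun x _ => T_zero _ _ ?_⟩
        by_contra! h
        have : x ∈ S := h.le
        rw [hS] at this
        exact this
      · obtain ⟨z, hz, hz'⟩ := hSc.exists_isMaxOn hS (f := fun x => dist x c) (by fun_prop)
        have hzR : dist z c < R := by
          by_contra! h
          have : 1 / ((n:ℝ) + 1) ≤ |v z| := hz
          rw [h0 z h, abs_zero] at this
          linarith
        refine ⟨(dist z c + R) / 2, by linarith, fun x hx => T_zero _ _ ?_⟩
        by_contra! h
        have : dist x c ≤ dist z c := hz' (show x ∈ S from h.le)
        linarith
    have := dirichlet_lip1 p hp c R R' hR' (w n) K (hwl n) hT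
    · refine this.trans ?_
      apply lintegral_mono_ae
      filter_upwards [ae_restrict_of_ae hv.ae_differentiableAt] with x hx
      gcongr ?_ ^ p
      rw [← ofReal_norm, ← ofReal_norm]
      apply ENNReal.ofReal_le_ofReal
      apply _root_.le_of_forall_pos_le_add
      intro ε hε
      apply norm_fderiv_le_of_lip' ℝ (by positivity)
      filter_upwards [hx.hasFDerivAt.isLittleO.def hε] with y hy
      calc ‖w n y - w n x‖ ≤ |v y - v x| := T_lip _ _ _ hd.le
        _ = ‖(v y - v x - fderiv ℝ v x (y - x)) + fderiv ℝ v x (y - x)‖ := by simp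
        _ ≤ ε * ‖y - x‖ + ‖fderiv ℝ v x‖ * ‖y - x‖ := (norm_add_le _ _).trans (add_le_add hy (ContinuousLinearMap.le_opNorm _ _))
        _ = _ := by ring
  · intro n x hx
    have a1 := hC x (ball_subset_closedBall hx)
    have a2 := T_near (1 / ((n:ℝ) + 1)) (v x) (by positivity)
    have a3 : (1 / ((n:ℝ) + 1)) ≤ 1 := by
      rw [div_le_one (by positivity)]
      linarith [(Nat.cast_nonneg n : (0:ℝ) ≤ n)]
    rw [Real.norm_eq_abs] at *
    have := abs_add_le (w n x - v x) (v x)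
    rw [sub_add_cancel] at this
    change |T (1 / ((n:ℝ) + 1)) (v x)| ≤ _
    change |T (1 / ((n:ℝ) + 1)) (v x)| ≤ |T (1 / ((n:ℝ) + 1)) (v x) - v x| + _ at this
    linarith
  · refine Eventually.of_forall fun x => ?_
    rw [tendsto_iff_norm_sub_tendsto_zero]
    exact squeeze_zero (fun _ => norm_nonneg _) (fun n => T_near _ _ (by positivity)) hn0

end DC
end

section
open Filter Topology ENNReal NNReal
namespace DC

lemma lint_smul {E : Type*} [NormedAddCommGroup E] [NormedSpace ℝ E] [FiniteDimensional ℝ E]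
    [MeasurableSpace E] [BorelSpace E] (μ : Measure E) [μ.IsAddHaarMeasure] (F : E → ℝ≥0∞) (hF : Measurable F)
    (b : ℝ) (hb : 0 < b) :
    ∫⁻ x, F (b • x) ∂μ = ENNReal.ofReal ((b ^ (Module.finrank ℝ E))⁻¹) * ∫⁻ x, F x ∂μ := by
  have := Measure.map_addHaar_smul μ hb.ne'
  rw [abs_of_pos (by positivity)] at this
  rw [← lintegral_map (g := fun x => b • x) hF (measurable_const_smul b), this, lintegral_smul_measure, smul_eq_mul]

lemma scale1 (G : ℝ → ℝ≥0∞) (hG : Measurable G) (n : ℕ) (b ρ : ℝ) (hb : 0 < b) :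
    ∫⁻ r in Ioo 0 ρ, ENNReal.ofReal (r ^ n) * G (b * r) =
      ENNReal.ofReal ((b ^ (n + 1))⁻¹) * ∫⁻ r in Ioo 0 (b * ρ), ENNReal.ofReal (r ^ n) * G r := by
  have h := lint_smul (volume : Measure ℝ) ((Ioo 0 (b * ρ)).indicator (fun r => ENNReal.ofReal (r ^ n) * G r))
    (by apply Measurable.indicator _ measurableSet_Ioo; fun_prop) b hb
  rw [lintegral_indicator measurableSet_Ioo] at h
  have e : ∀ r : ℝ, (Ioo 0 (b * ρ)).indicator (fun r => ENNReal.ofReal (r ^ n) * G r) (b • r) =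
      ENNReal.ofReal (b ^ n) * (Ioo 0 ρ).indicator (fun r => ENNReal.ofReal (r ^ n) * G (b * r)) r := by
    intro r
    have hm : b * r ∈ Ioo 0 (b * ρ) ↔ r ∈ Ioo 0 ρ := by
      simp [hb]
    by_cases hr : r ∈ Ioo 0 ρ
    · rw [smul_eq_mul, indicator_of_mem (hm.2 hr), indicator_of_mem hr, mul_pow, ENNReal.ofReal_mul (by positivity), mul_assoc]
    · rw [smul_eq_mul, indicator_of_notMem (fun h => hr (hm.1 h)), indicator_of_notMem hr, mul_zero]
  simp_rw [e] at h
  rw [lintegral_const_mul _ (by apply Measurable.indicator _ measurableSet_Ioo; fun_prop),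
    lintegral_indicator measurableSet_Ioo, Module.finrank_self, pow_one] at h
  have : ENNReal.ofReal ((b ^ (n + 1))⁻¹) = ENNReal.ofReal ((b ^ n)⁻¹) * ENNReal.ofReal (b⁻¹) := by
    rw [← ENNReal.ofReal_mul (by positivity)]; congr 1; rw [pow_succ, mul_inv]
  rw [this, mul_assoc, ← h, ← mul_assoc, ← ENNReal.ofReal_mul (by positivity), inv_mul_cancel₀ (by positivity)]
  simp

lemma jensen1 (g : ℝ → ℝ) (hg : ContDiff ℝ 1 g) (a b : ℝ) (hab : a ≤ b) (p : ℝ) (hp : 1 < p) :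
    ‖g b - g a‖ₑ ^ p ≤ ENNReal.ofReal ((b - a) ^ (p - 1)) * ∫⁻ t in Ioc a b, ‖deriv g t‖ₑ ^ p := by
  have hc : Continuous (deriv g) := hg.continuous_deriv (by simp)
  have h1 : g b - g a = ∫ t in Ioc a b, deriv g t := by
    rw [← intervalIntegral.integral_of_le hab, intervalIntegral.integral_deriv_eq_sub
      (fun x _ => hg.differentiable (by simp) x) (hc.intervalIntegrable _ _)]
  have h2 : ‖g b - g a‖ₑ ≤ eLpNorm (deriv g) 1 (volume.restrict (Ioc a b)) := by
    rw [h1, eLpNorm_one_eq_lintegral_enorm]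
    exact enorm_integral_le_lintegral_enorm _
  have hpe : (1 : ℝ≥0∞) ≤ ENNReal.ofReal p := by
    rw [← ENNReal.ofReal_one]; exact ENNReal.ofReal_le_ofReal hp.le
  have h3 := eLpNorm_le_eLpNorm_mul_rpow_measure_univ hpe (hc.aestronglyMeasurable (μ := volume.restrict (Ioc a b)))
  rw [eLpNorm_eq_lintegral_rpow_enorm_toReal (p := ENNReal.ofReal p) (by simp; try linarith) (by simp), ENNReal.toReal_ofReal (by linarith)] at h3
  simp only [ENNReal.toReal_one, Measure.restrict_apply_univ, Real.volume_Ioc] at h3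
  calc ‖g b - g a‖ₑ ^ p ≤ ((∫⁻ x in Ioc a b, ‖deriv g x‖ₑ ^ p) ^ (1 / p) * ENNReal.ofReal (b - a) ^ (1 / 1 - 1 / p)) ^ p :=
        ENNReal.rpow_le_rpow (h2.trans h3) (by linarith)
    _ = _ := by
      rw [ENNReal.mul_rpow_of_nonneg _ _ (by linarith), ← ENNReal.rpow_mul, ← ENNReal.rpow_mul, one_div_mul_cancel (by linarith),
        ENNReal.rpow_one, mul_comm]
      congr 1
      rw [show (1 / 1 - 1 / p) * p = p - 1 by field_simp,
        ENNReal.ofReal_rpow_of_nonneg (by linarith) (by linarith)]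

variable {N : ℕ} [NeZero N]

instance : Nontrivial (EuclideanSpace ℝ (Fin N)) := by
  apply Module.nontrivial_of_finrank_pos (R := ℝ)
  simp [Nat.pos_of_neZero]

lemma lintegral_polar_c (c : EuclideanSpace ℝ (Fin N)) (F : EuclideanSpace ℝ (Fin N) → ℝ≥0∞) (hF : Measurable F) :
    ∫⁻ x, F x = ∫⁻ θ, (∫⁻ r in Ioi (0:ℝ), ENNReal.ofReal (r ^ (N - 1)) *
        F (c + r • (θ : EuclideanSpace ℝ (Fin N))))
      ∂((volume : Measure (EuclideanSpace ℝ (Fin N))).toSphere) := by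
  rw [← lintegral_add_left_eq_self F c, lintegral_polar (fun x => F (c + x)) (hF.comp (by fun_prop))]
  simp

lemma radial (c : EuclideanSpace ℝ (Fin N)) (R : ℝ) (G : ℝ → ℝ≥0∞) (hG : Measurable G) :
    ∫⁻ x in ball c R, G (dist x c) = (∫⁻ r in Ioo 0 R, ENNReal.ofReal (r ^ (N - 1)) * G r) *
      ((volume : Measure (EuclideanSpace ℝ (Fin N))).toSphere univ) := by
  rw [← lintegral_indicator measurableSet_ball, lintegral_polar_c c]
  · rw [← lintegral_const]
    congr 1
    ext θ
    have hθ : ‖(θ : EuclideanSpace ℝ (Fin N))‖ = 1 := by simpa using θ.2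
    rw [← lintegral_indicator measurableSet_Ioi, ← lintegral_indicator measurableSet_Ioo]
    congr 1
    ext r
    by_cases hr : 0 < r
    · have hd : dist (c + r • (θ : EuclideanSpace ℝ (Fin N))) c = r := by
        rw [dist_eq_norm, add_sub_cancel_left, norm_smul, hθ, mul_one, Real.norm_of_nonneg hr.le]
      rw [indicator_of_mem (by exact hr)]
      by_cases hR : r < R
      · rw [indicator_of_mem (by rw [mem_ball, hd]; exact hR), indicator_of_mem (by exact ⟨hr, hR⟩), hd]
      · rw [indicator_of_notMem (by rw [mem_ball, hd]; exact hR), indicator_of_notMem (fun h => hR h.2), mul_zero]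
    · rw [indicator_of_notMem (by exact hr), indicator_of_notMem (fun h => hr h.1)]
  · exact (hG.comp (by fun_prop)).indicator measurableSet_ball

lemma oneD (p : ℝ) (hp : 1 < p) (c : EuclideanSpace ℝ (Fin N)) (R : ℝ) (hR : 0 < R)
    (f : ℝ → ℝ) (hf : ContDiff ℝ 1 f) (hfR : f R = 0) (ρ : ℝ) (hρ : 0 ≤ ρ) (hρR : ρ ≤ R) :
    ENNReal.ofReal (lambdaPQ p p (ball c R)) * ∫⁻ r in Ioo 0 R, ENNReal.ofReal (r ^ (N - 1)) * ‖f (max r ρ)‖ₑ ^ p ≤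
      ∫⁻ r in Ioo ρ R, ENNReal.ofReal (r ^ (N - 1)) * ‖deriv f r‖ₑ ^ p := by
  have hc : Continuous (deriv f) := hf.continuous_deriv (by simp)
  let η : EuclideanSpace ℝ (Fin N) → ℝ := fun x => min (max (dist x c) ρ) R
  have hη1 : LipschitzWith 1 η := by
    exact ((LipschitzWith.dist_left c).max_const ρ).min_const R
  have hηm : ∀ x, η x ∈ Icc ρ R := fun x => ⟨le_min (le_max_right _ _) hρR, min_le_right _ _⟩
  obtain ⟨C, hC⟩ : ∃ C, ∀ x ∈ Icc ρ R, ‖deriv f x‖ ≤ C :=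
    isCompact_Icc.exists_bound_of_continuousOn hc.continuousOn
  have hflip : LipschitzOnWith C.toNNReal f (Icc ρ R) := by
    apply Convex.lipschitzOnWith_of_nnnorm_deriv_le (𝕜 := ℝ) (fun x _ => hf.differentiable (by simp) x) _ (convex_Icc _ _)
    intro x hx
    rw [← norm_toNNReal]
    exact Real.toNNReal_le_toNNReal (hC x hx)
  have hvl : LipschitzWith (C.toNNReal * 1) (fun x => f (η x)) := by
    rw [← lipschitzOnWith_univ]
    exact hflip.comp hη1.lipschitzOnWith (fun x _ => hηm x)
  have key := dirichlet_lip p hp c R (fun x => f (η x)) _ hvl (by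
    intro x hx
    have : η x = R := min_eq_right (hx.trans (le_max_left _ _))
    simp only [this, hfR])
  have hle : ∫⁻ x in ball c R, ‖fderiv ℝ (fun x => f (η x)) x‖ₑ ^ p ≤
      ∫⁻ x in ball c R, ((Ici ρ).indicator (fun r => ‖deriv f r‖ₑ ^ p)) (dist x c) := by
    apply setLIntegral_mono' measurableSet_ball
    intro x hx
    rw [mem_ball] at hx
    by_cases h : ρ ≤ dist x c
    · rw [indicator_of_mem (by exact h)]
      gcongr ?_ ^ p
      have hηx : η x = dist x c := by simp [η, h, hx.le]
      have := fderiv_comp_le f η x 1 zero_le_one (hf.differentiable (by simp) _) (Eventually.of_forall fun y => by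
        simpa [Real.dist_eq, dist_eq_norm] using hη1.dist_le_mul y x)
      rw [hηx, mul_one] at this
      rw [← ofReal_norm, ← ofReal_norm]
      exact ENNReal.ofReal_le_ofReal this
    · have := fderiv_comp_le f η x 0 le_rfl (hf.differentiable (by simp) _) (by
        have : ∀ᶠ y in 𝓝 x, dist y c < ρ :=
          (continuous_id.dist continuous_const).tendsto x |>.eventually_lt_const (not_le.1 h)
        filter_upwards [this] with y hy
        simp [η, hy.le, (not_le.1 h).le])
      rw [mul_zero] at this
      have h0 : ‖fderiv ℝ (fun x => f (η x)) x‖ₑ = 0 := by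
        rw [← ofReal_norm]; exact ENNReal.ofReal_of_nonpos this
      rw [h0, ENNReal.zero_rpow_of_pos (by linarith)]
      exact zero_le
  have e1 : ∫⁻ x in ball c R, ‖f (η x)‖ₑ ^ p = ∫⁻ x in ball c R, (fun r => ‖f (max r ρ)‖ₑ ^ p) (dist x c) := by
    apply setLIntegral_congr_fun measurableSet_ball
    intro x hx
    rw [mem_ball] at hx
    simp only []
    rw [show η x = max (dist x c) ρ from min_eq_left (max_le hx.le hρR)]
  have hfc := hf.continuous
  have hm2 : Measurable (fun r => ‖deriv f r‖ₑ ^ p) := hc.measurable.enorm.pow_const p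
  have hm1 : Measurable (fun r => ‖f (max r ρ)‖ₑ ^ p) :=
    (hfc.comp (continuous_id.max continuous_const)).measurable.enorm.pow_const p
  rw [e1, radial c R _ hm1, ← mul_assoc] at key
  rw [radial c R _ (hm2.indicator measurableSet_Ici)] at hle
  have k2 := key.trans hle
  rw [ENNReal.mul_le_mul_iff_left] at k2
  · refine k2.trans ?_
    rw [← setLIntegral_congr (Ioo_ae_eq_Ico (a := ρ) (b := R)).symm]
    rw [← lintegral_indicator measurableSet_Ioo, ← lintegral_indicator measurableSet_Ico]
    apply lintegral_mono
    intro r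
    by_cases h : r ∈ Ioo 0 R
    · rw [indicator_of_mem h]
      by_cases h' : ρ ≤ r
      · rw [indicator_of_mem (by exact h'), indicator_of_mem (by exact ⟨h', h.2⟩)]
      · rw [indicator_of_notMem (by exact h'), mul_zero]; exact zero_le
    · rw [indicator_of_notMem h]; exact zero_le
  · have := Measure.toSphere_ne_zero (volume : Measure (EuclideanSpace ℝ (Fin N)))
    exact fun h => this (Measure.measure_univ_eq_zero.1 h)
  · exact measure_ne_top _ _

end DC
end

section
open Filter Topology ENNReal NNReal
namespace DC
variable {N : ℕ} [NeZero N]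

lemma near_v (p : ℝ) (hp : 1 < p) (c : EuclideanSpace ℝ (Fin N)) (R : ℝ) (hR : 0 < R) (ε : ℝ) (hε : 0 < ε) :
    ∃ v : EuclideanSpace ℝ (Fin N) → ℝ, ContDiff ℝ (⊤ : ℕ∞) v ∧ HasCompactSupport v ∧ tsupport v ⊆ ball c R ∧
      ∫⁻ x, ‖fderiv ℝ v x‖ₑ ^ p < ENNReal.ofReal (lambdaPQ p p (ball c R) + ε) * ∫⁻ x, ‖v x‖ₑ ^ p := by
  have hp0 : 0 ≤ p := by linarith
  have hvol : volume (ball c R) ≠ ⊤ := measure_ball_lt_top.ne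
  have hlt : lambdaPQ p p (ball c R) < lambdaPQ p p (ball c R) + ε := by linarith
  have hne : { Q : ℝ | ∃ v : EuclideanSpace ℝ (Fin N) → ℝ,
    ContDiff ℝ (⊤ : ℕ∞) v ∧ HasCompactSupport v ∧ tsupport v ⊆ ball c R ∧
    (∃ x ∈ ball c R, v x ≠ 0) ∧ Q = rayleighQuot p p (ball c R) v }.Nonempty := by
    let b : ContDiffBump c := ⟨R / 4, R / 2, by positivity, by linarith⟩
    refine ⟨_, b, b.contDiff, b.hasCompactSupport, ?_, ⟨c, mem_ball_self hR, ?_⟩, rfl⟩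
    · rw [b.tsupport_eq]; exact closedBall_subset_ball (by simp only [b]; linarith)
    · rw [b.one_of_mem_closedBall (mem_closedBall_self b.rIn_pos.le)]; exact one_ne_zero
  obtain ⟨Q, ⟨v, hv, hcs, hs, ⟨x, hx, hvx⟩, rfl⟩, hQ⟩ := exists_lt_of_csInf_lt hne hlt
  refine ⟨v, hv, hcs, hs, ?_⟩
  obtain ⟨C, hC⟩ := hcs.exists_bound_of_continuous hv.continuous
  have hY : ∫⁻ x in ball c R, ‖v x‖ₑ ^ p ≠ ⊤ := fin_bdd v p hp0 _ hvol measurableSet_ball C (fun x _ => hC x)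
  have hcd : HasCompactSupport (fderiv ℝ v) := hcs.fderiv ℝ
  have hdc : Continuous (fderiv ℝ v) := hv.continuous_fderiv (by simp)
  obtain ⟨C', hC'⟩ := hcd.exists_bound_of_continuous hdc
  have hX : ∫⁻ x in ball c R, ‖fderiv ℝ v x‖ₑ ^ p ≠ ⊤ := fin_bdd _ p hp0 _ hvol measurableSet_ball C' (fun x _ => hC' x)
  have z1 : ∀ x, x ∉ ball c R → v x = 0 := fun x hx => image_eq_zero_of_notMem_tsupport (fun h => hx (hs h))
  have z2 : ∀ x, x ∉ ball c R → fderiv ℝ v x = 0 := fun x hx =>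
    image_eq_zero_of_notMem_tsupport (fun h => hx (hs (tsupport_fderiv_subset ℝ h)))
  have e1 : ∫⁻ x in ball c R, ‖v x‖ₑ ^ p = ∫⁻ x, ‖v x‖ₑ ^ p := by
    apply setLIntegral_eq_of_support_subset
    intro x hx
    by_contra h
    simp [z1 x h, show 0 < p by linarith] at hx
  have e2 : ∫⁻ x in ball c R, ‖fderiv ℝ v x‖ₑ ^ p = ∫⁻ x, ‖fderiv ℝ v x‖ₑ ^ p := by
    apply setLIntegral_eq_of_support_subset
    intro x hx
    by_contra h
    rw [Function.mem_support, ← ofReal_norm, z2 x h, norm_zero, ENNReal.ofReal_zero, ENNReal.zero_rpow_of_pos (by linarith)] at hx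
    exact hx rfl
  have hY0 : ∫⁻ x in ball c R, ‖v x‖ₑ ^ p ≠ 0 := by
    rw [e1]
    have hc : Continuous (fun x => ‖v x‖ₑ ^ p) :=
      ENNReal.continuous_rpow_const.comp hv.continuous.enorm
    have := hc.isOpen_support.measure_pos volume ⟨x, by simp [hvx, show ¬ p < 0 by linarith]⟩
    exact ((lintegral_pos_iff_support hc.measurable).2 this).ne'
  rw [ray_eq p hp _ _ hv.continuous.aestronglyMeasurable, div_lt_iff₀ (ENNReal.toReal_pos hY0 hY)] at hQ
  rw [← e1, ← e2, ← ENNReal.ofReal_toReal hX, ← ENNReal.ofReal_toReal hY, ← ENNReal.ofReal_mul]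
  · rw [ENNReal.ofReal_lt_ofReal_iff_of_nonneg (by positivity)]
    exact hQ
  · have := lam_nonneg p (ball c R)
    linarith

lemma near_f (p : ℝ) (hp : 1 < p) (c : EuclideanSpace ℝ (Fin N)) (R : ℝ) (hR : 0 < R) (ε : ℝ) (hε : 0 < ε) :
    ∃ f : ℝ → ℝ, ContDiff ℝ 1 f ∧ (∃ R0 < R, ∀ r ≥ R0, f r = 0) ∧
      ∫⁻ r in Ioi 0, ENNReal.ofReal (r ^ (N - 1)) * ‖deriv f r‖ₑ ^ p <
        ENNReal.ofReal (lambdaPQ p p (ball c R) + ε) * ∫⁻ r in Ioi 0, ENNReal.ofReal (r ^ (N - 1)) * ‖f r‖ₑ ^ p := by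
  obtain ⟨v, hv, hcs, hs, h⟩ := near_v p hp c R hR ε hε
  have hdc : Continuous (fderiv ℝ v) := hv.continuous_fderiv (by simp)
  rw [lintegral_polar_c c _ (hdc.measurable.enorm.pow_const p), lintegral_polar_c c _ (hv.continuous.measurable.enorm.pow_const p)] at h
  obtain ⟨θ, hθ⟩ : ∃ θ : sphere (0 : EuclideanSpace ℝ (Fin N)) 1,
      ∫⁻ r in Ioi 0, ENNReal.ofReal (r ^ (N - 1)) * ‖fderiv ℝ v (c + r • (θ : EuclideanSpace ℝ (Fin N)))‖ₑ ^ p <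
        ENNReal.ofReal (lambdaPQ p p (ball c R) + ε) *
          ∫⁻ r in Ioi 0, ENNReal.ofReal (r ^ (N - 1)) * ‖v (c + r • (θ : EuclideanSpace ℝ (Fin N)))‖ₑ ^ p := by
    by_contra! hcon
    have := lintegral_mono (μ := (volume : Measure (EuclideanSpace ℝ (Fin N))).toSphere) hcon
    rw [lintegral_const_mul'] at this
    · exact absurd h (not_lt.2 this)
    · exact ENNReal.ofReal_ne_top
  have hθ1 : ‖(θ : EuclideanSpace ℝ (Fin N))‖ = 1 := by simp
  have hfd : ∀ r, HasDerivAt (fun r : ℝ => v (c + r • (θ : EuclideanSpace ℝ (Fin N))))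
      (fderiv ℝ v (c + r • (θ : EuclideanSpace ℝ (Fin N))) θ) r := by
    intro r
    have h1 : HasFDerivAt v _ (c + r • (θ : EuclideanSpace ℝ (Fin N))) := (hv.differentiable (by simp) _).hasFDerivAt
    have h2 : HasDerivAt (fun r : ℝ => c + r • (θ : EuclideanSpace ℝ (Fin N))) ((1:ℝ) • (θ : EuclideanSpace ℝ (Fin N))) r :=
      ((hasDerivAt_id r).smul_const _).const_add c
    have := h1.comp_hasDerivAt r h2
    rwa [one_smul] at this
  refine ⟨fun r => v (c + r • (θ : EuclideanSpace ℝ (Fin N))), ?_, ?_, ?_⟩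
  · have : ContDiff ℝ 1 v := hv.of_le (by exact_mod_cast le_top)
    exact this.comp (by fun_prop)
  · obtain ⟨R0, h0, h0'⟩ : ∃ R0 < R, tsupport v ⊆ closedBall c R0 := by
      rcases (tsupport v).eq_empty_or_nonempty with he | hne
      · exact ⟨0, hR, by simp [he]⟩
      · obtain ⟨x, hx, hmax⟩ := hcs.isCompact.exists_isMaxOn hne (continuous_id.dist (continuous_const (y := c))).continuousOn
        exact ⟨dist x c, hs hx, fun y hy => hmax hy⟩
    refine ⟨(max 0 R0 + R) / 2, ?_, ?_⟩
    · have := max_lt hR h0; linarith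
    · intro r hr
      apply image_eq_zero_of_notMem_tsupport
      intro hm
      have := h0' hm
      have hm0 := max_lt hR h0
      have h1 := le_max_left 0 R0
      have h2 := le_max_right 0 R0
      rw [mem_closedBall, dist_eq_norm, add_sub_cancel_left, norm_smul, hθ1, mul_one, Real.norm_of_nonneg (by linarith)] at this
      linarith
  · refine lt_of_le_of_lt ?_ hθ
    apply lintegral_mono
    intro r
    simp only []
    gcongr ENNReal.ofReal (r ^ (N - 1)) * ?_ ^ p
    rw [(hfd r).deriv, ← ofReal_norm, ← ofReal_norm]
    apply ENNReal.ofReal_le_ofReal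
    have := (fderiv ℝ v (c + r • (θ : EuclideanSpace ℝ (Fin N)))).le_opNorm θ
    rwa [hθ1, mul_one] at this

lemma near_U (p : ℝ) (hp : 1 < p) (c : EuclideanSpace ℝ (Fin N)) (R : ℝ) (hR : 0 < R) (ε : ℝ) (hε : 0 < ε) :
    ∃ U : ℝ → ℝ, ContDiff ℝ 1 U ∧ Antitone U ∧ (∀ r, 0 ≤ U r) ∧ (∃ R0 < R, ∀ r ≥ R0, U r = 0) ∧
      ∫⁻ r in Ioi 0, ENNReal.ofReal (r ^ (N - 1)) * ‖U r‖ₑ ^ p ≠ 0 ∧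
      ∫⁻ r in Ioi 0, ENNReal.ofReal (r ^ (N - 1)) * ‖U r‖ₑ ^ p ≠ ⊤ ∧
      ∫⁻ r in Ioi 0, ENNReal.ofReal (r ^ (N - 1)) * ‖deriv U r‖ₑ ^ p ≤
        ENNReal.ofReal (lambdaPQ p p (ball c R) + ε) * ∫⁻ r in Ioi 0, ENNReal.ofReal (r ^ (N - 1)) * ‖U r‖ₑ ^ p := by
  obtain ⟨f, hf, ⟨R0, hR0, hf0⟩, h⟩ := near_f p hp c R hR ε hε
  have hfc : Continuous (deriv f) := hf.continuous_deriv (by simp)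
  have hac : Continuous (fun t => |deriv f t|) := hfc.abs
  let U : ℝ → ℝ := fun r => - ∫ t in R..r, |deriv f t|
  have hUd : ∀ r, HasDerivAt U (-|deriv f r|) r := fun r =>
    (intervalIntegral.integral_hasDerivAt_right (hac.intervalIntegrable _ _) (hac.stronglyMeasurableAtFilter _ _)
      hac.continuousAt).neg
  have hdU : deriv U = fun r => -|deriv f r| := funext fun r => (hUd r).deriv
  have hU1 : ContDiff ℝ 1 U := by
    rw [contDiff_one_iff_deriv]
    refine ⟨fun r => (hUd r).differentiableAt, ?_⟩
    rw [hdU]; exact hac.neg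
  have hanti : Antitone U := by
    apply antitone_of_deriv_nonpos (fun r => (hUd r).differentiableAt)
    intro r; rw [hdU]; simp
  have hdz : ∀ r ∈ Ioi R0, deriv f r = 0 := by
    intro r hr
    have : f =ᶠ[𝓝 r] fun _ => 0 := by
      filter_upwards [Ioi_mem_nhds hr] with s hs using hf0 s (le_of_lt hs)
    rw [this.deriv_eq, deriv_const]
  have hz : ∀ r ≥ R0, U r = 0 := by
    intro r hr
    have : ∫ t in R..r, |deriv f t| = ∫ t in R..r, (0:ℝ) := by
      apply intervalIntegral.integral_congr_ae
      apply Eventually.of_forall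
      intro t ht
      rw [hdz t, abs_zero]
      rw [mem_Ioi]
      rw [mem_uIoc] at ht
      rcases ht with ht | ht <;> linarith
    simp only [U]
    rw [this]; simp
  have hnn : ∀ r, 0 ≤ U r := by
    intro r
    rw [← hz (max r R0) (le_max_right _ _)]
    exact hanti (le_max_left _ _)
  have hge : ∀ r, |f r| ≤ U r := by
    intro r
    rcases le_total R0 r with h' | h'
    · rw [hf0 r h', abs_zero]; exact hnn r
    · have e1 : f R - f r = ∫ t in r..R, deriv f t := by
        rw [intervalIntegral.integral_deriv_eq_sub (fun x _ => hf.differentiable (by simp) x) (hfc.intervalIntegrable _ _)]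
      rw [hf0 R hR0.le, zero_sub] at e1
      rw [← abs_neg, e1]
      simp only [U]
      rw [← intervalIntegral.integral_symm]
      exact intervalIntegral.abs_integral_le_integral_abs (by linarith)
  have hle : ∫⁻ r in Ioi 0, ENNReal.ofReal (r ^ (N - 1)) * ‖f r‖ₑ ^ p ≤ ∫⁻ r in Ioi 0, ENNReal.ofReal (r ^ (N - 1)) * ‖U r‖ₑ ^ p := by
    apply lintegral_mono
    intro r
    simp only []
    gcongr ENNReal.ofReal (r ^ (N - 1)) * ?_ ^ p
    rw [← ofReal_norm, ← ofReal_norm]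
    apply ENNReal.ofReal_le_ofReal
    exact (hge r).trans (le_abs_self _)
  refine ⟨U, hU1, hanti, hnn, ⟨R0, hR0, hz⟩, ?_, ?_, ?_⟩
  · intro h0
    rw [h0] at hle
    rw [nonpos_iff_eq_zero.1 hle, mul_zero] at h
    exact absurd h (by simp)
  · apply ne_top_of_le_ne_top (b := ∫⁻ r in Ioo 0 R, (ENNReal.ofReal (R ^ (N - 1)) * ‖U 0‖ₑ ^ p))
    · rw [setLIntegral_const]
      apply ENNReal.mul_ne_top
      · exact ENNReal.mul_ne_top ENNReal.ofReal_ne_top (ENNReal.rpow_ne_top_of_nonneg (by linarith) (by simp))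
      · simp
    · rw [← lintegral_indicator measurableSet_Ioi, ← lintegral_indicator measurableSet_Ioo]
      apply lintegral_mono
      intro r
      by_cases h1 : r ∈ Ioi (0:ℝ)
      · rw [indicator_of_mem h1]
        rw [mem_Ioi] at h1
        by_cases h2 : r < R
        · rw [indicator_of_mem (by exact ⟨h1, h2⟩)]
          gcongr ENNReal.ofReal (?_ ^ _) * ?_ ^ p
          · rw [← ofReal_norm, ← ofReal_norm]
            apply ENNReal.ofReal_le_ofReal
            rw [Real.norm_of_nonneg (hnn _), Real.norm_of_nonneg (hnn _)]
            exact hanti h1.le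
        · rw [hz r (by linarith)]
          simp [show 0 < p by linarith]
      · rw [indicator_of_notMem h1]; exact zero_le
  · calc _ = ∫⁻ r in Ioi 0, ENNReal.ofReal (r ^ (N - 1)) * ‖deriv f r‖ₑ ^ p := by
          apply lintegral_congr; intro r; rw [hdU]; simp
      _ ≤ _ := h.le
      _ ≤ _ := by gcongr

end DC
end

section
open Filter Topology ENNReal NNReal
namespace DC
variable {N : ℕ} [NeZero N]

lemma enle {F G : Type*} [SeminormedAddCommGroup F] [SeminormedAddCommGroup G] {a : F} {b : G} (h : ‖a‖ ≤ ‖b‖) : ‖a‖ₑ ≤ ‖b‖ₑ := by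
  rw [← ofReal_norm, ← ofReal_norm]; exact ENNReal.ofReal_le_ofReal h

lemma lam_pos (p : ℝ) (hp : 1 < p) (c : EuclideanSpace ℝ (Fin N)) (R : ℝ) (hR : 0 < R) :
    0 < lambdaPQ p p (ball c R) := by
  suffices h : (R ^ p)⁻¹ ≤ lambdaPQ p p (ball c R) from lt_of_lt_of_le (by positivity) h
  apply _root_.le_of_forall_pos_le_add
  intro ε hε
  obtain ⟨U, hU1, hanti, hnn, ⟨R0, hR0, hz⟩, hM0, hMt, hD⟩ := near_U p hp c R hR ε hε
  set M := ∫⁻ r in Ioi 0, ENNReal.ofReal (r ^ (N - 1)) * ‖U r‖ₑ ^ p with hM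
  set D := ∫⁻ r in Ioi 0, ENNReal.ofReal (r ^ (N - 1)) * ‖deriv U r‖ₑ ^ p with hDd
  have hUR : U R = 0 := hz R hR0.le
  have hl := lam_nonneg p (ball c R)
  have key : M ≤ ENNReal.ofReal (R ^ p) * D := by
    calc M ≤ ∫⁻ r in Ioo 0 R, (ENNReal.ofReal (R ^ (p - 1)) * D) := by
          rw [hM, ← lintegral_indicator measurableSet_Ioi, ← lintegral_indicator measurableSet_Ioo]
          apply lintegral_mono
          intro r
          by_cases h1 : r ∈ Ioi (0:ℝ)
          · rw [indicator_of_mem h1]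
            rw [mem_Ioi] at h1
            by_cases h2 : r < R
            · rw [indicator_of_mem (by exact ⟨h1, h2⟩)]
              have hj := jensen1 U hU1 r R h2.le p hp
              rw [hUR, zero_sub, enorm_neg] at hj
              calc _ ≤ ENNReal.ofReal (r ^ (N - 1)) * (ENNReal.ofReal ((R - r) ^ (p - 1)) * ∫⁻ t in Ioc r R, ‖deriv U t‖ₑ ^ p) := by
                    gcongr
                _ = ENNReal.ofReal ((R - r) ^ (p - 1)) * ∫⁻ t in Ioc r R, ENNReal.ofReal (r ^ (N - 1)) * ‖deriv U t‖ₑ ^ p := by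
                    rw [lintegral_const_mul' _ _ ENNReal.ofReal_ne_top]; ring
                _ ≤ ENNReal.ofReal (R ^ (p - 1)) * ∫⁻ t in Ioc r R, ENNReal.ofReal (t ^ (N - 1)) * ‖deriv U t‖ₑ ^ p := by
                    gcongr ?_ * ?_
                    · apply ENNReal.ofReal_le_ofReal
                      exact Real.rpow_le_rpow (by linarith) (by linarith) (by linarith)
                    · apply setLIntegral_mono' measurableSet_Ioc
                      intro t ht
                      gcongr ENNReal.ofReal (?_ ^ _) * _
                      exact ht.1.le
                _ ≤ _ := by
                    gcongr
                    apply lintegral_mono_set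
                    intro t ht
                    exact h1.trans ht.1
            · rw [hz r (by linarith)]
              simp [show 0 < p by linarith]
          · rw [indicator_of_notMem h1]; exact zero_le
      _ = ENNReal.ofReal (R ^ p) * D := by
          rw [setLIntegral_const, Real.volume_Ioo, sub_zero, mul_right_comm, ← ENNReal.ofReal_mul (by positivity),
            ← Real.rpow_add_one hR.ne', sub_add_cancel]
  have k2 : M * 1 ≤ M * ENNReal.ofReal (R ^ p * (lambdaPQ p p (ball c R) + ε)) := by
    rw [mul_one, ENNReal.ofReal_mul (by positivity), mul_comm M, mul_assoc]
    exact key.trans (by gcongr)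
  rw [ENNReal.mul_le_mul_iff_right hM0 hMt, ENNReal.one_le_ofReal] at k2
  rw [inv_le_iff_one_le_mul₀ (by positivity), mul_comm]
  exact k2

lemma prof (p : ℝ) (hp : 1 < p) (c : EuclideanSpace ℝ (Fin N)) (R : ℝ) (hR : 0 < R) (ε : ℝ) (hε : 0 < ε) :
    ∃ (U : ℝ → ℝ) (M : ℝ≥0∞), ContDiff ℝ 1 U ∧ Antitone U ∧ (∀ r, 0 ≤ U r) ∧ (∃ R0 < R, ∀ r ≥ R0, U r = 0) ∧
      M ≠ 0 ∧ M ≠ ⊤ ∧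
      (∀ b > 0, ∀ ρ, ∫⁻ r in Ioo 0 ρ, ENNReal.ofReal (r ^ (N - 1)) * ‖deriv U (b * r)‖ₑ ^ p ≤
        ENNReal.ofReal (lambdaPQ p p (ball c R)) * (∫⁻ r in Ioo 0 ρ, ENNReal.ofReal (r ^ (N - 1)) * ‖U (b * r)‖ₑ ^ p) +
          ENNReal.ofReal ((b ^ N)⁻¹ * ε) * M) ∧
      (∀ b > 0, ∀ ρ > 0, b * ρ ≤ R → ENNReal.ofReal ((ρ / R) ^ N) * M ≤
        ∫⁻ r in Ioo 0 ρ, ENNReal.ofReal (r ^ (N - 1)) * ‖U (b * r)‖ₑ ^ p) := by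
  obtain ⟨U, hU1, hanti, hnn, ⟨R0, hR0, hz⟩, hM0, hMt, hD⟩ := near_U p hp c R hR ε hε
  have hUR : U R = 0 := hz R hR0.le
  have hl := lam_nonneg p (ball c R)
  have hN1 : N - 1 + 1 = N := Nat.sub_add_cancel (NeZero.one_le)
  have hcU := hU1.continuous
  have hcU' : Continuous (deriv U) := hU1.continuous_deriv (by simp)
  have hm1 : Measurable (fun r => ‖U r‖ₑ ^ p) := hcU.measurable.enorm.pow_const p
  have hm2 : Measurable (fun r => ‖deriv U r‖ₑ ^ p) := hcU'.measurable.enorm.pow_const p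
  set M := ∫⁻ r in Ioi 0, ENNReal.ofReal (r ^ (N - 1)) * ‖U r‖ₑ ^ p with hM
  set D := ∫⁻ r in Ioi 0, ENNReal.ofReal (r ^ (N - 1)) * ‖deriv U r‖ₑ ^ p with hDd
  have hMB : ∀ ρ ≥ R, M ≤ ∫⁻ r in Ioo 0 ρ, ENNReal.ofReal (r ^ (N - 1)) * ‖U r‖ₑ ^ p := by
    intro ρ hρ
    rw [hM, ← lintegral_indicator measurableSet_Ioi, ← lintegral_indicator measurableSet_Ioo]
    apply lintegral_mono
    intro r
    by_cases h1 : r ∈ Ioi (0:ℝ)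
    · rw [indicator_of_mem h1]
      by_cases h2 : r < ρ
      · rw [indicator_of_mem (by exact ⟨h1, h2⟩)]
      · rw [hz r (by linarith)]
        simp [show 0 < p by linarith]
    · rw [indicator_of_notMem h1]; exact zero_le
  have hD' : D ≤ ENNReal.ofReal (lambdaPQ p p (ball c R)) * M + ENNReal.ofReal ε * M := by
    rw [← add_mul, ← ENNReal.ofReal_add hl hε.le]; exact hD
  have hDt : D ≠ ⊤ := ne_top_of_le_ne_top (ENNReal.mul_ne_top ENNReal.ofReal_ne_top hMt) hD
  have L5 : ∀ ρ, ∫⁻ r in Ioo 0 ρ, ENNReal.ofReal (r ^ (N - 1)) * ‖deriv U r‖ₑ ^ p ≤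
        ENNReal.ofReal (lambdaPQ p p (ball c R)) * (∫⁻ r in Ioo 0 ρ, ENNReal.ofReal (r ^ (N - 1)) * ‖U r‖ₑ ^ p) +
          ENNReal.ofReal ε * M := by
    intro ρ
    rcases le_or_gt ρ 0 with h0 | h0
    · simp [Ioo_eq_empty (not_lt.2 h0)]
    rcases le_or_gt R ρ with h1 | h1
    · calc _ ≤ D := lintegral_mono_set (fun x hx => hx.1)
        _ ≤ _ := hD'
        _ ≤ _ := by gcongr; exact hMB ρ h1
    · have ho := oneD p hp c R hR U hU1 hUR ρ h0.le h1.le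
      set E := ∫⁻ r in Ioo ρ R, ENNReal.ofReal (r ^ (N - 1)) * ‖deriv U r‖ₑ ^ p with hE
      have hEt : E ≠ ⊤ := ne_top_of_le_ne_top hDt (lintegral_mono_set (fun x hx => h0.trans hx.1))
      have hsum : (∫⁻ r in Ioo 0 ρ, ENNReal.ofReal (r ^ (N - 1)) * ‖deriv U r‖ₑ ^ p) + E ≤ D := by
        rw [hE, ← lintegral_union measurableSet_Ioo]
        · apply lintegral_mono_set
          rintro x (hx | hx)
          · exact hx.1
          · exact h0.trans hx.1
        · rw [Set.disjoint_left]
          intro x hx hx'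
          exact absurd hx.2 (not_lt.2 hx'.1.le)
      have hMs : M ≤ (∫⁻ r in Ioo 0 ρ, ENNReal.ofReal (r ^ (N - 1)) * ‖U r‖ₑ ^ p) +
          ∫⁻ r in Ioo 0 R, ENNReal.ofReal (r ^ (N - 1)) * ‖U (max r ρ)‖ₑ ^ p := by
        refine (hMB R le_rfl).trans ?_
        rw [← lintegral_indicator measurableSet_Ioo, ← lintegral_indicator measurableSet_Ioo,
          ← lintegral_indicator measurableSet_Ioo, ← lintegral_add_left]
        · apply lintegral_mono
          intro r
          by_cases h2 : r ∈ Ioo 0 R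
          · simp only []
            rw [indicator_of_mem h2, indicator_of_mem h2]
            by_cases h3 : r < ρ
            · rw [indicator_of_mem (by exact ⟨h2.1, h3⟩)]
              exact le_self_add
            · rw [max_eq_left (not_lt.1 h3)]
              exact le_add_self
          · rw [indicator_of_notMem h2]; exact zero_le
        · apply Measurable.indicator _ measurableSet_Ioo
          fun_prop
      have : (∫⁻ r in Ioo 0 ρ, ENNReal.ofReal (r ^ (N - 1)) * ‖deriv U r‖ₑ ^ p) + E ≤
        (ENNReal.ofReal (lambdaPQ p p (ball c R)) * (∫⁻ r in Ioo 0 ρ, ENNReal.ofReal (r ^ (N - 1)) * ‖U r‖ₑ ^ p) +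
          ENNReal.ofReal ε * M) + E := by
        calc _ ≤ D := hsum
          _ ≤ ENNReal.ofReal (lambdaPQ p p (ball c R)) * M + ENNReal.ofReal ε * M := hD'
          _ ≤ ENNReal.ofReal (lambdaPQ p p (ball c R)) * ((∫⁻ r in Ioo 0 ρ, ENNReal.ofReal (r ^ (N - 1)) * ‖U r‖ₑ ^ p) +
              ∫⁻ r in Ioo 0 R, ENNReal.ofReal (r ^ (N - 1)) * ‖U (max r ρ)‖ₑ ^ p) + ENNReal.ofReal ε * M := by gcongr
          _ ≤ ENNReal.ofReal (lambdaPQ p p (ball c R)) * (∫⁻ r in Ioo 0 ρ, ENNReal.ofReal (r ^ (N - 1)) * ‖U r‖ₑ ^ p) +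
              E + ENNReal.ofReal ε * M := by rw [mul_add]; gcongr
          _ = _ := by rw [add_right_comm]
      exact (ENNReal.add_le_add_iff_right hEt).1 this
  refine ⟨U, M, hU1, hanti, hnn, ⟨R0, hR0, hz⟩, hM0, hMt, ?_, ?_⟩
  · intro b hb ρ
    have s1 := scale1 (fun r => ‖deriv U r‖ₑ ^ p) hm2 (N - 1) b ρ hb
    have s2 := scale1 (fun r => ‖U r‖ₑ ^ p) hm1 (N - 1) b ρ hb
    simp only [hN1] at s1 s2
    rw [s1, s2]
    refine (mul_le_mul_right (L5 (b * ρ)) _).trans (le_of_eq ?_)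
    rw [ENNReal.ofReal_mul (by positivity)]
    ring
  · intro b hb ρ hρ hbρ
    have s2 := scale1 (fun r => ‖U r‖ₑ ^ p) hm1 (N - 1) (R / ρ) ρ (by positivity)
    simp only [hN1] at s2
    rw [div_mul_cancel₀ _ hρ.ne', ← inv_pow, inv_div] at s2
    calc _ ≤ _ := mul_le_mul_right (hMB R le_rfl) _
      _ = _ := s2.symm
      _ ≤ _ := by
        apply setLIntegral_mono' measurableSet_Ioo
        intro r hr
        gcongr ENNReal.ofReal (r ^ (N - 1)) * ?_ ^ p
        apply enle
        rw [Real.norm_of_nonneg (hnn _), Real.norm_of_nonneg (hnn _)]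
        apply hanti
        have : b ≤ R / ρ := by rwa [le_div_iff₀ hρ]
        exact mul_le_mul_of_nonneg_right this hr.1.le

end DC
end

section
open Filter Topology ENNReal NNReal
namespace DC
variable {N : ℕ} [NeZero N]

lemma slice (Ω : Set (EuclideanSpace ℝ (Fin N))) (ho : IsOpen Ω) (hb : Bornology.IsBounded Ω) (hc : Convex ℝ Ω)
    (x0 : EuclideanSpace ℝ (Fin N)) (hx0 : x0 ∈ closure Ω) (θ : EuclideanSpace ℝ (Fin N)) (hθ : ‖θ‖ = 1) (n : ℕ) :
    ∃ ρ : ℝ, (∀ F : EuclideanSpace ℝ (Fin N) → ℝ≥0∞, ∫⁻ r in Ioi 0, ENNReal.ofReal (r ^ n) * Ω.indicator F (x0 + r • θ) =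
      ∫⁻ r in Ioo 0 ρ, ENNReal.ofReal (r ^ n) * F (x0 + r • θ)) ∧ ∀ r > 0, x0 + r • θ ∈ Ω → r ≤ ρ := by
  let I : Set ℝ := {r | 0 < r ∧ x0 + r • θ ∈ Ω}
  have hbd : BddAbove I := by
    obtain ⟨C, hC⟩ := hb.subset_closedBall x0
    refine ⟨C, fun r hr => ?_⟩
    have := hC hr.2
    rwa [mem_closedBall, dist_eq_norm, add_sub_cancel_left, norm_smul, hθ, mul_one, Real.norm_of_nonneg hr.1.le] at this
  have hlow : ∀ r ∈ I, ∀ s, 0 < s → s < r → s ∈ I := by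
    intro r hr s hs hsr
    refine ⟨hs, ?_⟩
    have h1 := hc.openSegment_closure_interior_subset_interior hx0 (by rw [ho.interior_eq]; exact hr.2)
    rw [ho.interior_eq] at h1
    apply h1
    have hr0 := hr.1
    refine ⟨1 - s / r, s / r, ?_, by positivity, by ring, ?_⟩
    · rw [sub_pos, div_lt_one hr0]; exact hsr
    · rw [smul_add, smul_smul, div_mul_cancel₀ _ hr0.ne', ← add_assoc, ← add_smul]
      simp
  have hIm : MeasurableSet I := by
    have h2 : IsOpen I := (isOpen_lt continuous_const continuous_id).inter (ho.preimage (by fun_prop))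
    exact h2.measurableSet
  have e0 : ∀ F : EuclideanSpace ℝ (Fin N) → ℝ≥0∞, ∫⁻ r in Ioi 0, ENNReal.ofReal (r ^ n) * Ω.indicator F (x0 + r • θ) =
      ∫⁻ r in I, ENNReal.ofReal (r ^ n) * F (x0 + r • θ) := by
    intro F
    rw [← lintegral_indicator measurableSet_Ioi, ← lintegral_indicator hIm]
    congr 1
    ext r
    by_cases h0 : 0 < r
    · rw [indicator_of_mem (by exact h0)]
      by_cases h1 : x0 + r • θ ∈ Ω
      · rw [indicator_of_mem h1, indicator_of_mem (by exact ⟨h0, h1⟩)]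
      · rw [indicator_of_notMem h1, indicator_of_notMem (fun h => h1 h.2), mul_zero]
    · rw [indicator_of_notMem (by exact h0), indicator_of_notMem (fun h => h0 h.1)]
  refine ⟨sSup I, ?_, fun r hr h => le_csSup hbd ⟨hr, h⟩⟩
  intro F
  rw [e0]
  apply le_antisymm
  · rw [setLIntegral_congr Ioo_ae_eq_Ioc]
    exact lintegral_mono_set fun r hr => ⟨hr.1, le_csSup hbd hr⟩
  · apply lintegral_mono_set
    intro r hr
    have hne : I.Nonempty := by
      by_contra h
      rw [not_nonempty_iff_eq_empty] at h
      rw [h, Real.sSup_empty] at hr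
      exact absurd hr.1 (not_lt.2 hr.2.le)
    obtain ⟨s, hs, hrs⟩ := exists_lt_of_lt_csSup hne hr.2
    exact hlow s hs r hr.1 hrs

lemma exists_kappa (hN : 2 ≤ N) (Ω : Set (EuclideanSpace ℝ (Fin N))) (ho : IsOpen Ω) (hne : Ω.Nonempty)
    (x0 e : EuclideanSpace ℝ (Fin N)) (he : ‖e‖ = 1) :
    ∃ κ : ℝ, 0 < κ ∧ κ < 1 ∧ ∃ y ∈ Ω, inner ℝ (y - x0) e < κ * ‖y - x0‖ := by
  have h1 : ∃ y ∈ Ω, inner ℝ (y - x0) e < ‖y - x0‖ := by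
    by_contra! hcon
    have hs : ∀ y ∈ Ω, y - x0 ∈ Submodule.span ℝ {e} := by
      intro y hy
      have h2 : inner ℝ (y - x0) e = ‖y - x0‖ * ‖e‖ := by
        apply le_antisymm (real_inner_le_norm _ _)
        rw [he, mul_one]; exact hcon y hy
      rw [inner_eq_norm_mul_iff_real, he, one_smul] at h2
      rw [h2]
      exact Submodule.smul_mem _ _ (Submodule.mem_span_singleton_self e)
    have : ∃ u, u ∉ Submodule.span ℝ {e} := by
      by_contra! h
      have h3 : Submodule.span ℝ {e} = ⊤ := by rw [eq_top_iff]; exact fun u _ => h u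
      have h4 := finrank_span_singleton (K := ℝ) (v := e) (by intro h0; simp [h0] at he)
      rw [h3, finrank_top] at h4
      simp at h4
      omega
    obtain ⟨u, hu⟩ := this
    obtain ⟨y, hy⟩ := hne
    have : ∀ᶠ t in 𝓝[>] (0:ℝ), y + t • u ∈ Ω := by
      apply Filter.Eventually.filter_mono nhdsWithin_le_nhds
      have hcont : Continuous (fun t : ℝ => y + t • u) := by fun_prop
      exact hcont.continuousAt.eventually_mem (by simpa using ho.mem_nhds hy)
    obtain ⟨t, ht, ht0⟩ := (this.and self_mem_nhdsWithin).exists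
    have h5 := Submodule.sub_mem _ (hs _ ht) (hs y hy)
    have h6 : y + t • u - x0 - (y - x0) = t • u := by abel
    rw [h6, Submodule.smul_mem_iff _ (ne_of_gt ht0)] at h5
    exact hu h5
  obtain ⟨y, hy, hlt⟩ := h1
  have hpos : 0 < ‖y - x0‖ := by
    rw [norm_pos_iff]; intro h; simp [h] at hlt
  refine ⟨(max (inner ℝ (y - x0) e / ‖y - x0‖) 0 + 1) / 2, ?_, ?_, y, hy, ?_⟩
  · have := le_max_right (inner ℝ (y - x0) e / ‖y - x0‖) 0
    linarith
  · have := max_lt ((div_lt_one hpos).2 hlt) one_pos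
    linarith
  · rw [← div_lt_iff₀ hpos]
    have h2 := max_lt ((div_lt_one hpos).2 hlt) one_pos
    have h3 := le_max_left (inner ℝ (y - x0) e / ‖y - x0‖) 0
    linarith

end DC
end

section
open Filter Topology ENNReal NNReal
namespace DC
variable {N : ℕ} [NeZero N]

lemma cone_test (hN : 2 ≤ N) (p : ℝ) (hp : 1 < p) (c : EuclideanSpace ℝ (Fin N)) (R : ℝ) (hR : 0 < R)
    (Ω : Set (EuclideanSpace ℝ (Fin N))) (ho : IsOpen Ω) (hb : Bornology.IsBounded Ω) (hc : Convex ℝ Ω) (hne : Ω.Nonempty)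
    (x0 : EuclideanSpace ℝ (Fin N)) (hx0 : x0 ∈ closure Ω) (e : EuclideanSpace ℝ (Fin N)) (he : ‖e‖ = 1)
    (τ : ℝ) (hτ : 0 < τ) :
    ∃ φ : EuclideanSpace ℝ (Fin N) → ℝ, (∃ K : ℝ≥0, LipschitzWith K φ) ∧ (∀ x, 0 ≤ φ x) ∧
      (∃ δ > 0, ∀ x, R / τ - δ ≤ inner ℝ (x - x0) e → φ x = 0) ∧
      ∫⁻ x in Ω, ‖φ x‖ₑ ^ p ≠ 0 ∧ ∫⁻ x in Ω, ‖φ x‖ₑ ^ p ≠ ⊤ ∧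
      ∫⁻ x in Ω, ‖fderiv ℝ φ x‖ₑ ^ p < ENNReal.ofReal (lambdaPQ p p (ball c R) * τ ^ p) * ∫⁻ x in Ω, ‖φ x‖ₑ ^ p := by
  have hp0 : 0 ≤ p := by linarith
  have hvol : volume Ω ≠ ⊤ := hb.measure_lt_top.ne
  obtain ⟨κ, hκ0, hκ1, y, hy, hyκ⟩ := exists_kappa hN Ω ho hne x0 e he
  set σ := (volume : Measure (EuclideanSpace ℝ (Fin N))).toSphere with hσ
  have hlam := lam_pos p hp c R hR
  set lam := lambdaPQ p p (ball c R) with hlamd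
  -- the open set of directions
  set ρ0 := ‖y - x0‖ with hρ0
  have hρ0p : 0 < ρ0 := by
    rw [hρ0, norm_pos_iff]; intro h
    rw [hρ0, h] at hyκ
    simp at hyκ
  let Θ : Set (sphere (0 : EuclideanSpace ℝ (Fin N)) 1) :=
    {θ | inner ℝ (θ : EuclideanSpace ℝ (Fin N)) e < κ ∧ x0 + ρ0 • (θ : EuclideanSpace ℝ (Fin N)) ∈ Ω}
  have hΘo : IsOpen Θ := by
    have h1 : Continuous (fun θ : sphere (0 : EuclideanSpace ℝ (Fin N)) 1 => inner ℝ (θ : EuclideanSpace ℝ (Fin N)) e) := by fun_prop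
    have h2 : Continuous (fun θ : sphere (0 : EuclideanSpace ℝ (Fin N)) 1 => x0 + ρ0 • (θ : EuclideanSpace ℝ (Fin N))) := by fun_prop
    exact (isOpen_lt h1 continuous_const).inter (ho.preimage h2)
  have hΘn : Θ.Nonempty := by
    refine ⟨⟨ρ0⁻¹ • (y - x0), ?_⟩, ?_, ?_⟩
    · rw [mem_sphere_zero_iff_norm, norm_smul, norm_inv, norm_norm, inv_mul_cancel₀ hρ0p.ne']
    · simp only [inner_smul_left]
      simp only [map_inv₀, conj_trivial]
      rw [inv_mul_lt_iff₀ hρ0p, mul_comm]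
      exact hyκ
    · simp only [smul_smul, mul_inv_cancel₀ hρ0p.ne', one_smul, add_sub_cancel]
      exact hy
  have hΘp : 0 < σ Θ := hΘo.measure_pos σ hΘn
  have hΘt : σ Θ ≠ ⊤ := measure_ne_top _ _
  have hSt : σ univ ≠ ⊤ := measure_ne_top _ _
  let ρ' := min ρ0 (R / (τ * κ))
  have hρ' : 0 < ρ' := lt_min hρ0p (by positivity)
  have hρ'1 : ρ' ≤ ρ0 := min_le_left _ _
  have hρ'2 : τ * κ * ρ' ≤ R := by
    have : ρ' ≤ R / (τ * κ) := min_le_right _ _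
    rwa [le_div_iff₀ (by positivity), mul_comm] at this
  have hκp : κ ^ p < 1 := Real.rpow_lt_one hκ0.le hκ1 (by linarith)
  have hκp0 : 0 < κ ^ p := by positivity
  -- choice of epsilon
  obtain ⟨ε, hε, hεc⟩ : ∃ ε > 0, ((τ * κ) ^ N)⁻¹ * ε * (σ univ).toReal < lam * ((1 - κ ^ p) * ((σ Θ).toReal * (ρ' / R) ^ N)) := by
    have h1 : 0 < lam * ((1 - κ ^ p) * ((σ Θ).toReal * (ρ' / R) ^ N)) := by
      have := ENNReal.toReal_pos hΘp.ne' hΘt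
      have : 0 < 1 - κ ^ p := by linarith
      positivity
    set A := lam * ((1 - κ ^ p) * ((σ Θ).toReal * (ρ' / R) ^ N))
    set B := ((τ * κ) ^ N)⁻¹ * (σ univ).toReal
    have hB : 0 ≤ B := by positivity
    refine ⟨A / (B + 1), by positivity, ?_⟩
    rw [show ((τ * κ) ^ N)⁻¹ * (A / (B + 1)) * (σ univ).toReal = A * (B / (B + 1)) by
      simp only [B]; ring]
    have : B / (B + 1) < 1 := by rw [div_lt_one (by positivity)]; linarith
    nlinarith
  obtain ⟨U, M, hU1, hanti, hnn, ⟨R0, hR0, hz⟩, hM0, hMt, hup, hlow⟩ := prof p hp c R hR ε hε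
  have hcU := hU1.continuous
  have hcU' : Continuous (deriv U) := hU1.continuous_deriv (by simp)
  let η0 : EuclideanSpace ℝ (Fin N) → ℝ := fun x => max (κ * ‖x - x0‖) (inner ℝ (x - x0) e)
  have hη0c : Continuous η0 := by fun_prop
  have hη0n : ∀ x, 0 ≤ η0 x := fun x => le_max_of_le_left (by positivity)
  have hη0l : ∀ x y, |η0 y - η0 x| ≤ ‖y - x‖ := by
    intro x y
    refine (abs_max_sub_max_le_max _ _ _ _).trans (max_le ?_ ?_)
    · rw [← mul_sub, abs_mul, abs_of_pos hκ0]
      have h1 := abs_norm_sub_norm_le (y - x0) (x - x0)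
      rw [sub_sub_sub_cancel_right] at h1
      nlinarith [abs_nonneg (‖y - x0‖ - ‖x - x0‖), norm_nonneg (y - x)]
    · rw [← inner_sub_left, sub_sub_sub_cancel_right]
      have := abs_real_inner_le_norm (y - x) e
      rwa [he, mul_one] at this
  let φ : EuclideanSpace ℝ (Fin N) → ℝ := fun x => U (τ * η0 x)
  have hφc : Continuous φ := by fun_prop
  let K1 : Set (EuclideanSpace ℝ (Fin N)) := {x | inner ℝ (x - x0) e < κ * ‖x - x0‖}
  have hK1 : IsOpen K1 := isOpen_lt (by fun_prop) (by fun_prop)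
  let k : EuclideanSpace ℝ (Fin N) → ℝ≥0∞ := fun x => if inner ℝ (x - x0) e < κ * ‖x - x0‖ then ENNReal.ofReal (κ ^ p) else 1
  have hkm : Measurable k := Measurable.ite hK1.measurableSet measurable_const measurable_const
  have hklip : ∃ K : ℝ≥0, LipschitzWith K φ := by
    obtain ⟨C, hC⟩ : ∃ C, ∀ x ∈ Icc 0 R, ‖deriv U x‖ ≤ C :=
      isCompact_Icc.exists_bound_of_continuousOn hcU'.continuousOn
    have hflip : LipschitzOnWith C.toNNReal U (Icc 0 R) := by
      apply Convex.lipschitzOnWith_of_nnnorm_deriv_le (𝕜 := ℝ) (fun x _ => hU1.differentiable (by simp) x) _ (convex_Icc _ _)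
      intro x hx
      rw [← norm_toNNReal]
      exact Real.toNNReal_le_toNNReal (hC x hx)
    have hη1 : LipschitzWith τ.toNNReal (fun x => τ * η0 x) := by
      apply LipschitzWith.of_dist_le_mul
      intro x y
      rw [Real.dist_eq, ← mul_sub, abs_mul, abs_of_pos hτ, Real.coe_toNNReal _ hτ.le, dist_eq_norm]
      have := hη0l y x
      gcongr
    have heq : φ = fun x => U (min (τ * η0 x) R) := by
      ext x
      rcases le_total (τ * η0 x) R with h | h
      · rw [min_eq_left h]
      · rw [min_eq_right h]
        simp only [φ]
        rw [hz _ (by linarith), hz R hR0.le]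
    refine ⟨C.toNNReal * τ.toNNReal, ?_⟩
    rw [heq, ← lipschitzOnWith_univ]
    apply hflip.comp (hη1.min_const R).lipschitzOnWith
    intro x _
    exact ⟨le_min (mul_nonneg hτ.le (hη0n x)) hR.le, min_le_right _ _⟩
  have hΩm := ho.measurableSet
  have hXt : ∫⁻ x in Ω, ‖φ x‖ₑ ^ p ≠ ⊤ := by
    apply fin_bdd φ p hp0 Ω hvol hΩm (U 0)
    intro x _
    rw [Real.norm_of_nonneg (hnn _)]
    exact hanti (mul_nonneg hτ.le (hη0n x))
  have hmU : Measurable (fun x => ‖φ x‖ₑ ^ p) := hφc.measurable.enorm.pow_const p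
  have hmU' : Measurable (fun x => ‖deriv U (τ * η0 x)‖ₑ ^ p) :=
    (hcU'.comp (continuous_const.mul hη0c)).measurable.enorm.pow_const p
  have hmk : Measurable (fun x => k x * ‖φ x‖ₑ ^ p) := hkm.mul hmU
  have hmk' : Measurable (fun x => k x * ‖deriv U (τ * η0 x)‖ₑ ^ p) := hkm.mul hmU'
  -- claim 1
  have c1 : ∫⁻ x in Ω, ‖fderiv ℝ φ x‖ₑ ^ p ≤ ENNReal.ofReal (τ ^ p) * ∫⁻ x in Ω, k x * ‖deriv U (τ * η0 x)‖ₑ ^ p := by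
    rw [← lintegral_const_mul _ hmk']
    apply lintegral_mono
    intro x
    simp only [k]
    split_ifs with hx
    · have h1 := fderiv_comp_le U (fun x => τ * η0 x) x (τ * κ) (by positivity) (hU1.differentiable (by simp) _) (by
        filter_upwards [hK1.mem_nhds hx] with z hz
        have e1 : η0 z = κ * ‖z - x0‖ := max_eq_left (le_of_lt hz)
        have e2 : η0 x = κ * ‖x - x0‖ := max_eq_left (le_of_lt hx)
        rw [e1, e2, ← mul_sub, ← mul_sub, abs_mul, abs_mul, abs_of_pos hτ, abs_of_pos hκ0, mul_assoc]
        have h1 := abs_norm_sub_norm_le (z - x0) (x - x0)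
        rw [sub_sub_sub_cancel_right] at h1
        gcongr)
      calc ‖fderiv ℝ φ x‖ₑ ^ p ≤ (ENNReal.ofReal (|deriv U (τ * η0 x)| * (τ * κ))) ^ p := by
            gcongr
            rw [← ofReal_norm]
            exact ENNReal.ofReal_le_ofReal h1
        _ = _ := by
            rw [enorm_rpow_eq _ _ hp0, ENNReal.ofReal_rpow_of_nonneg (by positivity) hp0, Real.norm_eq_abs,
              ← ENNReal.ofReal_mul (by positivity), ← ENNReal.ofReal_mul (by positivity),
              Real.mul_rpow (by positivity) (by positivity), Real.mul_rpow (by positivity) (by positivity)]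
            congr 1; ring
    · have h1 := fderiv_comp_le U (fun x => τ * η0 x) x τ (by positivity) (hU1.differentiable (by simp) _) (by
        apply Eventually.of_forall
        intro z
        rw [← mul_sub, abs_mul, abs_of_pos hτ]
        have := hη0l x z
        gcongr)
      calc ‖fderiv ℝ φ x‖ₑ ^ p ≤ (ENNReal.ofReal (|deriv U (τ * η0 x)| * τ)) ^ p := by
            gcongr
            rw [← ofReal_norm]
            exact ENNReal.ofReal_le_ofReal h1
        _ = _ := by
            rw [enorm_rpow_eq _ _ hp0, ENNReal.ofReal_rpow_of_nonneg (by positivity) hp0, Real.norm_eq_abs, one_mul,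
              ← ENNReal.ofReal_mul (by positivity),
              Real.mul_rpow (by positivity) (by positivity)]
            congr 1; ring
  -- values along rays
  have ray1 : ∀ (θ : sphere (0 : EuclideanSpace ℝ (Fin N)) 1) (r : ℝ), 0 < r →
      τ * η0 (x0 + r • (θ : EuclideanSpace ℝ (Fin N))) = (τ * max κ (inner ℝ (θ : EuclideanSpace ℝ (Fin N)) e)) * r := by
    intro θ r hr
    have hθ : ‖(θ : EuclideanSpace ℝ (Fin N))‖ = 1 := by simp
    simp only [η0]
    rw [add_sub_cancel_left, norm_smul, hθ, inner_smul_left, Real.norm_of_nonneg hr.le, conj_trivial, mul_one, mul_comm κ r,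
      ← mul_max_of_nonneg _ _ hr.le]
    ring
  have ray2 : ∀ (θ : sphere (0 : EuclideanSpace ℝ (Fin N)) 1) (r : ℝ), 0 < r →
      ((inner ℝ (x0 + r • (θ : EuclideanSpace ℝ (Fin N)) - x0) e < κ * ‖x0 + r • (θ : EuclideanSpace ℝ (Fin N)) - x0‖) ↔
        inner ℝ (θ : EuclideanSpace ℝ (Fin N)) e < κ) := by
    intro θ r hr
    have hθ : ‖(θ : EuclideanSpace ℝ (Fin N))‖ = 1 := by simp
    rw [add_sub_cancel_left, norm_smul, hθ, inner_smul_left, Real.norm_of_nonneg hr.le, conj_trivial, mul_one, mul_comm κ r]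
    exact mul_lt_mul_iff_right₀ hr
  -- claim 2
  have c2 : ∫⁻ x in Ω, k x * ‖deriv U (τ * η0 x)‖ₑ ^ p ≤ ENNReal.ofReal lam * (∫⁻ x in Ω, k x * ‖φ x‖ₑ ^ p) +
      ENNReal.ofReal (((τ * κ) ^ N)⁻¹ * ε) * M * σ univ := by
    rw [← lintegral_indicator hΩm, ← lintegral_indicator hΩm, lintegral_polar_c x0 _ (hmk'.indicator hΩm),
      lintegral_polar_c x0 _ (hmk.indicator hΩm), ← lintegral_const, ← lintegral_const_mul' _ _ ENNReal.ofReal_ne_top,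
      ← lintegral_add_right _ measurable_const]
    apply lintegral_mono
    intro θ
    have hθ : ‖(θ : EuclideanSpace ℝ (Fin N))‖ = 1 := by simp
    obtain ⟨ρ, hρ, -⟩ := slice Ω ho hb hc x0 hx0 θ hθ (N - 1)
    simp only [hρ]
    set b := τ * max κ (inner ℝ (θ : EuclideanSpace ℝ (Fin N)) e) with hbd
    have hbκ : τ * κ ≤ b := by rw [hbd]; gcongr; exact le_max_left _ _
    have hb0 : 0 < b := lt_of_lt_of_le (by positivity) hbκ
    set kθ : ℝ≥0∞ := if inner ℝ (θ : EuclideanSpace ℝ (Fin N)) e < κ then ENNReal.ofReal (κ ^ p) else 1 with hkθ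
    have hkθ1 : kθ ≤ 1 := by
      rw [hkθ]; split_ifs
      · rw [← ENNReal.ofReal_one]; exact ENNReal.ofReal_le_ofReal hκp.le
      · exact le_rfl
    have hkθt : kθ ≠ ⊤ := ne_top_of_le_ne_top one_ne_top hkθ1
    have hk : ∀ r : ℝ, r > 0 → k (x0 + r • (θ : EuclideanSpace ℝ (Fin N))) = kθ := by
      intro r hr
      simp only [k, hkθ, ray2 θ r hr]
    have e1 : ∫⁻ r in Ioo 0 ρ, ENNReal.ofReal (r ^ (N - 1)) * (k (x0 + r • (θ : EuclideanSpace ℝ (Fin N))) *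
        ‖deriv U (τ * η0 (x0 + r • (θ : EuclideanSpace ℝ (Fin N))))‖ₑ ^ p) =
        kθ * ∫⁻ r in Ioo 0 ρ, ENNReal.ofReal (r ^ (N - 1)) * ‖deriv U (b * r)‖ₑ ^ p := by
      rw [← lintegral_const_mul' _ _ hkθt]
      apply setLIntegral_congr_fun measurableSet_Ioo
      intro r hr
      simp only []
      rw [hk r hr.1, ray1 θ r hr.1]; ring
    have e2 : ∫⁻ r in Ioo 0 ρ, ENNReal.ofReal (r ^ (N - 1)) * (k (x0 + r • (θ : EuclideanSpace ℝ (Fin N))) *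
        ‖φ (x0 + r • (θ : EuclideanSpace ℝ (Fin N)))‖ₑ ^ p) =
        kθ * ∫⁻ r in Ioo 0 ρ, ENNReal.ofReal (r ^ (N - 1)) * ‖U (b * r)‖ₑ ^ p := by
      rw [← lintegral_const_mul' _ _ hkθt]
      apply setLIntegral_congr_fun measurableSet_Ioo
      intro r hr
      simp only [φ]
      rw [hk r hr.1, ray1 θ r hr.1]; ring
    rw [e1, e2]
    refine (mul_le_mul_right (hup b hb0 ρ) _).trans ?_
    rw [mul_add, mul_left_comm kθ]
    apply add_le_add le_rfl
    have h9 : ENNReal.ofReal ((b ^ N)⁻¹ * ε) * M ≤ ENNReal.ofReal (((τ * κ) ^ N)⁻¹ * ε) * M := by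
      apply mul_le_mul_left
      apply ENNReal.ofReal_le_ofReal
      gcongr
    calc _ ≤ 1 * (ENNReal.ofReal ((b ^ N)⁻¹ * ε) * M) := mul_le_mul_left hkθ1 _
      _ ≤ _ := by rw [one_mul]; exact h9
  -- claim 3
  have c3 : ∫⁻ x in Ω, ‖φ x‖ₑ ^ p = (∫⁻ x in Ω, k x * ‖φ x‖ₑ ^ p) + ENNReal.ofReal (1 - κ ^ p) *
      ∫⁻ x in Ω, K1.indicator (fun x => ‖φ x‖ₑ ^ p) x := by
    rw [← lintegral_const_mul _ (hmU.indicator hK1.measurableSet), ← lintegral_add_left hmk]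
    apply lintegral_congr
    intro x
    by_cases hx : inner ℝ (x - x0) e < κ * ‖x - x0‖
    · rw [indicator_of_mem (by exact hx)]
      simp only [k, hx, if_true]
      rw [← add_mul, ← ENNReal.ofReal_add (by positivity) (by linarith)]
      simp
    · rw [indicator_of_notMem (by exact hx)]
      simp only [k, hx, if_false]
      simp
  -- claim 4
  have c4 : σ Θ * (ENNReal.ofReal ((ρ' / R) ^ N) * M) ≤ ∫⁻ x in Ω, K1.indicator (fun x => ‖φ x‖ₑ ^ p) x := by
    rw [← lintegral_indicator hΩm, lintegral_polar_c x0 _ ((hmU.indicator hK1.measurableSet).indicator hΩm)]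
    rw [mul_comm, ← setLIntegral_const, ← lintegral_indicator hΘo.measurableSet]
    apply lintegral_mono
    intro θ
    have hθ : ‖(θ : EuclideanSpace ℝ (Fin N))‖ = 1 := by simp
    by_cases hθΘ : θ ∈ Θ
    · rw [indicator_of_mem hθΘ]
      obtain ⟨ρ, hρ, hρ2⟩ := slice Ω ho hb hc x0 hx0 θ hθ (N - 1)
      simp only [hρ]
      have h1 : ρ' ≤ ρ := hρ'1.trans (hρ2 ρ0 hρ0p hθΘ.2)
      calc _ ≤ ∫⁻ r in Ioo 0 ρ', ENNReal.ofReal (r ^ (N - 1)) * ‖U ((τ * κ) * r)‖ₑ ^ p := hlow (τ * κ) (by positivity) ρ' hρ' hρ'2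
        _ = ∫⁻ r in Ioo 0 ρ', ENNReal.ofReal (r ^ (N - 1)) * K1.indicator (fun x => ‖φ x‖ₑ ^ p) (x0 + r • (θ : EuclideanSpace ℝ (Fin N))) := by
            apply setLIntegral_congr_fun measurableSet_Ioo
            intro r hr
            simp only []
            rw [indicator_of_mem (by exact (ray2 θ r hr.1).2 hθΘ.1)]
            simp only [φ]
            rw [ray1 θ r hr.1, max_eq_left hθΘ.1.le]
        _ ≤ _ := lintegral_mono_set (Ioo_subset_Ioo_right h1)
    · rw [indicator_of_notMem hθΘ]; exact zero_le
  set X := ∫⁻ x in Ω, ‖φ x‖ₑ ^ p with hX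
  set H := ∫⁻ x in Ω, k x * ‖φ x‖ₑ ^ p with hH
  set X1 := ∫⁻ x in Ω, K1.indicator (fun x => ‖φ x‖ₑ ^ p) x with hX1
  have hHt : H ≠ ⊤ := ne_top_of_le_ne_top hXt (by rw [c3]; exact le_self_add)
  have hkey : ENNReal.ofReal (((τ * κ) ^ N)⁻¹ * ε) * M * σ univ < ENNReal.ofReal lam * (ENNReal.ofReal (1 - κ ^ p) * X1) := by
    calc _ = ENNReal.ofReal (((τ * κ) ^ N)⁻¹ * ε * (σ univ).toReal) * M := by
          rw [ENNReal.ofReal_mul (q := (σ univ).toReal) (by positivity), ENNReal.ofReal_toReal hSt]; ring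
      _ < ENNReal.ofReal (lam * ((1 - κ ^ p) * ((σ Θ).toReal * (ρ' / R) ^ N))) * M := by
          rw [ENNReal.mul_lt_mul_iff_left hM0 hMt]
          rw [ENNReal.ofReal_lt_ofReal_iff_of_nonneg (by positivity)]
          exact hεc
      _ = ENNReal.ofReal lam * (ENNReal.ofReal (1 - κ ^ p) * (σ Θ * (ENNReal.ofReal ((ρ' / R) ^ N) * M))) := by
          rw [ENNReal.ofReal_mul hlam.le, ENNReal.ofReal_mul (by linarith), ENNReal.ofReal_mul (by positivity),
            ENNReal.ofReal_toReal hΘt]; ring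
      _ ≤ _ := by gcongr
  refine ⟨φ, hklip, fun x => hnn _, ⟨(R - R0) / τ, div_pos (by linarith) hτ, ?_⟩, ?_, hXt, ?_⟩
  · intro x hx
    apply hz
    rw [← _root_.sub_div, _root_.sub_sub_cancel, div_le_iff₀ hτ] at hx
    have : inner ℝ (x - x0) e ≤ η0 x := le_max_right _ _
    nlinarith
  · intro h0
    replace h0 : X = 0 := h0
    rw [h0] at c3
    have h1 := (add_eq_zero.1 c3.symm).2
    rw [h1, mul_zero] at hkey
    exact absurd hkey (by simp)
  · calc _ ≤ _ := c1
      _ ≤ ENNReal.ofReal (τ ^ p) * (ENNReal.ofReal lam * H + ENNReal.ofReal (((τ * κ) ^ N)⁻¹ * ε) * M * σ univ) :=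
          mul_le_mul_right c2 _
      _ < ENNReal.ofReal (τ ^ p) * (ENNReal.ofReal lam * H + ENNReal.ofReal lam * (ENNReal.ofReal (1 - κ ^ p) * X1)) := by
          rw [ENNReal.mul_lt_mul_iff_right (by simp; positivity) ENNReal.ofReal_ne_top]
          exact ENNReal.add_lt_add_left (ENNReal.mul_ne_top ENNReal.ofReal_ne_top hHt) hkey
      _ = _ := by
          rw [← mul_add, ← c3, ENNReal.ofReal_mul hlam.le]; ring

end DC
end

section
open Filter Topology ENNReal NNReal
namespace DC
variable {N : ℕ} [NeZero N]

lemma pos_int (p : ℝ) (hp : 1 < p) (Ω : Set (EuclideanSpace ℝ (Fin N))) (ho : IsOpen Ω) (hb : Bornology.IsBounded Ω)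
    (φ : EuclideanSpace ℝ (Fin N) → ℝ) (hφ : Continuous φ) (hnn : ∀ x, 0 ≤ φ x) (hY : ∫⁻ x in Ω, ‖φ x‖ₑ ^ p ≠ 0) :
    IntegrableOn (fun x => φ x ^ (p - 1)) Ω ∧ 0 < ∫ x in Ω, φ x ^ (p - 1) := by
  have hcont : Continuous (fun x => φ x ^ (p - 1)) := hφ.rpow_const (fun x => Or.inr (by linarith))
  have hint : IntegrableOn (fun x => φ x ^ (p - 1)) Ω :=
    (hcont.continuousOn.integrableOn_compact hb.isCompact_closure).mono_set subset_closure
  refine ⟨hint, ?_⟩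
  rw [integral_pos_iff_support_of_nonneg (fun x => Real.rpow_nonneg (hnn x) _) hint]
  rw [pos_iff_ne_zero]
  intro h0
  apply hY
  rw [lintegral_eq_zero_iff (hφ.measurable.enorm.pow_const p)]
  have : ∀ᵐ x ∂(volume.restrict Ω), x ∉ Function.support (fun x => φ x ^ (p - 1)) := measure_eq_zero_iff_ae_notMem.1 h0
  filter_upwards [this] with x hx
  rw [Function.notMem_support, Real.rpow_eq_zero (hnn x) (by linarith)] at hx
  simp [hx, show 0 < p by linarith]

set_option maxHeartbeats 400000 in
lemma combine (p : ℝ) (hp : 1 < p) (Ω : Set (EuclideanSpace ℝ (Fin N))) (ho : IsOpen Ω) (hb : Bornology.IsBounded Ω)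
    (Λ : ℝ) (hΛ : 0 ≤ Λ) (φ₁ φ₂ : EuclideanSpace ℝ (Fin N) → ℝ) (K₁ K₂ : ℝ≥0) (hK₁ : LipschitzWith K₁ φ₁)
    (hK₂ : LipschitzWith K₂ φ₂) (hnn₁ : ∀ x, 0 ≤ φ₁ x) (hnn₂ : ∀ x, 0 ≤ φ₂ x)
    (hY₁ : ∫⁻ x in Ω, ‖φ₁ x‖ₑ ^ p ≠ 0) (hY₂ : ∫⁻ x in Ω, ‖φ₂ x‖ₑ ^ p ≠ 0)
    (hYt₁ : ∫⁻ x in Ω, ‖φ₁ x‖ₑ ^ p ≠ ⊤) (hYt₂ : ∫⁻ x in Ω, ‖φ₂ x‖ₑ ^ p ≠ ⊤)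
    (hX₁ : ∫⁻ x in Ω, ‖fderiv ℝ φ₁ x‖ₑ ^ p < ENNReal.ofReal Λ * ∫⁻ x in Ω, ‖φ₁ x‖ₑ ^ p)
    (hX₂ : ∫⁻ x in Ω, ‖fderiv ℝ φ₂ x‖ₑ ^ p < ENNReal.ofReal Λ * ∫⁻ x in Ω, ‖φ₂ x‖ₑ ^ p)
    (hdich : ∀ x, (∀ᶠ y in 𝓝 x, φ₁ y = 0) ∨ (∀ᶠ y in 𝓝 x, φ₂ y = 0)) :
    ∃ (v : EuclideanSpace ℝ (Fin N) → ℝ) (K : ℝ≥0), LipschitzWith K v ∧ (∃ x ∈ Ω, v x ≠ 0) ∧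
      (∫ x in Ω, |v x| ^ (p - 2) * v x) = 0 ∧ rayleighQuot p p Ω v < Λ := by
  have hp0 : 0 ≤ p := by linarith
  have hpp : 0 < p := by linarith
  obtain ⟨hi₁, hJ₁⟩ := pos_int p hp Ω ho hb φ₁ hK₁.continuous hnn₁ hY₁
  obtain ⟨hi₂, hJ₂⟩ := pos_int p hp Ω ho hb φ₂ hK₂.continuous hnn₂ hY₂
  set J₁ := ∫ x in Ω, φ₁ x ^ (p - 1)
  set J₂ := ∫ x in Ω, φ₂ x ^ (p - 1)
  let t : ℝ := (J₁ / J₂) ^ (1 / (p - 1))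
  have ht : 0 < t := by positivity
  have htp : t ^ (p - 1) = J₁ / J₂ := by
    simp only [t]
    rw [← Real.rpow_mul (by positivity), one_div_mul_cancel (by linarith), Real.rpow_one]
  let v : EuclideanSpace ℝ (Fin N) → ℝ := fun x => φ₁ x - t * φ₂ x
  have hvl : LipschitzWith (K₁ + t.toNNReal * K₂) v := by
    have h1 : LipschitzWith (t.toNNReal * K₂) (fun x => t * φ₂ x) := by
      apply LipschitzWith.of_dist_le_mul
      intro x y
      rw [Real.dist_eq, ← mul_sub, abs_mul, abs_of_pos ht, NNReal.coe_mul, Real.coe_toNNReal _ ht.le, mul_assoc, ← Real.dist_eq]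
      have := hK₂.dist_le_mul x y
      gcongr
    exact hK₁.sub h1
  have hv1 : ∀ x, ‖v x‖ₑ ^ p = ‖φ₁ x‖ₑ ^ p + ENNReal.ofReal (t ^ p) * ‖φ₂ x‖ₑ ^ p := by
    intro x
    rcases hdich x with h | h
    · have h0 := h.self_of_nhds
      simp only [v]
      rw [h0, zero_sub, enorm_neg, enorm_mul, ENNReal.mul_rpow_of_nonneg _ _ hp0, enorm_rpow_eq t p hp0,
        Real.norm_of_nonneg ht.le]
      simp [hpp]
    · have h0 := h.self_of_nhds
      simp only [v]
      rw [h0]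
      simp [hpp]
  have hv2 : ∀ x, ‖fderiv ℝ v x‖ₑ ^ p ≤ ‖fderiv ℝ φ₁ x‖ₑ ^ p + ENNReal.ofReal (t ^ p) * ‖fderiv ℝ φ₂ x‖ₑ ^ p := by
    intro x
    rcases hdich x with h | h
    · have h1 : v =ᶠ[𝓝 x] (-t) • φ₂ := by
        filter_upwards [h] with y hy
        simp [v, hy]
      rw [h1.fderiv_eq, fderiv_const_smul_field, Pi.smul_apply]
      refine le_trans (le_of_eq ?_) le_add_self
      rw [enorm_rpow_eq _ _ hp0, enorm_rpow_eq _ _ hp0, norm_smul, norm_neg, Real.norm_of_nonneg ht.le,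
        Real.mul_rpow ht.le (norm_nonneg _), ENNReal.ofReal_mul (by positivity)]
    · have h1 : v =ᶠ[𝓝 x] φ₁ := by
        filter_upwards [h] with y hy
        simp [v, hy]
      rw [h1.fderiv_eq]
      exact le_self_add
  have hm1 : Measurable (fun x => ‖φ₁ x‖ₑ ^ p) := hK₁.continuous.measurable.enorm.pow_const p
  have hm2 : Measurable (fun x => ‖fderiv ℝ φ₁ x‖ₑ ^ p) := (measurable_fderiv ℝ φ₁).enorm.pow_const p
  have hY : ∫⁻ x in Ω, ‖v x‖ₑ ^ p = (∫⁻ x in Ω, ‖φ₁ x‖ₑ ^ p) + ENNReal.ofReal (t ^ p) * ∫⁻ x in Ω, ‖φ₂ x‖ₑ ^ p := by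
    simp_rw [hv1]
    rw [lintegral_add_left hm1, lintegral_const_mul' _ _ ENNReal.ofReal_ne_top]
  have hX : ∫⁻ x in Ω, ‖fderiv ℝ v x‖ₑ ^ p ≤ (∫⁻ x in Ω, ‖fderiv ℝ φ₁ x‖ₑ ^ p) + ENNReal.ofReal (t ^ p) * ∫⁻ x in Ω, ‖fderiv ℝ φ₂ x‖ₑ ^ p := by
    refine (lintegral_mono hv2).trans ?_
    rw [lintegral_add_left hm2, lintegral_const_mul' _ _ ENNReal.ofReal_ne_top]
  have hY0 : ∫⁻ x in Ω, ‖v x‖ₑ ^ p ≠ 0 := by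
    rw [hY]; intro h; exact hY₁ (add_eq_zero.1 h).1
  have hYt : ∫⁻ x in Ω, ‖v x‖ₑ ^ p ≠ ⊤ := by
    rw [hY]; exact ENNReal.add_ne_top.2 ⟨hYt₁, ENNReal.mul_ne_top ENNReal.ofReal_ne_top hYt₂⟩
  have hlt : ∫⁻ x in Ω, ‖fderiv ℝ v x‖ₑ ^ p < ENNReal.ofReal (Λ) * ∫⁻ x in Ω, ‖v x‖ₑ ^ p := by
    rw [hY, mul_add, mul_left_comm]
    refine lt_of_le_of_lt hX (ENNReal.add_lt_add_of_lt_of_le ?_ hX₁ (mul_le_mul_right hX₂.le _))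
    apply ENNReal.mul_ne_top ENNReal.ofReal_ne_top
    exact ne_top_of_lt hX₂
  refine ⟨v, _, hvl, ?_, ?_, ?_⟩
  · by_contra! h
    apply hY0
    apply setLIntegral_eq_zero ho.measurableSet
    intro x hx
    simp [h x hx, hpp]
  · have : ∀ x, |v x| ^ (p - 2) * v x = φ₁ x ^ (p - 1) - (J₁ / J₂) * φ₂ x ^ (p - 1) := by
      intro x
      have hz0 : (0:ℝ) ^ (p - 1) = 0 := Real.zero_rpow (by linarith)
      have hpw : ∀ a : ℝ, 0 ≤ a → a ^ (p - 2) * a = a ^ (p - 1) := by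
        intro a ha
        rcases ha.eq_or_lt with h | h
        · rw [← h, hz0, mul_zero]
        · rw [← Real.rpow_add_one h.ne']; congr 1; ring
      rcases hdich x with h | h
      · have h0 := h.self_of_nhds
        simp only [v]
        rw [h0, hz0, ← htp, ← Real.mul_rpow ht.le (hnn₂ x), zero_sub, abs_neg, abs_of_nonneg (by have := hnn₂ x; positivity),
          mul_neg, hpw _ (by have := hnn₂ x; positivity), zero_sub]
      · have h0 := h.self_of_nhds
        simp only [v]
        rw [h0, hz0, mul_zero, mul_zero, sub_zero, sub_zero, abs_of_nonneg (hnn₁ x), hpw _ (hnn₁ x)]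
    simp_rw [this]
    rw [integral_sub hi₁ (hi₂.const_mul _), integral_const_mul]
    change J₁ - J₁ / J₂ * J₂ = 0
    rw [div_mul_cancel₀ _ hJ₂.ne', sub_self]
  · rw [ray_eq p hp Ω v hvl.continuous.aestronglyMeasurable, div_lt_iff₀ (ENNReal.toReal_pos hY0 hYt)]
    have := (ENNReal.toReal_lt_toReal (ne_top_of_lt hlt) (ENNReal.mul_ne_top ENNReal.ofReal_ne_top hYt)).2 hlt
    rwa [ENNReal.toReal_mul, ENNReal.toReal_ofReal hΛ] at this

lemma exists_diam (Ω : Set (EuclideanSpace ℝ (Fin N))) (ho : IsOpen Ω) (hb : Bornology.IsBounded Ω) (hne : Ω.Nonempty) :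
    0 < diam Ω ∧ ∃ x0 ∈ closure Ω, ∃ x1 ∈ closure Ω, ∃ e : EuclideanSpace ℝ (Fin N), ‖e‖ = 1 ∧ x1 - x0 = diam Ω • e := by
  have hcp : IsCompact (closure Ω) := hb.isCompact_closure
  obtain ⟨z, hz, hmax⟩ := (hcp.prod hcp).exists_isMaxOn (hne.closure.prod hne.closure)
    (f := fun z : EuclideanSpace ℝ (Fin N) × EuclideanSpace ℝ (Fin N) => dist z.1 z.2) continuous_dist.continuousOn
  have hx0 := hz.1
  have hx1 := hz.2
  have hmax' : ∀ x ∈ closure Ω, ∀ y ∈ closure Ω, dist x y ≤ dist z.1 z.2 := by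
    intro x hx y hy
    exact isMaxOn_iff.1 hmax (x, y) ⟨hx, hy⟩
  generalize z.1 = x0 at *
  generalize z.2 = x1 at *
  have hD : diam Ω = dist x0 x1 := by
    apply le_antisymm
    · exact diam_le_of_forall_dist_le dist_nonneg (fun x hx y hy => hmax' x (subset_closure hx) y (subset_closure hy))
    · rw [← diam_closure]
      exact dist_le_diam_of_mem hb.closure hx0 hx1
  have hDp : 0 < dist x0 x1 := by
    obtain ⟨x, hx⟩ := hne
    obtain ⟨r, hr, hball⟩ := Metric.isOpen_iff.1 ho x hx
    obtain ⟨u, hu⟩ := exists_norm_eq (EuclideanSpace ℝ (Fin N)) (c := r / 2) (by positivity)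
    have h1 : x + u ∈ Ω := hball (by rw [mem_ball, dist_eq_norm, add_sub_cancel_left, hu]; linarith)
    have h2 := hmax' x (subset_closure hx) _ (subset_closure h1)
    rw [dist_self_add_right, hu] at h2
    linarith
  rw [hD]
  have hDn : ‖x1 - x0‖ = dist x0 x1 := by rw [dist_comm, dist_eq_norm]
  refine ⟨hDp, x0, hx0, x1, hx1, (dist x0 x1)⁻¹ • (x1 - x0), ?_, ?_⟩
  · rw [norm_smul, hDn, norm_inv, Real.norm_of_nonneg hDp.le, inv_mul_cancel₀ hDp.ne']
  · rw [smul_smul, mul_inv_cancel₀ hDp.ne', one_smul]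

lemma exists_test (hN : 2 ≤ N) (p : ℝ) (hp : 1 < p) (c : EuclideanSpace ℝ (Fin N)) (R : ℝ) (hR : 0 < R)
    (Ω : Set (EuclideanSpace ℝ (Fin N))) (ho : IsOpen Ω) (hb : Bornology.IsBounded Ω) (hc : Convex ℝ Ω) (hne : Ω.Nonempty) :
    ∃ (v : EuclideanSpace ℝ (Fin N) → ℝ) (K : ℝ≥0), LipschitzWith K v ∧ (∃ x ∈ Ω, v x ≠ 0) ∧
      (∫ x in Ω, |v x| ^ (p - 2) * v x) = 0 ∧
      rayleighQuot p p Ω v < lambdaPQ p p (ball c R) * (2 * R / diam Ω) ^ p := by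
  have hlam := lam_pos p hp c R hR
  obtain ⟨hDp, x0, hx0, x1, hx1, e, he, hx1e⟩ := exists_diam Ω ho hb hne
  generalize diam Ω = D at *
  have hτ : 0 < 2 * R / D := by positivity
  have hτ2 : R / (2 * R / D) = D / 2 := by field_simp
  obtain ⟨φ₁, ⟨K₁, hK₁⟩, hnn₁, ⟨δ₁, hδ₁, hz₁⟩, hY₁, hYt₁, hX₁⟩ :=
    cone_test hN p hp c R hR Ω ho hb hc hne x0 hx0 e he _ hτ
  obtain ⟨φ₂, ⟨K₂, hK₂⟩, hnn₂, ⟨δ₂, hδ₂, hz₂⟩, hY₂, hYt₂, hX₂⟩ :=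
    cone_test hN p hp c R hR Ω ho hb hc hne x1 hx1 (-e) (by rw [norm_neg, he]) _ hτ
  rw [hτ2] at hz₁ hz₂
  have hs : ∀ x, inner ℝ (x - x1) (-e) = D - inner ℝ (x - x0) e := by
    intro x
    have : x - x1 = (x - x0) - D • e := by rw [← hx1e]; abel
    rw [this, inner_neg_right, inner_sub_left, inner_smul_left, real_inner_self_eq_norm_sq, he]
    simp
  have hz₂' : ∀ x, inner ℝ (x - x0) e ≤ D / 2 + δ₂ → φ₂ x = 0 := by
    intro x hx; apply hz₂; rw [hs]; linarith
  have hcs : Continuous (fun x : EuclideanSpace ℝ (Fin N) => inner ℝ (x - x0) e) := by fun_prop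
  have hdich : ∀ x, (∀ᶠ y in 𝓝 x, φ₁ y = 0) ∨ (∀ᶠ y in 𝓝 x, φ₂ y = 0) := by
    intro x
    rcases lt_or_ge (D / 2 - δ₁) (inner ℝ (x - x0) e) with h | h
    · left
      filter_upwards [hcs.continuousAt.eventually_const_lt h] with y hy using hz₁ y hy.le
    · right
      filter_upwards [hcs.continuousAt.eventually_lt_const (show inner ℝ (x - x0) e < D / 2 + δ₂ by linarith)] with y hy
        using hz₂' y hy.le
  exact combine p hp Ω ho hb _ (by positivity) φ₁ φ₂ K₁ K₂ hK₁ hK₂ hnn₁ hnn₂ hY₁ hY₂ hYt₁ hYt₂ hX₁ hX₂ hdich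

end DC
end

section
open Filter Topology ENNReal NNReal
namespace DC

noncomputable def Li (n : ℕ) : EuclideanSpace ℝ (Fin n) →ₗᵢ[ℝ] EuclideanSpace ℝ (Fin (n + 1)) where
  toFun z := WithLp.toLp 2 (Fin.cons 0 z)
  map_add' x y := by
    ext i
    refine Fin.cases ?_ (fun j => ?_) i <;> simp
  map_smul' a y := by
    ext i
    refine Fin.cases ?_ (fun j => ?_) i <;> simp
  norm_map' x := by
    simp [EuclideanSpace.norm_eq, Fin.sum_univ_succ]

noncomputable def e0 (n : ℕ) : EuclideanSpace ℝ (Fin (n + 1)) := EuclideanSpace.single 0 1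

lemma e0_norm (n : ℕ) : ‖e0 n‖ = 1 := by simp [e0]

noncomputable def io {n : ℕ} (t : ℝ) (z : EuclideanSpace ℝ (Fin n)) : EuclideanSpace ℝ (Fin (n + 1)) :=
  t • e0 n + Li n z

lemma io_eq {n : ℕ} (t : ℝ) (z : EuclideanSpace ℝ (Fin n)) : io t z = WithLp.toLp 2 (Fin.cons t z) := by
  ext i
  refine Fin.cases ?_ (fun j => ?_) i <;> simp [io, Li, e0]

lemma io_zero {n : ℕ} (t : ℝ) (z : EuclideanSpace ℝ (Fin n)) : io t z 0 = t := by
  simp [io_eq]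

lemma io_sq {n : ℕ} (t : ℝ) (z : EuclideanSpace ℝ (Fin n)) :
    Real.sqrt (∑ i ∈ Finset.univ.erase (0 : Fin (n + 1)), io t z i ^ 2) = ‖z‖ := by
  rw [EuclideanSpace.norm_eq]
  congr 1
  have h : ∑ i, io t z i ^ 2 = io t z 0 ^ 2 + ∑ i ∈ Finset.univ.erase (0 : Fin (n + 1)), io t z i ^ 2 :=
    (Finset.add_sum_erase _ _ (Finset.mem_univ _)).symm
  rw [Fin.sum_univ_succ] at h
  rw [← add_left_cancel h]
  simp [io_eq]

lemma io_norm_sq {n : ℕ} (t : ℝ) (z : EuclideanSpace ℝ (Fin n)) : ‖io t z‖ ^ 2 = t ^ 2 + ‖z‖ ^ 2 := by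
  simp [EuclideanSpace.norm_sq_eq, io_eq, Fin.sum_univ_succ]

lemma io_norm_le {n : ℕ} (t : ℝ) (z : EuclideanSpace ℝ (Fin n)) : ‖io t z‖ ≤ |t| + ‖z‖ := by
  refine (norm_add_le _ _).trans (le_of_eq ?_)
  rw [norm_smul, e0_norm, LinearIsometry.norm_map]; simp

lemma io_surj {n : ℕ} (x : EuclideanSpace ℝ (Fin (n + 1))) : ∃ t z, x = io t z := by
  refine ⟨x 0, WithLp.toLp 2 (fun i => x i.succ), ?_⟩
  rw [io_eq]
  ext i
  refine Fin.cases ?_ (fun j => ?_) i <;> simp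

lemma io_sub {n : ℕ} (t s : ℝ) (z y : EuclideanSpace ℝ (Fin n)) : io t z - io s y = io (t - s) (z - y) := by
  simp only [io, map_sub, sub_smul]; abel

lemma io_cont {n : ℕ} : Continuous (fun q : ℝ × EuclideanSpace ℝ (Fin n) => io q.1 q.2) := by
  unfold io
  have := (Li n).continuous
  fun_prop

lemma fub {n : ℕ} (G : EuclideanSpace ℝ (Fin (n + 1)) → ℝ≥0∞) (hG : Measurable G) :
    ∫⁻ x, G x = ∫⁻ t, ∫⁻ z : EuclideanSpace ℝ (Fin n), G (io t z) := by
  have h1 := (PiLp.volume_preserving_toLp (Fin (n+1))).lintegral_comp hG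
  rw [← h1]
  have h2 := (volume_preserving_piFinSuccAbove (fun _ : Fin (n + 1) => ℝ) 0).symm.lintegral_comp
    (f := fun a => G (WithLp.toLp 2 a)) (by fun_prop)
  rw [← h2]
  rw [Measure.volume_eq_prod, lintegral_prod _ (by fun_prop)]
  congr 1
  ext t
  have h3 := (PiLp.volume_preserving_toLp (Fin n)).lintegral_comp
    (f := fun z => G (io t z)) (hG.comp ((io_cont.measurable.comp (measurable_const.prodMk measurable_id) : Measurable (fun z : EuclideanSpace ℝ (Fin n) => io t z))))
  rw [← h3]
  congr 1
  ext z
  congr 1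
  rw [io_eq]
  ext i
  refine Fin.cases ?_ (fun j => ?_) i <;> simp [MeasurableEquiv.piFinSuccAbove]

lemma avg {F : Type*} [NormedAddCommGroup F] [NormedSpace ℝ F] [FiniteDimensional ℝ F]
    [MeasurableSpace F] [BorelSpace F] (μ : Measure F) [μ.IsAddHaarMeasure] (G : F → ℝ≥0∞) (hG : Measurable G)
    (B : Set F) (hB : MeasurableSet B) (hBc : Convex ℝ B) (v : F) (hv : v ∈ B) (t : ℝ) (ht : 1 / 2 ≤ t) (ht1 : t ≤ 1) :
    ∫⁻ z in B, G ((1 - t) • v + t • z) ∂μ ≤ ENNReal.ofReal (2 ^ (Module.finrank ℝ F)) * ∫⁻ z in B, G z ∂μ := by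
  have hs := lint_smul μ (fun x => B.indicator G ((1 - t) • v + x))
    ((hG.indicator hB).comp (by fun_prop)) t (by linarith)
  rw [lintegral_add_left_eq_self (μ := μ) (fun x => B.indicator G x), lintegral_indicator hB] at hs
  calc ∫⁻ z in B, G ((1 - t) • v + t • z) ∂μ
      = ∫⁻ z in B, B.indicator G ((1 - t) • v + t • z) ∂μ := by
        apply setLIntegral_congr_fun hB
        intro z hz
        simp only
        rw [indicator_of_mem]
        exact hBc hv hz (by linarith) (by linarith) (by ring)
    _ ≤ ∫⁻ z, B.indicator G ((1 - t) • v + t • z) ∂μ := setLIntegral_le_lintegral _ _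
    _ ≤ _ := by
        rw [hs]
        gcongr
        rw [← inv_pow]
        apply pow_le_pow_left₀ (by positivity)
        rw [inv_le_comm₀ (by linarith) (by norm_num)]; linarith

lemma ball_poincare {F : Type*} [NormedAddCommGroup F] [NormedSpace ℝ F] [FiniteDimensional ℝ F]
    [MeasurableSpace F] [BorelSpace F] (μ : Measure F) [μ.IsAddHaarMeasure] (h : F → ℝ) (hh : ContDiff ℝ 1 h)
    (p : ℝ) (hp : 1 < p) :
    ∫⁻ z0 in ball (0 : F) 1, ∫⁻ z in ball (0 : F) 1, ‖h z - h z0‖ₑ ^ p ∂μ ∂μ ≤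
      ENNReal.ofReal (2 ^ p * 2 ^ (Module.finrank ℝ F)) * μ (ball (0 : F) 1) * ∫⁻ z in ball (0 : F) 1, ‖fderiv ℝ h z‖ₑ ^ p ∂μ := by
  have hp0 : 0 ≤ p := by linarith
  set B := ball (0 : F) 1 with hBd
  have hB : MeasurableSet B := measurableSet_ball
  have hBc : Convex ℝ B := convex_ball _ _
  set G : F → ℝ≥0∞ := fun z => ‖fderiv ℝ h z‖ₑ ^ p with hGd
  have hG : Measurable G := (measurable_fderiv ℝ h).enorm.pow_const p
  have hpt : ∀ z0 ∈ B, ∀ z ∈ B, ‖h z - h z0‖ₑ ^ p ≤ ENNReal.ofReal (2 ^ p) * ∫⁻ t in Ioc (0:ℝ) 1, G ((1 - t) • z0 + t • z) := by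
    intro z0 hz0 z hz
    have hd : ∀ t : ℝ, HasDerivAt (fun t : ℝ => h ((1 - t) • z0 + t • z)) (fderiv ℝ h ((1 - t) • z0 + t • z) (z - z0)) t := by
      intro t
      have h1 : HasDerivAt (fun t : ℝ => (1 - t) • z0 + t • z) (z - z0) t := by
        have := (((hasDerivAt_id t).const_sub 1).smul_const z0).add ((hasDerivAt_id t).smul_const z)
        refine (this.congr_deriv ?_)
        simp; abel
      exact ((hh.differentiable (by simp) _).hasFDerivAt).comp_hasDerivAt t h1
    have hj := jensen1 (fun t : ℝ => h ((1 - t) • z0 + t • z)) (hh.comp (by fun_prop)) 0 1 zero_le_one p hp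
    simp only [sub_self, zero_smul, one_smul, zero_add, sub_zero, add_zero, Real.one_rpow, ENNReal.ofReal_one, one_mul] at hj
    refine hj.trans ?_
    rw [← lintegral_const_mul' _ _ ENNReal.ofReal_ne_top]
    apply lintegral_mono
    intro t
    simp only
    rw [(hd t).deriv, hGd]
    simp only
    rw [enorm_rpow_eq _ p hp0, enorm_rpow_eq _ p hp0, ← ENNReal.ofReal_mul (by positivity), ← Real.mul_rpow (by norm_num) (norm_nonneg _)]
    apply ENNReal.ofReal_le_ofReal
    apply Real.rpow_le_rpow (norm_nonneg _) _ hp0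
    refine (ContinuousLinearMap.le_opNorm _ _).trans ?_
    rw [mul_comm]
    gcongr
    rw [hBd, mem_ball_zero_iff] at hz hz0
    linarith [norm_sub_le z z0]
  have hm3 : Measurable (fun q : (F × F) × ℝ => G ((1 - q.2) • q.1.1 + q.2 • q.1.2)) := hG.comp (by fun_prop)
  have hm3' : Measurable (fun q : (ℝ × F) × F => G ((1 - q.1.1) • q.1.2 + q.1.1 • q.2)) := hG.comp (by fun_prop)
  have ht : ∀ t ∈ Ioc (0:ℝ) 1, ∫⁻ z0 in B, ∫⁻ z in B, G ((1 - t) • z0 + t • z) ∂μ ∂μ ≤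
      (ENNReal.ofReal (2 ^ (Module.finrank ℝ F)) * ∫⁻ z in B, G z ∂μ) * μ B := by
    intro t ht
    rcases le_or_gt (1/2) t with h | h
    · rw [← setLIntegral_const]
      apply setLIntegral_mono' hB
      intro v hv
      exact avg μ G hG B hB hBc v hv t h ht.2
    · rw [lintegral_lintegral_swap, ← setLIntegral_const]
      · apply setLIntegral_mono' hB
        intro v hv
        have := avg μ G hG B hB hBc v hv (1 - t) (by linarith) (by linarith [ht.1])
        simp only [_root_.sub_sub_cancel] at this
        simp_rw [add_comm ((1 - t) • _)]
        exact this
      · apply Measurable.aemeasurable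
        exact hG.comp (by fun_prop)
  calc ∫⁻ z0 in B, ∫⁻ z in B, ‖h z - h z0‖ₑ ^ p ∂μ ∂μ
      ≤ ∫⁻ z0 in B, ∫⁻ z in B, ENNReal.ofReal (2 ^ p) * (∫⁻ t in Ioc (0:ℝ) 1, G ((1 - t) • z0 + t • z)) ∂μ ∂μ := by
        apply setLIntegral_mono' hB
        intro z0 hz0
        apply setLIntegral_mono' hB
        intro z hz
        exact hpt z0 hz0 z hz
    _ = ENNReal.ofReal (2 ^ p) * ∫⁻ z0 in B, ∫⁻ z in B, (∫⁻ t in Ioc (0:ℝ) 1, G ((1 - t) • z0 + t • z)) ∂μ ∂μ := by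
        simp_rw [lintegral_const_mul' _ _ ENNReal.ofReal_ne_top]
    _ = ENNReal.ofReal (2 ^ p) * ∫⁻ t in Ioc (0:ℝ) 1, ∫⁻ z0 in B, ∫⁻ z in B, G ((1 - t) • z0 + t • z) ∂μ ∂μ := by
        congr 1
        symm
        rw [lintegral_lintegral_swap]
        · apply lintegral_congr
          intro z0
          rw [lintegral_lintegral_swap]
          apply Measurable.aemeasurable
          exact hG.comp (by fun_prop)
        · apply Measurable.aemeasurable
          exact hm3'.lintegral_prod_right'
    _ ≤ ENNReal.ofReal (2 ^ p) * ∫⁻ t in Ioc (0:ℝ) 1, (ENNReal.ofReal (2 ^ (Module.finrank ℝ F)) * ∫⁻ z in B, G z ∂μ) * μ B := by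
        apply mul_le_mul_right
        exact setLIntegral_mono' measurableSet_Ioc ht
    _ = _ := by
        rw [setLIntegral_const, Real.volume_Ioc, ENNReal.ofReal_mul (by positivity)]
        simp only [sub_zero, ENNReal.ofReal_one, mul_one]
        ring

end DC
end

section
open Filter Topology ENNReal NNReal
namespace DC

def cone (n : ℕ) (κ R : ℝ) : Set (EuclideanSpace ℝ (Fin (n + 1))) :=
  {x | κ * Real.sqrt (∑ i ∈ Finset.univ.erase (0 : Fin (n + 1)), x i ^ 2) < R - |x 0|}

lemma mem_cone {n : ℕ} {κ R t : ℝ} {z : EuclideanSpace ℝ (Fin n)} : io t z ∈ cone n κ R ↔ κ * ‖z‖ < R - |t| := by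
  simp only [cone, mem_setOf_eq, io_sq, io_zero]

lemma cone_open (n : ℕ) (κ R : ℝ) : IsOpen (cone n κ R) := by
  apply isOpen_lt <;> fun_prop

noncomputable def TT {n : ℕ} (κ R : ℝ) (G : EuclideanSpace ℝ (Fin (n + 1)) → ℝ≥0∞) (σ : ℝ) : ℝ≥0∞ :=
  ∫⁻ r in Ioo 0 R, ENNReal.ofReal (r ^ n) * ∫⁻ z in ball (0 : EuclideanSpace ℝ (Fin n)) 1, G (io (σ * (R - r)) ((r / κ) • z))

lemma phi_cont {n : ℕ} (κ R σ : ℝ) :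
    Continuous (fun q : ℝ × EuclideanSpace ℝ (Fin n) => io (σ * (R - q.1)) ((q.1 / κ) • q.2)) :=
  io_cont.comp (by fun_prop : Continuous (fun q : ℝ × EuclideanSpace ℝ (Fin n) => (σ * (R - q.1), (q.1 / κ) • q.2)))

lemma phi_meas {n : ℕ} (κ R σ : ℝ) (G : EuclideanSpace ℝ (Fin (n + 1)) → ℝ≥0∞) (hG : Measurable G) :
    Measurable (fun r : ℝ => ENNReal.ofReal (r ^ n) *
      ∫⁻ z in ball (0 : EuclideanSpace ℝ (Fin n)) 1, G (io (σ * (R - r)) ((r / κ) • z))) := by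
  have h1 : Measurable (fun r : ℝ => ∫⁻ z in ball (0 : EuclideanSpace ℝ (Fin n)) 1, G (io (σ * (R - r)) ((r / κ) • z))) :=
    Measurable.lintegral_prod_right' (f := fun q : ℝ × EuclideanSpace ℝ (Fin n) => G (io (σ * (R - q.1)) ((q.1 / κ) • q.2)))
      (hG.comp (phi_cont κ R σ).measurable)
  fun_prop

lemma cone_slice {n : ℕ} (κ R : ℝ) (hκ : 0 < κ) (G : EuclideanSpace ℝ (Fin (n + 1)) → ℝ≥0∞) (hG : Measurable G)
    (t r : ℝ) (hr : 0 < r) (hrt : R - |t| = r) :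
    ∫⁻ z : EuclideanSpace ℝ (Fin n), (cone n κ R).indicator G (io t z) =
      ENNReal.ofReal ((κ ^ n)⁻¹) * (ENNReal.ofReal (r ^ n) * ∫⁻ z in ball (0 : EuclideanSpace ℝ (Fin n)) 1, G (io t ((r / κ) • z))) := by
  have hm : Measurable (fun z : EuclideanSpace ℝ (Fin n) => (cone n κ R).indicator G (io t z)) :=
    (hG.indicator (cone_open n κ R).measurableSet).comp
      (io_cont.measurable.comp (measurable_const.prodMk measurable_id) : Measurable (fun z : EuclideanSpace ℝ (Fin n) => io t z))
  have h := lint_smul volume _ hm (r / κ) (by positivity)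
  have h2 : ∫⁻ z : EuclideanSpace ℝ (Fin n), (cone n κ R).indicator G (io t ((r / κ) • z)) =
      ∫⁻ z in ball (0 : EuclideanSpace ℝ (Fin n)) 1, G (io t ((r / κ) • z)) := by
    rw [← lintegral_indicator measurableSet_ball]
    congr 1
    ext z
    have hiff : io t ((r / κ) • z) ∈ cone n κ R ↔ z ∈ ball (0 : EuclideanSpace ℝ (Fin n)) 1 := by
      rw [mem_cone, hrt, norm_smul, Real.norm_of_nonneg (by positivity), mem_ball_zero_iff]
      rw [show κ * (r / κ * ‖z‖) = r * ‖z‖ by field_simp]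
      exact mul_lt_iff_lt_one_right hr
    by_cases hz : z ∈ ball (0 : EuclideanSpace ℝ (Fin n)) 1
    · rw [indicator_of_mem hz, indicator_of_mem (hiff.2 hz)]
    · rw [indicator_of_notMem hz, indicator_of_notMem (mt hiff.1 hz)]
  rw [← h2, h, finrank_euclideanSpace_fin, ← mul_assoc, ← mul_assoc, ← ENNReal.ofReal_mul (by positivity),
    ← ENNReal.ofReal_mul (by positivity)]
  rw [show (κ ^ n)⁻¹ * r ^ n * ((r / κ) ^ n)⁻¹ = 1 by rw [div_pow]; field_simp]
  simp

lemma cone_int {n : ℕ} (κ R : ℝ) (hκ : 0 < κ) (hR : 0 < R) (G : EuclideanSpace ℝ (Fin (n + 1)) → ℝ≥0∞) (hG : Measurable G) :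
    ∫⁻ x in cone n κ R, G x = ENNReal.ofReal ((κ ^ n)⁻¹) * (TT κ R G 1 + TT κ R G (-1)) := by
  rw [← lintegral_indicator (cone_open n κ R).measurableSet, fub _ (hG.indicator (cone_open n κ R).measurableSet)]
  unfold TT
  have hm := fun σ => (phi_meas (n := n) κ R σ G hG).indicator (measurableSet_Ioo (a := 0) (b := R))
  let P : ℝ → ℝ → ℝ≥0∞ := fun σ => (Ioo 0 R).indicator (fun r => ENNReal.ofReal (r ^ n) *
      ∫⁻ z in ball (0 : EuclideanSpace ℝ (Fin n)) 1, G (io (σ * (R - r)) ((r / κ) • z)))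
  have h1 : ∫⁻ r, P 1 (R - r) = ∫⁻ r, P 1 r := lintegral_sub_left_eq_self (μ := volume) _ R
  have h2 : ∫⁻ r, P (-1) (R + r) = ∫⁻ r, P (-1) r := lintegral_add_left_eq_self (μ := volume) _ R
  have hm1 : Measurable (fun r => P 1 (R - r)) := (hm 1).comp (by fun_prop)
  rw [← lintegral_indicator measurableSet_Ioo, ← lintegral_indicator measurableSet_Ioo]
  change _ = _ * ((∫⁻ r, P 1 r) + ∫⁻ r, P (-1) r)
  rw [← h1, ← h2, ← lintegral_add_left hm1, ← lintegral_const_mul' _ _ ENNReal.ofReal_ne_top]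
  simp only [P]
  apply lintegral_congr_ae
  have h0 : ∀ᵐ t : ℝ, t ≠ 0 := by simp [ae_iff]
  filter_upwards [h0] with t ht
  rcases lt_or_gt_of_ne ht with h | h
  · rw [indicator_of_notMem (a := R - t) (by rw [mem_Ioo]; intro hh; linarith), zero_add]
    by_cases hR2 : R + t ∈ Ioo 0 R
    · rw [indicator_of_mem hR2, cone_slice κ R hκ G hG t (R + t) hR2.1 (by rw [abs_of_neg h]; ring)]
      simp
    · rw [indicator_of_notMem hR2, mul_zero]
      have : ∀ z : EuclideanSpace ℝ (Fin n), (cone n κ R).indicator G (io t z) = 0 := by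
        intro z
        apply indicator_of_notMem
        rw [mem_cone, abs_of_neg h, not_lt]
        rw [mem_Ioo, not_and, not_lt] at hR2
        have : R + t ≤ 0 := by by_contra hh; linarith [hR2 (by linarith)]
        have : 0 ≤ κ * ‖z‖ := by positivity
        linarith
      simp [this]
  · rw [indicator_of_notMem (a := R + t) (by rw [mem_Ioo]; intro hh; linarith), add_zero]
    by_cases hR2 : R - t ∈ Ioo 0 R
    · rw [indicator_of_mem hR2, cone_slice κ R hκ G hG t (R - t) hR2.1 (by rw [abs_of_pos h])]
      simp
    · rw [indicator_of_notMem hR2, mul_zero]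
      have : ∀ z : EuclideanSpace ℝ (Fin n), (cone n κ R).indicator G (io t z) = 0 := by
        intro z
        apply indicator_of_notMem
        rw [mem_cone, abs_of_pos h, not_lt]
        rw [mem_Ioo, not_and, not_lt] at hR2
        have : R - t ≤ 0 := by by_contra hh; linarith [hR2 (by linarith)]
        have : 0 ≤ κ * ‖z‖ := by positivity
        linarith
      simp [this]

end DC
end

section
open Filter Topology ENNReal NNReal
namespace DC

lemma enn_convex (x y : ℝ≥0∞) (s : ℝ) (hs : 0 < s) (hs1 : s < 1) (p : ℝ) (hp : 1 < p) :
    (x + y) ^ p ≤ ENNReal.ofReal ((1 - s) ^ (1 - p)) * x ^ p + ENNReal.ofReal (s ^ (1 - p)) * y ^ p := by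
  have key : ∀ (u : ℝ) (hu : 0 < u) (x : ℝ≥0∞), ENNReal.ofReal u * (ENNReal.ofReal u⁻¹ * x) = x ∧
      ENNReal.ofReal u * (ENNReal.ofReal u⁻¹ * x) ^ p = ENNReal.ofReal (u ^ (1 - p)) * x ^ p := by
    intro u hu x
    constructor
    · rw [← mul_assoc, ← ENNReal.ofReal_mul hu.le, mul_inv_cancel₀ hu.ne', ENNReal.ofReal_one, one_mul]
    · rw [ENNReal.mul_rpow_of_nonneg _ _ (by linarith), ← mul_assoc, ENNReal.ofReal_rpow_of_nonneg (by positivity) (by linarith),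
        ← ENNReal.ofReal_mul hu.le, Real.rpow_sub hu, Real.rpow_one, Real.inv_rpow hu.le, div_eq_mul_inv]
  have h := ENNReal.rpow_arith_mean_le_arith_mean2_rpow (ENNReal.ofReal (1 - s)) (ENNReal.ofReal s)
    (ENNReal.ofReal (1 - s)⁻¹ * x) (ENNReal.ofReal s⁻¹ * y)
    (by rw [← ENNReal.ofReal_add (by linarith) hs.le]; simp) hp.le
  rwa [(key _ (by linarith) x).1, (key _ hs y).1, (key _ (by linarith) x).2, (key _ hs y).2] at h

variable {n : ℕ}

/-- derivative bound in the radial variable -/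
lemma rad_deriv (w : EuclideanSpace ℝ (Fin (n + 1)) → ℝ) (hw : ContDiff ℝ 1 w) (κ R σ : ℝ) (hκ : 0 < κ) (hσ : |σ| = 1)
    (z0 : EuclideanSpace ℝ (Fin n)) (hz0 : ‖z0‖ ≤ 1) (a : ℝ) :
    ContDiff ℝ 1 (fun r : ℝ => w (io (σ * (R - r)) ((r / κ) • z0)) - a) ∧
    ∀ r, ‖deriv (fun r : ℝ => w (io (σ * (R - r)) ((r / κ) • z0)) - a) r‖ ≤
      (1 + 1 / κ) * ‖fderiv ℝ w (io (σ * (R - r)) ((r / κ) • z0))‖ := by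
  have hpar : ∀ r, io (σ * (R - r)) ((r / κ) • z0) = io (σ * R) 0 + r • io (-σ) ((1 / κ) • z0) := by
    intro r
    simp only [io, map_smul, smul_add, smul_smul, mul_sub, sub_smul, neg_smul, smul_neg, map_zero]
    rw [mul_comm r σ, mul_one_div]
    module
  simp_rw [hpar]
  refine ⟨(hw.comp (by fun_prop)).sub contDiff_const, ?_⟩
  intro r
  have h1 : HasDerivAt (fun r : ℝ => io (σ * R) 0 + r • io (-σ) ((1 / κ) • z0)) (io (-σ) ((1 / κ) • z0)) r := by
    have := ((hasDerivAt_id r).smul_const (io (-σ) ((1 / κ) • z0))).const_add (io (σ * R) 0)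
    simpa using this
  have h2 := (((hw.differentiable (by simp) _).hasFDerivAt).comp_hasDerivAt r h1).sub_const a
  have h3 : deriv (fun r : ℝ => w (io (σ * R) 0 + r • io (-σ) ((1 / κ) • z0)) - a) r = _ := h2.deriv
  rw [h3, mul_comm (1 + 1 / κ)]
  refine (ContinuousLinearMap.le_opNorm _ _).trans ?_
  gcongr
  refine (io_norm_le _ _).trans ?_
  rw [abs_neg, hσ, norm_smul, Real.norm_of_nonneg (by positivity)]
  gcongr
  exact mul_le_of_le_one_right (by positivity) hz0

lemma tan_deriv (w : EuclideanSpace ℝ (Fin (n + 1)) → ℝ) (hw : ContDiff ℝ 1 w) (t b : ℝ) (hb : 0 ≤ b) :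
    ContDiff ℝ 1 (fun z : EuclideanSpace ℝ (Fin n) => w (io t (b • z))) ∧
    ∀ z, ‖fderiv ℝ (fun z : EuclideanSpace ℝ (Fin n) => w (io t (b • z))) z‖ ≤ b * ‖fderiv ℝ w (io t (b • z))‖ := by
  have hpar : ∀ z : EuclideanSpace ℝ (Fin n), io t (b • z) = t • e0 n + (b • (Li n).toContinuousLinearMap) z := by
    intro z; simp [io]
  simp_rw [hpar]
  refine ⟨hw.comp (by fun_prop), ?_⟩
  intro z
  have h1 : HasFDerivAt (fun z : EuclideanSpace ℝ (Fin n) => t • e0 n + (b • (Li n).toContinuousLinearMap) z)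
      (b • (Li n).toContinuousLinearMap) z :=
    (b • (Li n).toContinuousLinearMap).hasFDerivAt.const_add _
  have h2 := ((hw.differentiable (by simp) _).hasFDerivAt).comp z h1
  have h3 : fderiv ℝ (fun z : EuclideanSpace ℝ (Fin n) => w (t • e0 n + (b • (Li n).toContinuousLinearMap) z)) z = _ := h2.fderiv
  rw [h3, mul_comm]
  refine (ContinuousLinearMap.opNorm_comp_le _ _).trans ?_
  gcongr
  rw [norm_smul, Real.norm_of_nonneg hb]
  exact mul_le_of_le_one_right hb (Li n).norm_toContinuousLinearMap_le

lemma enorm_mul_rpow_le {F G : Type*} [NormedAddCommGroup F] [NormedAddCommGroup G] (x : F) (y : G) (a p : ℝ) (ha : 0 ≤ a)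
    (hp : 0 ≤ p) (h : ‖x‖ ≤ a * ‖y‖) : ‖x‖ₑ ^ p ≤ ENNReal.ofReal (a ^ p) * ‖y‖ₑ ^ p := by
  rw [enorm_rpow_eq _ p hp, enorm_rpow_eq _ p hp, ← ENNReal.ofReal_mul (by positivity), ← Real.mul_rpow ha (norm_nonneg _)]
  exact ENNReal.ofReal_le_ofReal (Real.rpow_le_rpow (norm_nonneg _) h hp)

/-- pointwise in `z0` -/
lemma key_z0 (p : ℝ) (hp : 1 < p) (c : EuclideanSpace ℝ (Fin (n + 1))) (κ R σ : ℝ) (hκ : 0 < κ) (hR : 0 < R) (hσ : |σ| = 1)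
    (s : ℝ) (hs : 0 < s) (hs1 : s < 1)
    (w : EuclideanSpace ℝ (Fin (n + 1)) → ℝ) (hw : ContDiff ℝ 1 w) (z0 : EuclideanSpace ℝ (Fin n)) (hz0 : ‖z0‖ ≤ 1) :
    ENNReal.ofReal (lambdaPQ p p (ball c R)) * TT κ R (fun x => ‖w x - w (io 0 ((R / κ) • z0))‖ₑ ^ p) σ ≤
      (ENNReal.ofReal ((1 - s) ^ (1 - p) * (1 + 1 / κ) ^ p) * volume (ball (0 : EuclideanSpace ℝ (Fin n)) 1)) *
        (∫⁻ r in Ioo 0 R, ENNReal.ofReal (r ^ n) * ‖fderiv ℝ w (io (σ * (R - r)) ((r / κ) • z0))‖ₑ ^ p) +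
      ENNReal.ofReal (lambdaPQ p p (ball c R)) * ENNReal.ofReal (s ^ (1 - p)) *
        ∫⁻ r in Ioo 0 R, ENNReal.ofReal (r ^ n) * ∫⁻ z in ball (0 : EuclideanSpace ℝ (Fin n)) 1,
          ‖w (io (σ * (R - r)) ((r / κ) • z)) - w (io (σ * (R - r)) ((r / κ) • z0))‖ₑ ^ p := by
  have hp0 : 0 ≤ p := by linarith
  have hwc := hw.continuous
  have hdc := hw.continuous_fderiv (by simp)
  obtain ⟨hfc, hfd⟩ := rad_deriv w hw κ R σ hκ hσ z0 hz0 (w (io 0 ((R / κ) • z0)))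
  set a := w (io 0 ((R / κ) • z0)) with ha
  set A := volume (ball (0 : EuclideanSpace ℝ (Fin n)) 1) with hA
  have hAt : A ≠ ⊤ := measure_ball_lt_top.ne
  set f : ℝ → ℝ := fun r => w (io (σ * (R - r)) ((r / κ) • z0)) - a with hf
  have hfR : f R = 0 := by simp [hf, ha]
  have h1 := oneD p hp c R hR f hfc hfR 0 le_rfl hR.le
  have h1' : ENNReal.ofReal (lambdaPQ p p (ball c R)) * ∫⁻ r in Ioo 0 R, ENNReal.ofReal (r ^ n) * ‖f r‖ₑ ^ p ≤
      ENNReal.ofReal ((1 + 1 / κ) ^ p) * ∫⁻ r in Ioo 0 R, ENNReal.ofReal (r ^ n) * ‖fderiv ℝ w (io (σ * (R - r)) ((r / κ) • z0))‖ₑ ^ p := by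
    calc _ = ENNReal.ofReal (lambdaPQ p p (ball c R)) * ∫⁻ r in Ioo 0 R, ENNReal.ofReal (r ^ (n + 1 - 1)) * ‖f (max r 0)‖ₑ ^ p := by
          congr 1
          apply setLIntegral_congr_fun measurableSet_Ioo
          intro r hr
          simp only [Nat.add_sub_cancel]
          rw [max_eq_left hr.1.le]
      _ ≤ _ := h1
      _ ≤ _ := by
          rw [← lintegral_const_mul' _ _ ENNReal.ofReal_ne_top]
          apply lintegral_mono
          intro r
          simp only [Nat.add_sub_cancel]
          rw [mul_left_comm]
          apply mul_le_mul_right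
          exact enorm_mul_rpow_le _ _ _ _ (by positivity) hp0 (hfd r)
  have hcf : Continuous f := hfc.continuous
  have hm1 : Measurable (fun r : ℝ => ENNReal.ofReal (r ^ n) * ‖f r‖ₑ ^ p) := by
    have := hcf.measurable
    fun_prop
  have hcW : ∀ r, Continuous (fun z : EuclideanSpace ℝ (Fin n) => w (io (σ * (R - r)) ((r / κ) • z))) := fun r =>
    (hwc.comp (phi_cont κ R σ)).comp (by fun_prop : Continuous (fun z : EuclideanSpace ℝ (Fin n) => (r, z)))
  have h2 : TT κ R (fun x => ‖w x - a‖ₑ ^ p) σ ≤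
      ENNReal.ofReal ((1 - s) ^ (1 - p)) * A * (∫⁻ r in Ioo 0 R, ENNReal.ofReal (r ^ n) * ‖f r‖ₑ ^ p) +
      ENNReal.ofReal (s ^ (1 - p)) * ∫⁻ r in Ioo 0 R, ENNReal.ofReal (r ^ n) * ∫⁻ z in ball (0 : EuclideanSpace ℝ (Fin n)) 1,
          ‖w (io (σ * (R - r)) ((r / κ) • z)) - w (io (σ * (R - r)) ((r / κ) • z0))‖ₑ ^ p := by
    rw [← lintegral_const_mul' _ _ (ENNReal.mul_ne_top ENNReal.ofReal_ne_top hAt), ← lintegral_const_mul' _ _ ENNReal.ofReal_ne_top,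
      ← lintegral_add_left (hm1.const_mul _)]
    unfold TT
    apply lintegral_mono
    intro r
    simp only
    have h3 : ∫⁻ z in ball (0 : EuclideanSpace ℝ (Fin n)) 1, ‖w (io (σ * (R - r)) ((r / κ) • z)) - a‖ₑ ^ p ≤
        ENNReal.ofReal ((1 - s) ^ (1 - p)) * ‖f r‖ₑ ^ p * A + ENNReal.ofReal (s ^ (1 - p)) *
          ∫⁻ z in ball (0 : EuclideanSpace ℝ (Fin n)) 1,
          ‖w (io (σ * (R - r)) ((r / κ) • z)) - w (io (σ * (R - r)) ((r / κ) • z0))‖ₑ ^ p := by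
      rw [← setLIntegral_const, ← lintegral_const_mul' _ _ ENNReal.ofReal_ne_top, ← lintegral_add_left measurable_const]
      apply lintegral_mono
      intro z
      refine le_trans (ENNReal.rpow_le_rpow ?_ hp0) (enn_convex _ _ s hs hs1 p hp)
      simp only [hf]
      refine le_trans (le_of_eq ?_) (enorm_add_le _ _)
      congr 1; ring
    refine (mul_le_mul_right h3 _).trans (le_of_eq ?_)
    ring
  calc _ ≤ _ := mul_le_mul_right h2 _
    _ = ENNReal.ofReal ((1 - s) ^ (1 - p)) * A * (ENNReal.ofReal (lambdaPQ p p (ball c R)) * ∫⁻ r in Ioo 0 R, ENNReal.ofReal (r ^ n) * ‖f r‖ₑ ^ p) + ENNReal.ofReal (lambdaPQ p p (ball c R)) * ENNReal.ofReal (s ^ (1 - p)) *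
        ∫⁻ r in Ioo 0 R, ENNReal.ofReal (r ^ n) * ∫⁻ z in ball (0 : EuclideanSpace ℝ (Fin n)) 1,
          ‖w (io (σ * (R - r)) ((r / κ) • z)) - w (io (σ * (R - r)) ((r / κ) • z0))‖ₑ ^ p := by ring
    _ ≤ _ := by
        apply add_le_add _ le_rfl
        refine (mul_le_mul_right h1' _).trans (le_of_eq ?_)
        rw [ENNReal.ofReal_mul (Real.rpow_nonneg (by linarith) _)]
        ring

end DC
end

section
open Filter Topology ENNReal NNReal
namespace DC
variable {n : ℕ}

noncomputable def CC (n : ℕ) (p lam κ R s : ℝ) : ℝ :=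
  (1 - s) ^ (1 - p) * (1 + 1 / κ) ^ p + lam * s ^ (1 - p) * (2 ^ p * 2 ^ n) * (R / κ) ^ p

lemma key_sigma (p : ℝ) (hp : 1 < p) (c : EuclideanSpace ℝ (Fin (n + 1))) (κ R σ : ℝ) (hκ : 0 < κ) (hR : 0 < R) (hσ : |σ| = 1)
    (s : ℝ) (hs : 0 < s) (hs1 : s < 1)
    (w : EuclideanSpace ℝ (Fin (n + 1)) → ℝ) (hw : ContDiff ℝ 1 w) :
    ENNReal.ofReal (lambdaPQ p p (ball c R)) * ∫⁻ z0 in ball (0 : EuclideanSpace ℝ (Fin n)) 1,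
        TT κ R (fun x => ‖w x - w (io 0 ((R / κ) • z0))‖ₑ ^ p) σ ≤
      volume (ball (0 : EuclideanSpace ℝ (Fin n)) 1) * (ENNReal.ofReal (CC n p (lambdaPQ p p (ball c R)) κ R s) *
        TT κ R (fun x => ‖fderiv ℝ w x‖ₑ ^ p) σ) := by
  have hp0 : 0 ≤ p := by linarith
  have hwc := hw.continuous
  have hdc := hw.continuous_fderiv (by simp)
  have hlam : 0 ≤ lambdaPQ p p (ball c R) := lam_nonneg _ _
  have hz := key_z0 (n := n) p hp c κ R σ hκ hR hσ s hs hs1 w hw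
  generalize lambdaPQ p p (ball c R) = lam at *
  set A := volume (ball (0 : EuclideanSpace ℝ (Fin n)) 1) with hA
  have hAt : A ≠ ⊤ := measure_ball_lt_top.ne
  set X := TT κ R (fun x => ‖fderiv ℝ w x‖ₑ ^ p) σ with hX
  have hΦ := phi_cont (n := n) κ R σ
  have hcW : Continuous (fun q : ℝ × EuclideanSpace ℝ (Fin n) => w (io (σ * (R - q.1)) ((q.1 / κ) • q.2))) := hwc.comp hΦ
  have hcD : Continuous (fun q : ℝ × EuclideanSpace ℝ (Fin n) => fderiv ℝ w (io (σ * (R - q.1)) ((q.1 / κ) • q.2))) := hdc.comp hΦ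
  have hmD : Measurable (fun q : ℝ × EuclideanSpace ℝ (Fin n) =>
      ENNReal.ofReal (q.1 ^ n) * ‖fderiv ℝ w (io (σ * (R - q.1)) ((q.1 / κ) • q.2))‖ₑ ^ p) := by
    have := hcD.measurable
    fun_prop
  have hmD' : Measurable (fun q : EuclideanSpace ℝ (Fin n) × ℝ =>
      ENNReal.ofReal (q.2 ^ n) * ‖fderiv ℝ w (io (σ * (R - q.2)) ((q.2 / κ) • q.1))‖ₑ ^ p) := hmD.comp measurable_swap
  have hcQ : Continuous (fun q : (EuclideanSpace ℝ (Fin n) × ℝ) × EuclideanSpace ℝ (Fin n) =>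
      w (io (σ * (R - q.1.2)) ((q.1.2 / κ) • q.2)) - w (io (σ * (R - q.1.2)) ((q.1.2 / κ) • q.1.1))) :=
    (hcW.comp (by fun_prop : Continuous (fun q : (EuclideanSpace ℝ (Fin n) × ℝ) × EuclideanSpace ℝ (Fin n) => (q.1.2, q.2)))).sub
    (hcW.comp (by fun_prop : Continuous (fun q : (EuclideanSpace ℝ (Fin n) × ℝ) × EuclideanSpace ℝ (Fin n) => (q.1.2, q.1.1))))
  have hmQ0 : Measurable (fun q : EuclideanSpace ℝ (Fin n) × ℝ => ∫⁻ z in ball (0 : EuclideanSpace ℝ (Fin n)) 1,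
      ‖w (io (σ * (R - q.2)) ((q.2 / κ) • z)) - w (io (σ * (R - q.2)) ((q.2 / κ) • q.1))‖ₑ ^ p) :=
    Measurable.lintegral_prod_right' (hcQ.measurable.enorm.pow_const p)
  have hmQ : Measurable (fun q : EuclideanSpace ℝ (Fin n) × ℝ => ENNReal.ofReal (q.2 ^ n) * ∫⁻ z in ball (0 : EuclideanSpace ℝ (Fin n)) 1,
      ‖w (io (σ * (R - q.2)) ((q.2 / κ) • z)) - w (io (σ * (R - q.2)) ((q.2 / κ) • q.1))‖ₑ ^ p) := by
    fun_prop
  have e1 : ∫⁻ z0 in ball (0 : EuclideanSpace ℝ (Fin n)) 1, ∫⁻ r in Ioo 0 R, ENNReal.ofReal (r ^ n) *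
      ‖fderiv ℝ w (io (σ * (R - r)) ((r / κ) • z0))‖ₑ ^ p = X := by
    rw [lintegral_lintegral_swap hmD'.aemeasurable, hX]
    unfold TT
    apply lintegral_congr
    intro r
    rw [lintegral_const_mul' _ _ ENNReal.ofReal_ne_top]
  have e2 : ∫⁻ z0 in ball (0 : EuclideanSpace ℝ (Fin n)) 1, ∫⁻ r in Ioo 0 R, ENNReal.ofReal (r ^ n) * ∫⁻ z in ball (0 : EuclideanSpace ℝ (Fin n)) 1,
      ‖w (io (σ * (R - r)) ((r / κ) • z)) - w (io (σ * (R - r)) ((r / κ) • z0))‖ₑ ^ p ≤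
      ENNReal.ofReal (2 ^ p * 2 ^ n) * A * ENNReal.ofReal ((R / κ) ^ p) * X := by
    rw [lintegral_lintegral_swap hmQ.aemeasurable, hX]
    unfold TT
    rw [← lintegral_const_mul' _ _ (ENNReal.mul_ne_top (ENNReal.mul_ne_top ENNReal.ofReal_ne_top hAt) ENNReal.ofReal_ne_top)]
    apply setLIntegral_mono' measurableSet_Ioo
    intro r hr
    rw [lintegral_const_mul' _ _ ENNReal.ofReal_ne_top]
    obtain ⟨hc1, hd1⟩ := tan_deriv w hw (σ * (R - r)) (r / κ) (by have := hr.1; positivity)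
    have hb := ball_poincare volume _ hc1 p hp
    rw [finrank_euclideanSpace_fin] at hb
    have h3 : ∫⁻ z in ball (0 : EuclideanSpace ℝ (Fin n)) 1, ‖fderiv ℝ (fun z : EuclideanSpace ℝ (Fin n) => w (io (σ * (R - r)) ((r / κ) • z))) z‖ₑ ^ p ≤
        ENNReal.ofReal ((R / κ) ^ p) * ∫⁻ z in ball (0 : EuclideanSpace ℝ (Fin n)) 1, ‖fderiv ℝ w (io (σ * (R - r)) ((r / κ) • z))‖ₑ ^ p := by
      rw [← lintegral_const_mul' _ _ ENNReal.ofReal_ne_top]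
      apply lintegral_mono
      intro z
      apply enorm_mul_rpow_le _ _ _ _ (by positivity) hp0
      refine (hd1 z).trans ?_
      gcongr
      exact hr.2.le
    calc _ ≤ ENNReal.ofReal (r ^ n) * (ENNReal.ofReal (2 ^ p * 2 ^ n) * A * (ENNReal.ofReal ((R / κ) ^ p) * ∫⁻ z in ball (0 : EuclideanSpace ℝ (Fin n)) 1, ‖fderiv ℝ w (io (σ * (R - r)) ((r / κ) • z))‖ₑ ^ p)) :=
          mul_le_mul_right (hb.trans (mul_le_mul_right h3 _)) _
      _ = _ := by ring
  have h1s : 0 ≤ 1 - s := by linarith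
  rw [← lintegral_const_mul' _ _ ENNReal.ofReal_ne_top]
  calc _ ≤ _ := setLIntegral_mono' measurableSet_ball (fun z0 hz0 => hz z0 (mem_ball_zero_iff.1 hz0).le)
    _ = _ := by
      rw [lintegral_add_left (hmD'.lintegral_prod_right'.const_mul _),
        lintegral_const_mul' _ _ (ENNReal.mul_ne_top ENNReal.ofReal_ne_top hAt),
        lintegral_const_mul' _ _ (ENNReal.mul_ne_top ENNReal.ofReal_ne_top ENNReal.ofReal_ne_top)]
    _ ≤ _ := add_le_add (mul_le_mul_right e1.le _) (mul_le_mul_right e2 _)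
    _ = _ := by
      unfold CC
      rw [ENNReal.ofReal_add (by positivity) (by positivity), ENNReal.ofReal_mul (p := lam * s ^ (1 - p) * (2 ^ p * 2 ^ n)) (by positivity),
        ENNReal.ofReal_mul (p := lam * s ^ (1 - p)) (by positivity),
        ENNReal.ofReal_mul (p := lam) (by positivity)]
      ring

lemma cone_key (p : ℝ) (hp : 1 < p) (c : EuclideanSpace ℝ (Fin (n + 1))) (κ R : ℝ) (hκ : 0 < κ) (hR : 0 < R)
    (s : ℝ) (hs : 0 < s) (hs1 : s < 1)
    (w : EuclideanSpace ℝ (Fin (n + 1)) → ℝ) (hw : ContDiff ℝ 1 w) (m : ℝ≥0∞)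
    (hm : ∀ a : ℝ, m ≤ ∫⁻ x in cone n κ R, ‖w x - a‖ₑ ^ p) :
    ENNReal.ofReal (lambdaPQ p p (ball c R)) * m ≤
      ENNReal.ofReal (CC n p (lambdaPQ p p (ball c R)) κ R s) * ∫⁻ x in cone n κ R, ‖fderiv ℝ w x‖ₑ ^ p := by
  have hwc := hw.continuous
  have hdc := hw.continuous_fderiv (by simp)
  set A := volume (ball (0 : EuclideanSpace ℝ (Fin n)) 1) with hA
  have hAt : A ≠ ⊤ := measure_ball_lt_top.ne
  have hA0 : A ≠ 0 := (measure_ball_pos volume _ one_pos).ne'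
  have k1 := key_sigma (n := n) p hp c κ R 1 hκ hR (by simp) s hs hs1 w hw
  have k2 := key_sigma (n := n) p hp c κ R (-1) hκ hR (by simp) s hs hs1 w hw
  generalize lambdaPQ p p (ball c R) = lam at *
  rw [← ENNReal.mul_le_mul_iff_right hA0 hAt]
  have hmT : Measurable (fun z0 : EuclideanSpace ℝ (Fin n) => TT κ R (fun x => ‖w x - w (io 0 ((R / κ) • z0))‖ₑ ^ p) 1) := by
    unfold TT
    have hc0 : Continuous (fun z0 : EuclideanSpace ℝ (Fin n) => w (io 0 ((R / κ) • z0))) :=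
      hwc.comp (io_cont.comp (by fun_prop : Continuous (fun z0 : EuclideanSpace ℝ (Fin n) => ((0:ℝ), (R / κ) • z0))))
    have hcQ : Continuous (fun q : (EuclideanSpace ℝ (Fin n) × ℝ) × EuclideanSpace ℝ (Fin n) =>
        w (io (1 * (R - q.1.2)) ((q.1.2 / κ) • q.2)) - w (io 0 ((R / κ) • q.1.1))) :=
      ((hwc.comp (phi_cont κ R 1)).comp (by fun_prop : Continuous (fun q : (EuclideanSpace ℝ (Fin n) × ℝ) × EuclideanSpace ℝ (Fin n) => (q.1.2, q.2)))).sub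
      (hc0.comp (by fun_prop : Continuous (fun q : (EuclideanSpace ℝ (Fin n) × ℝ) × EuclideanSpace ℝ (Fin n) => q.1.1)))
    have hmQ0 : Measurable (fun q : EuclideanSpace ℝ (Fin n) × ℝ => ∫⁻ z in ball (0 : EuclideanSpace ℝ (Fin n)) 1,
        ‖w (io (1 * (R - q.2)) ((q.2 / κ) • z)) - w (io 0 ((R / κ) • q.1))‖ₑ ^ p) :=
      Measurable.lintegral_prod_right' (hcQ.measurable.enorm.pow_const p)
    have hmQ : Measurable (fun q : EuclideanSpace ℝ (Fin n) × ℝ => ENNReal.ofReal (q.2 ^ n) * ∫⁻ z in ball (0 : EuclideanSpace ℝ (Fin n)) 1,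
        ‖w (io (1 * (R - q.2)) ((q.2 / κ) • z)) - w (io 0 ((R / κ) • q.1))‖ₑ ^ p) := by
      fun_prop
    exact hmQ.lintegral_prod_right'
  have h1 : A * m ≤ ENNReal.ofReal ((κ ^ n)⁻¹) * ((∫⁻ z0 in ball (0 : EuclideanSpace ℝ (Fin n)) 1,
        TT κ R (fun x => ‖w x - w (io 0 ((R / κ) • z0))‖ₑ ^ p) 1) + ∫⁻ z0 in ball (0 : EuclideanSpace ℝ (Fin n)) 1,
        TT κ R (fun x => ‖w x - w (io 0 ((R / κ) • z0))‖ₑ ^ p) (-1)) := by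
    rw [mul_comm A, ← setLIntegral_const, ← lintegral_add_left hmT, ← lintegral_const_mul' _ _ ENNReal.ofReal_ne_top]
    apply lintegral_mono
    intro z0
    refine (hm (w (io 0 ((R / κ) • z0)))).trans (le_of_eq ?_)
    exact cone_int κ R hκ hR _ ((hwc.measurable.sub_const _).enorm.pow_const p)
  rw [cone_int κ R hκ hR _ (hdc.measurable.enorm.pow_const p)]
  calc A * (ENNReal.ofReal lam * m) = ENNReal.ofReal lam * (A * m) := by ring
    _ ≤ _ := mul_le_mul_right h1 _
    _ = ENNReal.ofReal ((κ ^ n)⁻¹) * ((ENNReal.ofReal lam * ∫⁻ z0 in ball (0 : EuclideanSpace ℝ (Fin n)) 1,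
        TT κ R (fun x => ‖w x - w (io 0 ((R / κ) • z0))‖ₑ ^ p) 1) + ENNReal.ofReal lam * ∫⁻ z0 in ball (0 : EuclideanSpace ℝ (Fin n)) 1,
        TT κ R (fun x => ‖w x - w (io 0 ((R / κ) • z0))‖ₑ ^ p) (-1)) := by ring
    _ ≤ _ := mul_le_mul_right (add_le_add k1 k2) _
    _ = _ := by ring

end DC
end

section
open Filter Topology ENNReal NNReal
namespace DC
variable {n : ℕ}

lemma cone_sub (κ R : ℝ) (hκ : 1 ≤ κ) : cone n κ R ⊆ ball 0 R := by
  intro x hx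
  obtain ⟨t, z, rfl⟩ := io_surj x
  rw [mem_cone] at hx
  rw [mem_ball_zero_iff]
  have h1 := io_norm_le t z
  have h2 : ‖z‖ ≤ κ * ‖z‖ := le_mul_of_one_le_left (norm_nonneg _) hκ
  linarith

lemma cone_bdd (κ R : ℝ) (hκ : 1 ≤ κ) : Bornology.IsBounded (cone n κ R) := isBounded_ball.subset (cone_sub κ R hκ)

lemma io_comb (a b t s : ℝ) (z y : EuclideanSpace ℝ (Fin n)) : a • io t z + b • io s y = io (a * t + b * s) (a • z + b • y) := by
  simp only [io, map_add, map_smul]; module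

lemma cone_convex (κ R : ℝ) (hκ : 1 ≤ κ) : Convex ℝ (cone n κ R) := by
  rw [convex_iff_forall_pos]
  intro x hx y hy a b ha hb hab
  obtain ⟨t, z, rfl⟩ := io_surj x
  obtain ⟨s, u, rfl⟩ := io_surj y
  rw [mem_cone] at hx hy
  rw [io_comb, mem_cone]
  have h1 : ‖a • z + b • u‖ ≤ a * ‖z‖ + b * ‖u‖ := by
    refine (norm_add_le _ _).trans (le_of_eq ?_)
    rw [norm_smul, norm_smul, Real.norm_of_nonneg ha.le, Real.norm_of_nonneg hb.le]
  have h2 : |a * t + b * s| ≤ a * |t| + b * |s| := by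
    refine (abs_add_le _ _).trans (le_of_eq ?_)
    rw [abs_mul, abs_mul, abs_of_pos ha, abs_of_pos hb]
  have h3 : κ * ‖a • z + b • u‖ ≤ κ * (a * ‖z‖ + b * ‖u‖) := by gcongr
  have h4 := mul_lt_mul_of_pos_left hx ha
  have h5 := mul_lt_mul_of_pos_left hy hb
  have h6 : a * R + b * R = R := by rw [← add_mul, hab, one_mul]
  nlinarith

lemma mem_axis (κ R t : ℝ) (ht : |t| < R) : io t (0 : EuclideanSpace ℝ (Fin n)) ∈ cone n κ R := by
  rw [mem_cone]; simpa using ht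

lemma axis_dist (t s : ℝ) : dist (io t (0 : EuclideanSpace ℝ (Fin n))) (io s 0) = |t - s| := by
  rw [dist_eq_norm, io_sub]
  simp [io, norm_smul, e0_norm]

lemma cone_diam (κ R : ℝ) (hκ : 1 ≤ κ) (hR : 0 < R) : diam (cone n κ R) = 2 * R := by
  apply le_antisymm
  · apply diam_le_of_forall_dist_le (by positivity)
    intro x hx y hy
    have h1 := cone_sub κ R hκ hx
    have h2 := cone_sub κ R hκ hy
    rw [mem_ball_zero_iff] at h1 h2
    rw [dist_eq_norm]
    linarith [norm_sub_le x y]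
  · apply _root_.le_of_forall_pos_le_add
    intro ε hε
    have hδ0 : 0 < min (ε / 2) R := by positivity
    have hδ1 := min_le_left (ε / 2) R
    have hδ2 := min_le_right (ε / 2) R
    set δ := min (ε / 2) R
    have h1 : |R - δ| < R := by rw [abs_of_nonneg (by linarith)]; linarith
    have h := dist_le_diam_of_mem (cone_bdd κ R hκ) (mem_axis (n := n) κ R (R - δ) h1) (mem_axis κ R (-(R - δ)) (by rwa [abs_neg]))
    rw [axis_dist, abs_of_nonneg (by linarith)] at h
    linarith

lemma single_io (a : ℝ) : EuclideanSpace.single (0 : Fin (n + 1)) a = io a (0 : EuclideanSpace ℝ (Fin n)) := by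
  rw [io_eq]
  ext i
  refine Fin.cases ?_ (fun j => ?_) i <;> simp

lemma mem_seg (R : ℝ) (hR : 0 < R) (t : ℝ) (ht : |t| ≤ R) :
    io t (0 : EuclideanSpace ℝ (Fin n)) ∈ segment ℝ (io (-R) (0 : EuclideanSpace ℝ (Fin n))) (io R 0) := by
  rw [abs_le] at ht
  refine ⟨(R - t) / (2 * R), (R + t) / (2 * R), div_nonneg (by linarith) (by linarith), div_nonneg (by linarith) (by linarith), ?_, ?_⟩
  · field_simp; ring
  · rw [io_comb]
    congr 1
    · field_simp; ring
    · simp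

lemma cone_haus (κ R : ℝ) (hκ : 1 ≤ κ) (hR : 0 < R) :
    hausdorffDist (cone n κ R) (segment ℝ (EuclideanSpace.single (0 : Fin (n + 1)) (-R)) (EuclideanSpace.single 0 R)) ≤ R / κ := by
  have hκ0 : 0 < κ := by linarith
  rw [single_io, single_io]
  apply hausdorffDist_le_of_mem_dist (by positivity)
  · intro x hx
    obtain ⟨t, z, rfl⟩ := io_surj x
    rw [mem_cone] at hx
    have hz : 0 ≤ κ * ‖z‖ := by positivity
    refine ⟨io t 0, mem_seg R hR t (by linarith), ?_⟩
    rw [dist_eq_norm, io_sub]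
    refine (io_norm_le _ _).trans ?_
    rw [sub_self, abs_zero, sub_zero, zero_add, le_div_iff₀ hκ0]
    linarith [abs_nonneg t]
  · rintro y ⟨a, b, ha, hb, hab, rfl⟩
    rw [io_comb]
    simp only [smul_zero, add_zero]
    have ht : |a * -R + b * R| ≤ R := by
      rw [abs_le]; constructor <;> nlinarith
    set t := a * -R + b * R
    have hk : 0 ≤ 1 - 1 / κ := by
      have : 1 / κ ≤ 1 := by rw [div_le_one hκ0]; exact hκ
      linarith
    have hk1 : 0 < 1 / κ := by positivity
    refine ⟨io (t * (1 - 1 / κ)) 0, mem_axis _ _ _ ?_, ?_⟩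
    · rw [abs_mul, abs_of_nonneg hk]
      nlinarith
    · rw [axis_dist, show t - t * (1 - 1 / κ) = t / κ by ring, abs_div, abs_of_pos hκ0]
      gcongr

end DC
end

section
open Filter Topology ENNReal NNReal
namespace DC
variable {n : ℕ}

lemma pw_convex (p : ℝ) (hp : 1 < p) (x y : ℝ) : |x| ^ p + p * (|x| ^ (p - 2) * x) * (y - x) ≤ |y| ^ p := by
  rcases eq_or_ne x 0 with rfl | hx
  · simp only [abs_zero, mul_zero, zero_mul, add_zero]
    rw [Real.zero_rpow (by linarith)]; positivity
  have hx0 : 0 < |x| := abs_pos.2 hx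
  have h1 : |x| ^ (p - 2) * x * x = |x| ^ p := by
    have h : |x| ^ p = |x| ^ (p - 2) * |x| * |x| := by
      rw [← Real.rpow_add_one hx0.ne', ← Real.rpow_add_one hx0.ne']
      congr 1; ring
    rw [h, mul_assoc, mul_assoc, abs_mul_abs_self x]
  have h2 : |x| ^ (p - 2) * x * y ≤ |x| ^ (p - 1) * |y| := by
    refine (le_abs_self _).trans (le_of_eq ?_)
    rw [abs_mul, abs_mul, abs_of_pos (Real.rpow_pos_of_pos hx0 _), ← Real.rpow_add_one hx0.ne']
    congr 2; ring
  have hc := Real.HolderConjugate.conjExponent hp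
  have h3 := Real.young_inequality_of_nonneg (abs_nonneg y) (Real.rpow_nonneg hx0.le (p - 1)) hc
  rw [← Real.rpow_mul hx0.le, Real.conjExponent, mul_div_cancel₀ _ (by linarith : p - 1 ≠ 0)] at h3
  have hp0 : 0 < p := by linarith
  have h4 : p * (|y| * |x| ^ (p - 1)) ≤ |y| ^ p + (p - 1) * |x| ^ p := by
    have := mul_le_mul_of_nonneg_left h3 hp0.le
    refine this.trans (le_of_eq ?_)
    have : p - 1 ≠ 0 := by linarith
    field_simp
  nlinarith

lemma min_at_zero (p : ℝ) (hp : 1 < p) (Ω : Set (EuclideanSpace ℝ (Fin (n + 1)))) (hb : Bornology.IsBounded Ω)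
    (v : EuclideanSpace ℝ (Fin (n + 1)) → ℝ) (hv : Continuous v) (h0 : (∫ x in Ω, |v x| ^ (p - 2) * v x) = 0) (a : ℝ) :
    ∫⁻ x in Ω, ‖v x‖ₑ ^ p ≤ ∫⁻ x in Ω, ‖v x - a‖ₑ ^ p := by
  have hp0 : 0 ≤ p := by linarith
  have hcp := hb.isCompact_closure
  have hint : ∀ g : EuclideanSpace ℝ (Fin (n + 1)) → ℝ, Continuous g → IntegrableOn g Ω := fun g hg =>
    (hg.continuousOn.integrableOn_compact hcp).mono_set subset_closure
  have i1 := hint (fun x => |v x| ^ p) (hv.abs.rpow_const (fun x => Or.inr hp0))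
  have i2 := hint (fun x => |v x - a| ^ p) ((hv.sub continuous_const).abs.rpow_const (fun x => Or.inr hp0))
  have i3 : IntegrableOn (fun x => |v x| ^ (p - 2) * v x) Ω := by
    apply Integrable.mono' (hint (fun x => |v x| ^ (p - 1)) (hv.abs.rpow_const (fun x => Or.inr (by linarith))))
    · have := hv.measurable
      apply Measurable.aestronglyMeasurable
      fun_prop
    · apply Eventually.of_forall
      intro x
      rw [norm_mul, Real.norm_eq_abs, Real.norm_eq_abs, abs_of_nonneg (by positivity)]
      rcases (abs_nonneg (v x)).eq_or_lt with h | h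
      · rw [← h, mul_zero]; positivity
      · rw [← Real.rpow_add_one h.ne']
        apply le_of_eq; congr 1; ring
  have h1 : ∫ x in Ω, |v x| ^ p ≤ ∫ x in Ω, |v x - a| ^ p := by
    have : ∫ x in Ω, (|v x| ^ p + (-(p * a)) * (|v x| ^ (p - 2) * v x)) ≤ ∫ x in Ω, |v x - a| ^ p := by
      apply integral_mono (i1.add (i3.const_mul _)) i2
      intro x
      have := pw_convex p hp (v x) (v x - a)
      rw [sub_sub_cancel_left] at this
      refine le_trans (le_of_eq ?_) this
      simp only [Pi.add_apply]
      ring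
    rwa [integral_add i1 (i3.const_mul _), integral_const_mul, h0, mul_zero, add_zero] at this
  have conv : ∀ g : EuclideanSpace ℝ (Fin (n + 1)) → ℝ, IntegrableOn (fun x => |g x| ^ p) Ω →
      ∫⁻ x in Ω, ‖g x‖ₑ ^ p = ENNReal.ofReal (∫ x in Ω, |g x| ^ p) := by
    intro g hg
    rw [ofReal_integral_eq_lintegral_ofReal hg (Eventually.of_forall fun x => by positivity)]
    apply lintegral_congr
    intro x
    rw [enorm_rpow_eq _ p hp0, Real.norm_eq_abs]
  rw [conv v i1, conv (fun x => v x - a) i2]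
  exact ENNReal.ofReal_le_ofReal h1

lemma cone_lip (p : ℝ) (hp : 1 < p) (c : EuclideanSpace ℝ (Fin (n + 1))) (κ R : ℝ) (hκ : 1 ≤ κ) (hR : 0 < R)
    (s : ℝ) (hs : 0 < s) (hs1 : s < 1)
    (v : EuclideanSpace ℝ (Fin (n + 1)) → ℝ) (K : ℝ≥0) (hv : LipschitzWith K v)
    (hm : ∀ a : ℝ, ∫⁻ x in cone n κ R, ‖v x‖ₑ ^ p ≤ ∫⁻ x in cone n κ R, ‖v x - a‖ₑ ^ p) :
    ENNReal.ofReal (lambdaPQ p p (ball c R)) * (ENNReal.ofReal ((1 - s) ^ (p - 1)) * ∫⁻ x in cone n κ R, ‖v x‖ₑ ^ p) ≤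
      ENNReal.ofReal (CC n p (lambdaPQ p p (ball c R)) κ R s) * ∫⁻ x in cone n κ R, ‖fderiv ℝ v x‖ₑ ^ p := by
  have hp0 : 0 ≤ p := by linarith
  have h1s : 0 < 1 - s := by linarith
  obtain ⟨φ, hφ, hφd, hφv, -, hφl⟩ := mollify v K hv
  set Ω := cone n κ R with hΩ
  have ho : IsOpen Ω := cone_open n κ R
  have hvol : volume Ω ≠ ⊤ := (cone_bdd κ R hκ).measure_lt_top.ne
  let δ : ℕ → ℝ≥0∞ := fun j => ENNReal.ofReal (s ^ (1 - p)) * (ENNReal.ofReal ((K * (1 / ((j:ℝ) + 1))) ^ p) * volume Ω)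
  have hδ : Tendsto δ atTop (𝓝 0) := by
    have h1 : Tendsto (fun j : ℕ => ((K : ℝ) * (1 / ((j:ℝ) + 1))) ^ p) atTop (𝓝 0) := by
      have := ((tendsto_one_div_add_atTop_nhds_zero_nat (𝕜 := ℝ)).const_mul (K : ℝ)).rpow_const (p := p) (Or.inr hp0)
      rwa [mul_zero, Real.zero_rpow (by linarith)] at this
    have h2 := ENNReal.tendsto_ofReal h1
    have h3 := ENNReal.Tendsto.const_mul (a := ENNReal.ofReal (s ^ (1 - p)))
      (ENNReal.Tendsto.mul_const (b := volume Ω) h2 (Or.inr hvol)) (Or.inr ENNReal.ofReal_ne_top)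
    rw [ENNReal.ofReal_zero, zero_mul, mul_zero] at h3
    exact h3
  set Y := ∫⁻ x in Ω, ‖v x‖ₑ ^ p with hY
  have hj : ∀ j, ENNReal.ofReal (lambdaPQ p p (ball c R)) * (ENNReal.ofReal ((1 - s) ^ (p - 1)) * (Y - δ j)) ≤
      ENNReal.ofReal (CC n p (lambdaPQ p p (ball c R)) κ R s) * ∫⁻ x in Ω, ‖fderiv ℝ (φ j) x‖ₑ ^ p := by
    intro j
    apply cone_key p hp c κ R (by linarith) hR s hs hs1 (φ j) ((hφ j).of_le (by simp))
    intro a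
    have hmeas : Measurable (fun x => ‖φ j x - a‖ₑ ^ p) := ((hφ j).continuous.measurable.sub_const _).enorm.pow_const p
    have h1 : Y ≤ ENNReal.ofReal ((1 - s) ^ (1 - p)) * (∫⁻ x in Ω, ‖φ j x - a‖ₑ ^ p) + δ j := by
      refine (hm a).trans ?_
      simp only [δ]
      rw [← setLIntegral_const, ← lintegral_const_mul' _ _ ENNReal.ofReal_ne_top, ← lintegral_const_mul' _ _ ENNReal.ofReal_ne_top,
        ← lintegral_add_left (hmeas.const_mul _)]
      apply lintegral_mono
      intro x
      have h2 : ‖v x - φ j x‖ₑ ^ p ≤ ENNReal.ofReal ((K * (1 / ((j:ℝ) + 1))) ^ p) := by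
        rw [enorm_rpow_eq _ p hp0]
        apply ENNReal.ofReal_le_ofReal
        apply Real.rpow_le_rpow (norm_nonneg _) _ hp0
        rw [Real.norm_eq_abs, abs_sub_comm]
        exact hφv j x
      refine le_trans ?_ (add_le_add le_rfl (mul_le_mul_right h2 _))
      refine le_trans (ENNReal.rpow_le_rpow ?_ hp0) (enn_convex _ _ s hs hs1 p hp)
      refine le_trans (le_of_eq ?_) (enorm_add_le _ _)
      congr 1; ring
    have h3 : Y - δ j ≤ ENNReal.ofReal ((1 - s) ^ (1 - p)) * (∫⁻ x in Ω, ‖φ j x - a‖ₑ ^ p) := tsub_le_iff_right.2 h1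
    refine (mul_le_mul_right h3 _).trans (le_of_eq ?_)
    rw [← mul_assoc, ← ENNReal.ofReal_mul (by positivity), ← Real.rpow_add h1s,
      show p - 1 + (1 - p) = 0 by ring, Real.rpow_zero, ENNReal.ofReal_one, one_mul]
  have hL : Tendsto (fun j => ENNReal.ofReal (lambdaPQ p p (ball c R)) * (ENNReal.ofReal ((1 - s) ^ (p - 1)) * (Y - δ j))) atTop
      (𝓝 (ENNReal.ofReal (lambdaPQ p p (ball c R)) * (ENNReal.ofReal ((1 - s) ^ (p - 1)) * Y))) := by
    have : Tendsto (fun j => Y - δ j) atTop (𝓝 (Y - 0)) :=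
      ENNReal.Tendsto.sub tendsto_const_nhds hδ (Or.inr ENNReal.zero_ne_top)
    rw [tsub_zero] at this
    exact ENNReal.Tendsto.const_mul (ENNReal.Tendsto.const_mul this (Or.inr ENNReal.ofReal_ne_top)) (Or.inr ENNReal.ofReal_ne_top)
  have hR' := dct (μ := volume) (fun j x => fderiv ℝ (φ j) x) (fun x => fderiv ℝ v x) p hp0 Ω hvol ho.measurableSet K
    (fun j x _ => hφd j x) (fun j => ((hφ j).continuous_fderiv (by simp)).aestronglyMeasurable) hφl
  exact le_of_tendsto_of_tendsto' hL (ENNReal.Tendsto.const_mul hR' (Or.inr ENNReal.ofReal_ne_top)) hj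

end DC
end

section
open Filter Topology ENNReal NNReal
namespace DC
variable {n : ℕ}

lemma CC_pos (p lam κ R s : ℝ) (hlam : 0 ≤ lam) (hκ : 0 < κ) (hR : 0 < R) (hs : 0 < s) (hs1 : s < 1) : 0 < CC n p lam κ R s := by
  have : 0 < 1 - s := by linarith
  unfold CC
  positivity

lemma ray_lower (p : ℝ) (hp : 1 < p) (c : EuclideanSpace ℝ (Fin (n + 1))) (κ R : ℝ) (hκ : 1 ≤ κ) (hR : 0 < R)
    (s : ℝ) (hs : 0 < s) (hs1 : s < 1)
    (v : EuclideanSpace ℝ (Fin (n + 1)) → ℝ) (K : ℝ≥0) (hv : LipschitzOnWith K v (closure (cone n κ R)))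
    (hne : ∃ x ∈ cone n κ R, v x ≠ 0) (h0 : (∫ x in cone n κ R, |v x| ^ (p - 2) * v x) = 0) :
    lambdaPQ p p (ball c R) * (1 - s) ^ (p - 1) / CC n p (lambdaPQ p p (ball c R)) κ R s ≤ rayleighQuot p p (cone n κ R) v := by
  have hp0 : 0 ≤ p := by linarith
  have hpp : 0 < p := by linarith
  have h1s : 0 < 1 - s := by linarith
  obtain ⟨g, hg, hgv⟩ := hv.extend_real
  have hlam : 0 ≤ lambdaPQ p p (ball c R) := lam_nonneg _ _
  have hl := fun hm => cone_lip p hp c κ R hκ hR s hs hs1 g K hg hm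
  have hCC := CC_pos (n := n) p _ κ R s hlam (by linarith) hR hs hs1
  generalize lambdaPQ p p (ball c R) = lam at *
  have hb := cone_bdd (n := n) κ R hκ
  have ho := cone_open n κ R
  set Ω := cone n κ R with hΩ
  have hvol : volume Ω ≠ ⊤ := hb.measure_lt_top.ne
  have hE : ∀ x ∈ Ω, v x = g x := fun x hx => hgv (subset_closure hx)
  have h0' : (∫ x in Ω, |g x| ^ (p - 2) * g x) = 0 := by
    rw [← h0]
    apply setIntegral_congr_fun ho.measurableSet
    intro x hx
    simp only [hE x hx]
  have hray : rayleighQuot p p Ω v = rayleighQuot p p Ω g := by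
    unfold rayleighQuot
    congr 1
    · apply setIntegral_congr_fun ho.measurableSet
      intro x hx
      have : v =ᶠ[𝓝 x] g := by
        filter_upwards [ho.mem_nhds hx] with y hy using hE y hy
      simp only [this.fderiv_eq]
    · congr 1
      apply setIntegral_congr_fun ho.measurableSet
      intro x hx
      simp only [hE x hx]
  have key := hl (min_at_zero p hp Ω hb g hg.continuous h0')
  rw [hray, ray_eq p hp Ω g hg.continuous.aestronglyMeasurable]
  have hXt : ∫⁻ x in Ω, ‖fderiv ℝ g x‖ₑ ^ p ≠ ⊤ :=
    fin_bdd _ p hp0 Ω hvol ho.measurableSet K (fun x _ => norm_fderiv_le_of_lipschitz ℝ hg)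
  have hYt : ∫⁻ x in Ω, ‖g x‖ₑ ^ p ≠ ⊤ := by
    obtain ⟨C, hC⟩ := hb.isCompact_closure.exists_bound_of_continuousOn hg.continuous.continuousOn
    exact fin_bdd _ p hp0 Ω hvol ho.measurableSet C (fun x hx => hC x (subset_closure hx))
  have hY0 : ∫⁻ x in Ω, ‖g x‖ₑ ^ p ≠ 0 := by
    obtain ⟨x, hx, hx0⟩ := hne
    rw [hE x hx] at hx0
    have hU : IsOpen (Ω ∩ {y | g y ≠ 0}) := ho.inter (isOpen_ne_fun hg.continuous continuous_const)
    have hpos := hU.measure_pos volume ⟨x, hx, hx0⟩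
    intro hz
    rw [lintegral_eq_zero_iff (hg.continuous.measurable.enorm.pow_const p), EventuallyEq, ae_restrict_iff' ho.measurableSet] at hz
    refine hpos.ne' (measure_mono_null ?_ hz)
    intro y hy hcon
    have := hcon hy.1
    simp [hpp, not_lt.2 hp0] at this
    exact hy.2 this
  have k2 := (ENNReal.toReal_le_toReal (ENNReal.mul_ne_top ENNReal.ofReal_ne_top (ENNReal.mul_ne_top ENNReal.ofReal_ne_top hYt))
    (ENNReal.mul_ne_top ENNReal.ofReal_ne_top hXt)).2 key
  rw [ENNReal.toReal_mul, ENNReal.toReal_mul, ENNReal.toReal_mul, ENNReal.toReal_ofReal hlam, ENNReal.toReal_ofReal (by positivity),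
    ENNReal.toReal_ofReal hCC.le] at k2
  rw [div_le_div_iff₀ hCC (ENNReal.toReal_pos hY0 hYt)]
  linarith

lemma ray_nonneg {N : ℕ} (p : ℝ) (Ω : Set (EuclideanSpace ℝ (Fin N))) (v : EuclideanSpace ℝ (Fin N) → ℝ) : 0 ≤ rayleighQuot p p Ω v := by
  unfold rayleighQuot
  apply div_nonneg
  · exact integral_nonneg fun x => by positivity
  · exact Real.rpow_nonneg (integral_nonneg fun x => by positivity) _

lemma mu_lt {N : ℕ} [NeZero N] (hN : 2 ≤ N) (p : ℝ) (hp : 1 < p) (c : EuclideanSpace ℝ (Fin N)) (R : ℝ) (hR : 0 < R)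
    (Ω : Set (EuclideanSpace ℝ (Fin N))) (ho : IsOpen Ω) (hb : Bornology.IsBounded Ω) (hc : Convex ℝ Ω) (hne : Ω.Nonempty) :
    muPQ p p Ω < lambdaPQ p p (ball c R) * (2 * R / diam Ω) ^ p := by
  obtain ⟨v, K, hK, h1, h2, h3⟩ := exists_test hN p hp c R hR Ω ho hb hc hne
  refine lt_of_le_of_lt (csInf_le ?_ ⟨v, K, hK.lipschitzOnWith, h1, h2, rfl⟩) h3
  refine ⟨0, ?_⟩
  rintro _ ⟨v, K, -, -, -, rfl⟩
  exact ray_nonneg p Ω v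

lemma mu_lower (hn : 1 ≤ n) (p : ℝ) (hp : 1 < p) (c : EuclideanSpace ℝ (Fin (n + 1))) (κ R : ℝ) (hκ : 1 ≤ κ) (hR : 0 < R)
    (s : ℝ) (hs : 0 < s) (hs1 : s < 1) :
    lambdaPQ p p (ball c R) * (1 - s) ^ (p - 1) / CC n p (lambdaPQ p p (ball c R)) κ R s ≤ muPQ p p (cone n κ R) := by
  obtain ⟨v, K, hK, h1, h2, h3⟩ := exists_test (by omega) p hp c R hR (cone n κ R) (cone_open n κ R) (cone_bdd κ R hκ)
    (cone_convex κ R hκ) ⟨_, mem_axis κ R 0 (by simpa using hR)⟩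
  refine le_csInf ⟨_, v, K, hK.lipschitzOnWith, h1, h2, rfl⟩ ?_
  rintro _ ⟨v, K, hv, hne, h0, rfl⟩
  exact ray_lower p hp c κ R hκ hR s hs hs1 v K hv hne h0

lemma mu_tendsto (hn : 1 ≤ n) (p : ℝ) (hp : 1 < p) (c : EuclideanSpace ℝ (Fin (n + 1))) (R : ℝ) (hR : 0 < R) :
    Tendsto (fun k : ℕ => muPQ p p (cone n (k : ℝ) R)) atTop (𝓝 (lambdaPQ p p (ball c R))) := by
  have hlam := lam_pos p hp c R hR
  have hlow := fun (k : ℕ) (hk : 1 ≤ k) => mu_lower hn p hp c (k : ℝ) R (by exact_mod_cast hk) hR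
  rw [tendsto_order]
  constructor
  · intro a ha
    generalize lambdaPQ p p (ball c R) = lam at *
    have hcont : Tendsto (fun s : ℝ => lam * (1 - s) ^ (p - 1) / (1 - s) ^ (1 - p)) (𝓝[>] 0) (𝓝 lam) := by
      have h1 : Tendsto (fun s : ℝ => 1 - s) (𝓝[>] 0) (𝓝 1) := by
        have : Tendsto (fun s : ℝ => 1 - s) (𝓝 0) (𝓝 (1 - 0)) := tendsto_const_nhds.sub tendsto_id
        rw [sub_zero] at this
        exact this.mono_left nhdsWithin_le_nhds
      have h2 := h1.rpow_const (p := p - 1) (Or.inl one_ne_zero)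
      have h3 := h1.rpow_const (p := 1 - p) (Or.inl one_ne_zero)
      have := (h2.const_mul lam).div h3 (by simp)
      simp only [Real.one_rpow, mul_one, div_one] at this
      exact this
    have hs01 : ∀ᶠ s : ℝ in 𝓝[>] 0, s ∈ Ioo (0:ℝ) 1 := Ioo_mem_nhdsGT one_pos
    obtain ⟨s, hsa, hs⟩ := ((hcont.eventually_const_lt ha).and hs01).exists
    have h1s : 0 < 1 - s := by linarith [hs.2]
    have hCC : Tendsto (fun k : ℕ => CC n p lam (k:ℝ) R s) atTop (𝓝 ((1 - s) ^ (1 - p))) := by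
      unfold CC
      have h1 : Tendsto (fun k : ℕ => (1 + 1 / (k:ℝ)) ^ p) atTop (𝓝 1) := by
        have := ((tendsto_one_div_atTop_nhds_zero_nat (𝕜 := ℝ)).const_add 1).rpow_const (p := p) (Or.inr (by linarith))
        simpa using this
      have h2 : Tendsto (fun k : ℕ => (R / (k:ℝ)) ^ p) atTop (𝓝 0) := by
        have := (tendsto_const_div_atTop_nhds_zero_nat R).rpow_const (p := p) (Or.inr (by linarith))
        rwa [Real.zero_rpow (by linarith)] at this
      have := (h1.const_mul ((1 - s) ^ (1 - p))).add (h2.const_mul (lam * s ^ (1 - p) * (2 ^ p * 2 ^ n)))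
      simpa using this
    have hlim : Tendsto (fun k : ℕ => lam * (1 - s) ^ (p - 1) / CC n p lam (k:ℝ) R s) atTop
        (𝓝 (lam * (1 - s) ^ (p - 1) / (1 - s) ^ (1 - p))) := tendsto_const_nhds.div hCC (by positivity)
    filter_upwards [hlim.eventually_const_lt hsa, eventually_ge_atTop 1] with k hk hk1
    exact hk.trans_le (hlow k hk1 s hs.1 hs.2)
  · intro a ha
    filter_upwards [eventually_ge_atTop 1] with k hk1
    have hκ : (1:ℝ) ≤ k := by exact_mod_cast hk1
    have h := mu_lt (by omega) p hp c R hR (cone n k R) (cone_open n k R) (cone_bdd k R hκ)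
      (cone_convex k R hκ) ⟨_, mem_axis k R 0 (by simpa using hR)⟩
    rw [cone_diam k R hκ hR, div_self (by positivity), Real.one_rpow, mul_one] at h
    exact h.trans ha

theorem main {N : ℕ} [NeZero N] (hN : 2 ≤ N) (p : ℝ)
    (hp : 1 < p) (d : ℝ) (hd : 0 < d) (c : EuclideanSpace ℝ (Fin N))
    (Ωseq : ℕ → Set (EuclideanSpace ℝ (Fin N)))
    (hΩseq : ∀ k : ℕ, Ωseq k =
      {x | (k : ℝ) * Real.sqrt (∑ i ∈ Finset.univ.erase (0 : Fin N), x i ^ 2)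
        < d / 2 - |x 0|}) :
    (∀ k : ℕ, 1 ≤ k → IsOpen (Ωseq k) ∧ Bornology.IsBounded (Ωseq k) ∧
      Convex ℝ (Ωseq k) ∧ diam (Ωseq k) = d) ∧
    Filter.Tendsto (fun k => hausdorffDist (Ωseq k)
        (segment ℝ (EuclideanSpace.single (0 : Fin N) (-(d / 2)))
          (EuclideanSpace.single (0 : Fin N) (d / 2))))
      Filter.atTop (nhds 0) ∧
    Filter.Tendsto (fun k => muPQ p p (Ωseq k)) Filter.atTop
      (nhds (lambdaPQ p p (ball c (d / 2)))) ∧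
    (∀ Ω : Set (EuclideanSpace ℝ (Fin N)), IsOpen Ω → Bornology.IsBounded Ω →
      Convex ℝ Ω → Ω.Nonempty →
      muPQ p p Ω < lambdaPQ p p (ball c (d / 2)) * (diam (ball c (d / 2)) / diam Ω) ^ p) := by
  obtain ⟨n, rfl⟩ : ∃ n, N = n + 1 := ⟨N - 1, by omega⟩
  have hR : 0 < d / 2 := by positivity
  have hΩ : ∀ k : ℕ, Ωseq k = cone n (k:ℝ) (d / 2) := hΩseq
  have hk : ∀ k : ℕ, 1 ≤ k → (1:ℝ) ≤ k := fun k hk => by exact_mod_cast hk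
  refine ⟨?_, ?_, ?_, ?_⟩
  · intro k hk1
    rw [hΩ k]
    refine ⟨cone_open _ _ _, cone_bdd _ _ (hk k hk1), cone_convex _ _ (hk k hk1), ?_⟩
    rw [cone_diam _ _ (hk k hk1) hR]; ring
  · refine squeeze_zero' (Eventually.of_forall fun k => hausdorffDist_nonneg) ?_ (tendsto_const_div_atTop_nhds_zero_nat (d / 2))
    filter_upwards [eventually_ge_atTop 1] with k hk1
    rw [hΩ k]
    exact cone_haus (k:ℝ) (d / 2) (hk k hk1) hR
  · simp_rw [hΩ]
    exact mu_tendsto (by omega) p hp c (d / 2) hR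
  · intro Ω ho hb hc hne
    have h := mu_lt hN p hp c (d / 2) hR Ω ho hb hc hne
    have hdi : diam (ball c (d / 2)) = 2 * (d / 2) := by
      exact diam_ball_eq c hR.le
    rw [hdi]
    exact h

end DC
end

/-- Theorem 3.1, sharpness. For `d > 0`, the double cones
`Ω_k = {(x₁,x') : k|x'| < d/2 - |x₁|}` are open bounded convex sets of diameter `d`,
converging in Hausdorff distance to a segment of length `d`, with
`μ_p(Ω_k) → λ_p(B)` where `B` is any open ball of radius `d/2`; moreover the
inequality `μ_p(Ω) < λ_p(B)(diam B / diam Ω)^p` holds strictly for every open bounded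
convex `Ω` (equality is never attained), so the inequality is sharp. -/
theorem double_cone_maximizing_sequence {N : ℕ} [NeZero N] (hN : 2 ≤ N) (p : ℝ)
    (hp : 1 < p) (d : ℝ) (hd : 0 < d) (c : EuclideanSpace ℝ (Fin N))
    (Ωseq : ℕ → Set (EuclideanSpace ℝ (Fin N)))
    (hΩseq : ∀ k : ℕ, Ωseq k =
      {x | (k : ℝ) * Real.sqrt (∑ i ∈ Finset.univ.erase (0 : Fin N), x i ^ 2)
        < d / 2 - |x 0|}) :
    (∀ k : ℕ, 1 ≤ k → IsOpen (Ωseq k) ∧ Bornology.IsBounded (Ωseq k) ∧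
      Convex ℝ (Ωseq k) ∧ diam (Ωseq k) = d) ∧
    Filter.Tendsto (fun k => hausdorffDist (Ωseq k)
        (segment ℝ (EuclideanSpace.single (0 : Fin N) (-(d / 2)))
          (EuclideanSpace.single (0 : Fin N) (d / 2))))
      Filter.atTop (nhds 0) ∧
    Filter.Tendsto (fun k => muPQ p p (Ωseq k)) Filter.atTop
      (nhds (lambdaPQ p p (ball c (d / 2)))) ∧
    (∀ Ω : Set (EuclideanSpace ℝ (Fin N)), IsOpen Ω → Bornology.IsBounded Ω →
      Convex ℝ Ω → Ω.Nonempty →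
      muPQ p p Ω < lambdaPQ p p (ball c (d / 2)) * (diam (ball c (d / 2)) / diam Ω) ^ p) := by
  exact DC.main hN p hp d hd c Ωseq hΩseq
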